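/- arXiv:2006.13333 — 3 statements merged into one kernel-verified Lean document; each statement's English description precedes it below -/
import Mathlib

section
/- Let (A,b,c) be a balanced realization of a SISO impulse response g(t) = cA^{t−1}b, and suppose the Hankel matrix H(g) is strictly k-positive for some 2 ≤ k ≤ n. Then for every 1 ≤ r ≤ k−1 the balanced truncation (A₁₁, b₁, c₁) of order r has reduced impulse response g_r(t) = c₁A₁₁^{t−1}b₁ of the form g_r(t) = Σ_{i=1}^{r} ρ_i μ_i^{t−1} with ρ₁, …, ρ_r > 0 and 1 > μ₁ > μ₂ > … > μ_r > 0. In particular, the Hankel matrix H(g_r) of the reduced system is totally positive and the reduced system is externally positive, i.e. g_r(t) ≥ 0 for all t ≥ 1. -/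
open Matrix

/-- The controllability matrix `[b, Ab, …, A^{n-1}b]` of a SISO pair `(A, b)`. -/
noncomputable def ctrbMatrix {n : ℕ} (A : Matrix (Fin n) (Fin n) ℝ) (b : Fin n → ℝ) :
    Matrix (Fin n) (Fin n) ℝ :=
  Matrix.of fun i j => (A ^ (j : ℕ)).mulVec b i

/-- The observability matrix with rows `c, cA, …, cA^{n-1}` of a SISO pair `(c, A)`. -/
noncomputable def obsvMatrix {n : ℕ} (A : Matrix (Fin n) (Fin n) ℝ) (c : Fin n → ℝ) :
    Matrix (Fin n) (Fin n) ℝ :=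
  Matrix.of fun i j => Matrix.vecMul c (A ^ (i : ℕ)) j

/-- `(A, b, c)` is a balanced realization with Hankel singular values `σ`. -/
def IsBalancedRealization {n : ℕ} (A : Matrix (Fin n) (Fin n) ℝ)
    (b c : Fin n → ℝ) (σ : Fin n → ℝ) : Prop :=
  (∀ μ ∈ spectrum ℂ (A.map (Complex.ofReal ·)), ‖μ‖ < 1) ∧
  (ctrbMatrix A b).det ≠ 0 ∧
  (obsvMatrix A c).det ≠ 0 ∧
  (∀ i j : Fin n, i ≤ j → σ j ≤ σ i) ∧ (∀ i, 0 < σ i) ∧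
  A * Matrix.diagonal σ * Aᵀ - Matrix.diagonal σ + Matrix.vecMulVec b b = 0 ∧
  Aᵀ * Matrix.diagonal σ * A - Matrix.diagonal σ + Matrix.vecMulVec c c = 0

/-- The impulse response of the balanced truncation of order `r`, i.e. of the
triple formed by the leading `r × r` block of `A` and the first `r` entries of
`b` and `c`.  Here `t` is indexed from `0`: `truncResponse A b c r h t` is the
value of the reduced impulse response at time `t + 1`. -/
noncomputable def truncResponse {n : ℕ} (A : Matrix (Fin n) (Fin n) ℝ)
    (b c : Fin n → ℝ) (r : ℕ) (h : r ≤ n) : ℕ → ℝ :=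
  fun t => (c ∘ Fin.castLE h) ⬝ᵥ
    ((A.submatrix (Fin.castLE h) (Fin.castLE h)) ^ t).mulVec (b ∘ Fin.castLE h)

/-- The square submatrix of the infinite Hankel matrix `H(g)_{i,j} = g(i+j-1)`
(`i,j ≥ 1`) obtained from rows `ρ` and columns `c` (zero-based indexing of the
sequence: `g t` stands for `g(t+1)`). -/
def hankelSub (g : ℕ → ℝ) {p : ℕ} (ρ c : Fin p → ℕ) : Matrix (Fin p) (Fin p) ℝ :=
  Matrix.of fun i j => g (ρ i + c j)

/-- The infinite Hankel matrix `H(g)` is totally positive. -/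
def HankelTotallyPositive (g : ℕ → ℝ) : Prop :=
  ∀ (p : ℕ) (ρ c : Fin p → ℕ), StrictMono ρ → StrictMono c →
    0 ≤ (hankelSub g ρ c).det

/-- The infinite Hankel matrix `H(g)` is strictly `k`-positive. -/
def HankelStrictlyKPositive (g : ℕ → ℝ) (k : ℕ) : Prop :=
  ∀ p : ℕ, 1 ≤ p → p ≤ k → ∀ ρ c : Fin p → ℕ, StrictMono ρ → StrictMono c →
    0 < (hankelSub g ρ c).det

/-! By the Stein equations the state space factors the Hankel matrix `H = O C` through observability
and controllability factors with Gramians `Σ`, so `H` has the singular value decomposition `∑ i, σ i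
• v i ⊗ u i`, with `√(σ i) • v i` the `i`-th column of `O` and `√(σ i) • u i` the `i`-th row of `C`.
For `p ≤ k` the `p`-th compound of `H` is entrywise positive and its singular vectors are the wedges
of those of `H`. Perron–Frobenius for this compound says that `σ (p - 1) > σ p`, and that the
leading wedges `v 0 ∧ ⋯ ∧ v (p - 1)` and `u 0 ∧ ⋯ ∧ u (p - 1)` have entries of one common sign. As
`H` is symmetric, `u i = ± v i` for `i < k`, and comparing the wedges for `p` and `p + 1` fixes the
sign to `+`; hence the truncation has `b₁ = c₁` and a symmetric `A₁₁`.

Moreover `Σ A` is the Gramian of the columns of `O` against their shifts. By Cauchy–Binet its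
leading minors are sums of products of two entries of the same wedge, so those of `A₁₁` are positive
and `A₁₁` is positive definite. Since there is a gap after `σ (r - 1)`, the truncation is stable and
observable; its eigenvalues therefore lie in `(0, 1)`, and observability by a single output makes
them distinct with nonzero residues, which are squares because `b₁ = c₁`. Total positivity is then
Cauchy–Binet together with the positivity of generalized Vandermonde determinants. -/

open scoped lp

section CauchyBinet

variable {ι : Type*} {p : ℕ}

theorem hasSum_prod_pi (a : Fin p → ι → ℝ) (s : Fin p → ℝ) (h : ∀ i, HasSum (a i) (s i)) :
    HasSum (fun J : Fin p → ι => ∏ i, a i (J i)) (∏ i, s i) := by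
  induction p with
  | zero =>
    simp only [Finset.univ_eq_empty, Finset.prod_empty]
    exact hasSum_unique fun _ : Fin 0 → ι => (1 : ℝ)
  | succ p ih =>
    have htail := ih (fun i => a i.succ) (fun i => s i.succ) fun i => h i.succ
    generalize hb : (fun J : Fin p → ι => ∏ i, a i.succ (J i)) = b at htail
    have hsummable := summable_mul_of_summable_norm (h 0).summable.norm htail.summable.norm
    have hmul := (h 0).mul htail hsummable
    subst hb
    rw [← (Fin.consEquiv fun _ : Fin (p + 1) => ι).hasSum_iff, Fin.prod_univ_succ]
    refine hmul.congr_fun fun x => ?_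
    rw [Function.comp_apply, Fin.prod_univ_succ]
    rfl

theorem hasSum_det_mul_prod {φ ψ : Matrix (Fin p) ι ℝ} {G : Matrix (Fin p) (Fin p) ℝ}
    (h : ∀ i j, HasSum (fun t => φ i t * ψ j t) (G i j)) :
    HasSum (fun J : Fin p → ι => (φ.submatrix id J).det * ∏ j, ψ j (J j)) G.det := by
  rw [det_apply']
  have hterm : ∀ τ : Equiv.Perm (Fin p), HasSum
      (fun J : Fin p → ι => ((Equiv.Perm.sign τ : ℤ) : ℝ) * ∏ j, (φ (τ j) (J j) * ψ j (J j)))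
      (((Equiv.Perm.sign τ : ℤ) : ℝ) * ∏ j, G (τ j) j) := fun τ =>
    (hasSum_prod_pi (fun j t => φ (τ j) t * ψ j t) _ fun j => h (τ j) j).mul_left _
  refine (hasSum_sum fun τ _ => hterm τ).congr_fun fun J => ?_
  simp only [det_apply', Finset.sum_mul, submatrix_apply, id, Finset.prod_mul_distrib, mul_assoc]

theorem orderEmbedding_comp_perm_injective [LinearOrder ι] :
    Function.Injective fun x : (Fin p ↪o ι) × Equiv.Perm (Fin p) => ⇑x.1 ∘ x.2 := by
  rintro ⟨J, τ⟩ ⟨J', τ'⟩ h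
  have hJ : J = J' := by
    have hrange := congrArg Set.range h
    simpa only [EquivLike.range_comp, OrderEmbedding.range_inj] using hrange
  subst hJ
  exact Prod.ext rfl (Equiv.ext fun i => J.injective (congrFun h i))

theorem mem_range_orderEmbedding_comp_perm [LinearOrder ι] {J : Fin p → ι}
    (hJ : Function.Injective J) :
    J ∈ Set.range fun x : (Fin p ↪o ι) × Equiv.Perm (Fin p) => ⇑x.1 ∘ x.2 := by
  let τ := Tuple.sort J
  have hmono : StrictMono (J ∘ τ) :=
    (Tuple.monotone_sort J).strictMono_of_injective (hJ.comp τ.injective)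
  refine ⟨(OrderEmbedding.ofStrictMono _ hmono, τ⁻¹), funext fun i => ?_⟩
  simp

theorem hasSum_det_mul_det [LinearOrder ι] {φ ψ : Matrix (Fin p) ι ℝ}
    {G : Matrix (Fin p) (Fin p) ℝ} (h : ∀ i j, HasSum (fun t => φ i t * ψ j t) (G i j)) :
    HasSum (fun J : Fin p ↪o ι => (φ.submatrix id J).det * (ψ.submatrix id J).det) G.det := by
  have hsum := hasSum_det_mul_prod h
  rw [← orderEmbedding_comp_perm_injective.hasSum_iff] at hsum
  · refine (hsum.prod_fiberwise fun J => hasSum_fintype _).congr_fun fun J => ?_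
    rw [← det_transpose (ψ.submatrix id J), det_apply' (ψ.submatrix id J)ᵀ, Finset.mul_sum]
    refine Finset.sum_congr rfl fun τ _ => ?_
    have hperm : (φ.submatrix id (J ∘ τ)).det =
        ((Equiv.Perm.sign τ : ℤ) : ℝ) * (φ.submatrix id J).det := det_permute' τ (φ.submatrix id J)
    simp only [Function.comp_apply, transpose_apply, submatrix_apply, id]
    rw [hperm]
    ring
  · intro J hJ
    have hninj : ¬ Function.Injective J := fun hinj => hJ (mem_range_orderEmbedding_comp_perm hinj)
    obtain ⟨i, j, hij, hne⟩ := Function.not_injective_iff.mp hninj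
    rw [det_zero_of_column_eq hne fun k => by simp only [submatrix_apply, hij], zero_mul]

end CauchyBinet

/-- The `p`-th compound of `K`: the matrix of its `p × p` minors, with rows and columns indexed
by the increasing `p`-tuples. -/
def compoundMatrix {α β : Type*} [LinearOrder α] [LinearOrder β] (p : ℕ) (K : Matrix α β ℝ) :
    Matrix (Fin p ↪o α) (Fin p ↪o β) ℝ :=
  of fun I J => (K.submatrix I J).det

theorem compoundMatrix_apply {α β : Type*} [LinearOrder α] [LinearOrder β] (p : ℕ)
    (K : Matrix α β ℝ) (I : Fin p ↪o α) (J : Fin p ↪o β) :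
    compoundMatrix p K I J = (K.submatrix I J).det :=
  rfl

section SingularValueDecomposition

variable {α κ : Type*} {p : ℕ}

theorem hasSum_coe_mul_coe (f h : ℓ²(α, ℝ)) : HasSum (fun a => f a * h a) (inner ℝ f h) := by
  refine (lp.hasSum_inner (𝕜 := ℝ) f h).congr_fun fun a => ?_
  rw [real_inner_eq_re_inner, real_inner_comm]
  rfl

theorem exists_coe_eq_abs (f : ℓ²(α, ℝ)) :
    ∃ g : ℓ²(α, ℝ), (∀ a, g a = |f a|) ∧ ‖g‖ = ‖f‖ := by
  let g : ℓ²(α, ℝ) := ⟨fun a => ‖f a‖, (lp.memℓp f).norm⟩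
  refine ⟨g, fun _ => rfl, ?_⟩
  rw [lp.norm_eq_tsum_rpow (by norm_num), lp.norm_eq_tsum_rpow (by norm_num)]
  simp only [g, norm_norm]

theorem exists_coe_ne_zero {f : ℓ²(α, ℝ)} (hf : f ≠ 0) : ∃ a, f a ≠ 0 := by
  by_contra! h
  exact hf (lp.ext (funext h))

variable [LinearOrder α]

theorem hasSum_compoundMatrix_mul [LinearOrder κ] (V W : κ → ℓ²(α, ℝ)) (m m' : Fin p ↪o κ) :
    HasSum (fun J => compoundMatrix p (of fun i a => V i a) m J *
        compoundMatrix p (of fun i a => W i a) m' J)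
      (compoundMatrix p (of fun i j => inner ℝ (V i) (W j)) m m') :=
  hasSum_det_mul_det (φ := of fun i a => V (m i) a) (ψ := of fun i a => W (m' i) a)
    fun _ _ => hasSum_coe_mul_coe _ _

/-- The exterior products `V (m 0) ∧ ⋯ ∧ V (m (p - 1))` of a family of square summable functions,
in Plücker coordinates. -/
noncomputable def wedge [LinearOrder κ] (p : ℕ) (V : κ → ℓ²(α, ℝ)) (m : Fin p ↪o κ) :
    ℓ²(Fin p ↪o α, ℝ) :=
  ⟨fun J => compoundMatrix p (of fun i a => V i a) m J, memℓp_gen <| by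
    simpa [← sq] using (hasSum_compoundMatrix_mul V V m m).summable⟩

theorem wedge_apply [LinearOrder κ] (V : κ → ℓ²(α, ℝ)) (m : Fin p ↪o κ) (J : Fin p ↪o α) :
    wedge p V m J = (of fun i j => V (m i) (J j)).det :=
  rfl

theorem inner_wedge [LinearOrder κ] (V W : κ → ℓ²(α, ℝ)) (m m' : Fin p ↪o κ) :
    inner ℝ (wedge p V m) (wedge p W m') =
      compoundMatrix p (of fun i j => inner ℝ (V i) (W j)) m m' :=
  (hasSum_coe_mul_coe _ _).unique (hasSum_compoundMatrix_mul V W m m')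

theorem exists_notMem_range_of_ne [LinearOrder κ] {m m' : Fin p ↪o κ} (h : m ≠ m') :
    ∃ i, m i ∉ Set.range m' := by
  by_contra! hsub
  refine h (OrderEmbedding.range_inj.mp (Set.eq_of_subset_of_ncard_le ?_ ?_ (Set.finite_range m')))
  · rintro _ ⟨i, rfl⟩
    exact hsub i
  · rw [Set.ncard_range_of_injective m.injective, Set.ncard_range_of_injective m'.injective]

theorem compoundMatrix_one [LinearOrder κ] : compoundMatrix p (1 : Matrix κ κ ℝ) = 1 := by
  ext m m'
  rw [compoundMatrix_apply]
  obtain rfl | hne := eq_or_ne m m'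
  · rw [submatrix_one m m.injective, det_one, one_apply_eq]
  · obtain ⟨i, hi⟩ := exists_notMem_range_of_ne hne
    rw [one_apply_ne hne, det_eq_zero_of_row_eq_zero i fun j => ?_]
    exact one_apply_ne fun hij => hi ⟨j, hij.symm⟩

theorem orthonormal_wedge [LinearOrder κ] {V : κ → ℓ²(α, ℝ)} (hV : Orthonormal ℝ V) :
    Orthonormal ℝ (wedge p V) := by
  rw [orthonormal_iff_ite] at hV ⊢
  intro m m'
  rw [inner_wedge, show (of fun i j => inner ℝ (V i) (V j)) = (1 : Matrix κ κ ℝ) from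
    Matrix.ext hV, compoundMatrix_one, one_apply]

end SingularValueDecomposition

/-- A singular value decomposition `K a b = ∑ m, s m * v m a * u m b` of the kernel `K` with
finitely many singular values `s m`, not necessarily sorted, and singular vectors `v m`, `u m`
in `ℓ²`. -/
structure IsSVD {α β κ : Type*} [Fintype κ] (K : Matrix α β ℝ) (s : κ → ℝ)
    (v : κ → ℓ²(α, ℝ)) (u : κ → ℓ²(β, ℝ)) : Prop where
  pos : ∀ m, 0 < s m
  orthonormal_left : Orthonormal ℝ v
  orthonormal_right : Orthonormal ℝ u
  apply_eq_sum : ∀ a b, K a b = ∑ m, s m * (v m a * u m b)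

namespace IsSVD

section Rectangular

variable {α β κ : Type*} [Fintype κ] {K : Matrix α β ℝ} {s : κ → ℝ}
  {v : κ → ℓ²(α, ℝ)} {u : κ → ℓ²(β, ℝ)}

theorem transpose (h : IsSVD K s v u) : IsSVD Kᵀ s u v where
  pos := h.pos
  orthonormal_left := h.orthonormal_right
  orthonormal_right := h.orthonormal_left
  apply_eq_sum a b := by
    rw [transpose_apply, h.apply_eq_sum]
    exact Finset.sum_congr rfl fun m _ => by ring

protected theorem compoundMatrix [LinearOrder α] [LinearOrder β] [LinearOrder κ] (h : IsSVD K s v u)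
    (p : ℕ) : IsSVD (compoundMatrix p K) (fun m : Fin p ↪o κ => ∏ i, s (m i))
      (wedge p v) (wedge p u) where
  pos m := Finset.prod_pos fun i _ => h.pos (m i)
  orthonormal_left := orthonormal_wedge h.orthonormal_left
  orthonormal_right := orthonormal_wedge h.orthonormal_right
  apply_eq_sum I J := by
    have hcb := hasSum_det_mul_det (φ := of fun i m => s m * v m (I i))
      (ψ := of fun j m => u m (J j)) (G := K.submatrix I J) fun i j => by
        simpa only [of_apply, submatrix_apply, h.apply_eq_sum, mul_assoc]
          using hasSum_fintype fun m => s m * v m (I i) * u m (J j)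
    refine hcb.unique ((hasSum_fintype _).congr_fun fun m => ?_)
    have hleft : ((of fun i m => s m * v m (I i)).submatrix id m).det =
        (∏ i, s (m i)) * wedge p v m I := by
      rw [wedge_apply, ← det_transpose, ← det_mul_column]
      rfl
    have hright : ((of fun j m => u m (J j)).submatrix id m).det = wedge p u m J := by
      rw [wedge_apply, ← det_transpose]
      rfl
    rw [hleft, hright, mul_assoc]

theorem hasSum_mul_prod (hsvd : IsSVD K s v u) (f : ℓ²(α, ℝ)) (g : ℓ²(β, ℝ)) :
    HasSum (fun x : α × β => K x.1 x.2 * (f x.1 * g x.2))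
      (∑ m, s m * (inner ℝ (v m) f * inner ℝ (u m) g)) := by
  have hterm (m : κ) : HasSum (fun x : α × β => v m x.1 * f x.1 * (u m x.2 * g x.2))
      (inner ℝ (v m) f * inner ℝ (u m) g) :=
    have hf := hasSum_coe_mul_coe (v m) f
    have hg := hasSum_coe_mul_coe (u m) g
    hf.mul hg (summable_mul_of_summable_norm hf.summable.norm hg.summable.norm)
  refine (hasSum_sum fun m _ => (hterm m).mul_left (s m)).congr_fun fun x => ?_
  rw [hsvd.apply_eq_sum, Finset.sum_mul]
  exact Finset.sum_congr rfl fun m _ => by ring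

theorem hasSum_mul_coe (hsvd : IsSVD K s v u) (a : α) (g : ℓ²(β, ℝ)) :
    HasSum (fun b => K a b * g b) (∑ m, s m * v m a * inner ℝ (u m) g) := by
  refine (hasSum_sum fun m _ =>
    (hasSum_coe_mul_coe (u m) g).mul_left (s m * v m a)).congr_fun fun b => ?_
  rw [hsvd.apply_eq_sum, Finset.sum_mul]
  exact Finset.sum_congr rfl fun m _ => by ring

theorem hasSum_mul_right (hsvd : IsSVD K s v u) (a : α) (m : κ) :
    HasSum (fun b => K a b * u m b) (s m * v m a) := by
  classical
  simpa only [orthonormal_iff_ite.mp hsvd.orthonormal_right, mul_ite, mul_one, mul_zero,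
    Finset.sum_ite_eq', Finset.mem_univ, if_true] using hsvd.hasSum_mul_coe a (u m)

theorem sum_mul_inner_mul_inner_le (hsvd : IsSVD K s v u) {m₀ : κ} (hmax : ∀ m, s m ≤ s m₀)
    (f : ℓ²(α, ℝ)) (g : ℓ²(β, ℝ)) :
    ∑ m, s m * (inner ℝ (v m) f * inner ℝ (u m) g) ≤ s m₀ * (‖f‖ * ‖g‖) := by
  have hf : √(∑ m, ‖inner ℝ (v m) f‖ ^ 2) ≤ ‖f‖ :=
    Real.sqrt_le_iff.mpr ⟨norm_nonneg f, hsvd.orthonormal_left.sum_inner_products_le f⟩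
  have hg : √(∑ m, ‖inner ℝ (u m) g‖ ^ 2) ≤ ‖g‖ :=
    Real.sqrt_le_iff.mpr ⟨norm_nonneg g, hsvd.orthonormal_right.sum_inner_products_le g⟩
  have hpos := (hsvd.pos m₀).le
  calc ∑ m, s m * (inner ℝ (v m) f * inner ℝ (u m) g)
      ≤ ∑ m, s m₀ * (‖inner ℝ (v m) f‖ * ‖inner ℝ (u m) g‖) := by
        refine Finset.sum_le_sum fun m _ => ?_
        rw [← norm_mul]
        exact (mul_le_mul_of_nonneg_left (le_abs_self _) (hsvd.pos m).le).trans
          (mul_le_mul_of_nonneg_right (hmax m) (abs_nonneg _))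
    _ = s m₀ * ∑ m, ‖inner ℝ (v m) f‖ * ‖inner ℝ (u m) g‖ := (Finset.mul_sum ..).symm
    _ ≤ s m₀ * (√(∑ m, ‖inner ℝ (v m) f‖ ^ 2) * √(∑ m, ‖inner ℝ (u m) g‖ ^ 2)) := by
        gcongr
        exact Real.sum_mul_le_sqrt_mul_sqrt _ _ _
    _ ≤ s m₀ * (‖f‖ * ‖g‖) := by gcongr

/-- The pair `|v m₀|`, `|u m₀|` cannot exceed the maximum `s m₀` of the bilinear form of `K`, which
`v m₀`, `u m₀` attain; as `K` is positive, no term changes when absolute values are taken. -/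
theorem mul_nonneg_of_forall_le (hsvd : IsSVD K s v u) (hK : ∀ a b, 0 < K a b) {m₀ : κ}
    (hmax : ∀ m, s m ≤ s m₀) (a : α) (b : β) : 0 ≤ v m₀ a * u m₀ b := by
  classical
  obtain ⟨f, hf, hf_norm⟩ := exists_coe_eq_abs (v m₀)
  obtain ⟨g, hg, hg_norm⟩ := exists_coe_eq_abs (u m₀)
  have hsum := hsvd.hasSum_mul_prod (v m₀) (u m₀)
  have hsum_abs := hsvd.hasSum_mul_prod f g
  have hsum_eq : ∑ m, s m * (inner ℝ (v m) (v m₀) * inner ℝ (u m) (u m₀)) = s m₀ := by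
    simp only [orthonormal_iff_ite.mp hsvd.orthonormal_left,
      orthonormal_iff_ite.mp hsvd.orthonormal_right, mul_ite, mul_one, mul_zero,
      Finset.sum_ite_eq', Finset.mem_univ, if_true]
  have habs_le := hsvd.sum_mul_inner_mul_inner_le hmax f g
  rw [hf_norm, hg_norm, hsvd.orthonormal_left.1, hsvd.orthonormal_right.1, mul_one, mul_one,
    ← hsum_eq] at habs_le
  have hterm (x : α × β) :
      K x.1 x.2 * (v m₀ x.1 * u m₀ x.2) ≤ K x.1 x.2 * (f x.1 * g x.2) := by
    rw [hf, hg, ← abs_mul]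
    exact mul_le_mul_of_nonneg_left (le_abs_self _) (hK _ _).le
  have hsum_eq_abs := (hasSum_le hterm hsum hsum_abs).antisymm habs_le
  have hdiff := hsum_abs.sub hsum
  rw [hsum_eq_abs, sub_self, hasSum_zero_iff_of_nonneg fun x => sub_nonneg.mpr (hterm x)] at hdiff
  have hab := mul_left_cancel₀ (hK a b).ne' (sub_eq_zero.mp (congrFun hdiff (a, b)))
  rw [hf, hg, ← abs_mul] at hab
  exact abs_eq_self.mp hab

theorem left_ne_zero_of_forall_le (hsvd : IsSVD K s v u) (hK : ∀ a b, 0 < K a b) {m₀ : κ}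
    (hmax : ∀ m, s m ≤ s m₀) (a : α) : v m₀ a ≠ 0 := by
  obtain ⟨a₀, ha₀⟩ := exists_coe_ne_zero (hsvd.orthonormal_left.ne_zero m₀)
  obtain ⟨b₀, hb₀⟩ := exists_coe_ne_zero (hsvd.orthonormal_right.ne_zero m₀)
  have hnonneg (b : β) : 0 ≤ v m₀ a₀ * (K a b * u m₀ b) := by
    rw [mul_left_comm]
    exact mul_nonneg (hK a b).le (hsvd.mul_nonneg_of_forall_le hK hmax a₀ b)
  have hpos : 0 < v m₀ a₀ * (K a b₀ * u m₀ b₀) :=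
    (hnonneg b₀).lt_of_ne' (mul_ne_zero ha₀ (mul_ne_zero (hK a b₀).ne' hb₀))
  have hsum := hpos.trans_le <|
    le_hasSum ((hsvd.hasSum_mul_right a m₀).mul_left (v m₀ a₀)) b₀ fun b _ => hnonneg b
  intro ha
  simp [ha] at hsum

theorem mul_pos_of_forall_le (hsvd : IsSVD K s v u) (hK : ∀ a b, 0 < K a b) {m₀ : κ}
    (hmax : ∀ m, s m ≤ s m₀) (a : α) (b : β) : 0 < v m₀ a * u m₀ b :=
  (hsvd.mul_nonneg_of_forall_le hK hmax a b).lt_of_ne' <|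
    mul_ne_zero (hsvd.left_ne_zero_of_forall_le hK hmax a)
      (hsvd.transpose.left_ne_zero_of_forall_le (fun b a => hK a b) hmax b)

theorem left_mul_left_pos_of_forall_le (hsvd : IsSVD K s v u) (hK : ∀ a b, 0 < K a b) {m₀ : κ}
    (hmax : ∀ m, s m ≤ s m₀) (a a' : α) : 0 < v m₀ a * v m₀ a' := by
  obtain ⟨b, -⟩ := exists_coe_ne_zero (hsvd.orthonormal_right.ne_zero m₀)
  have hpos := mul_pos (hsvd.mul_pos_of_forall_le hK hmax a b)
    (hsvd.mul_pos_of_forall_le hK hmax a' b)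
  rw [mul_mul_mul_comm] at hpos
  exact pos_of_mul_pos_left hpos (mul_self_nonneg _)

theorem eq_of_forall_le (hsvd : IsSVD K s v u) (hK : ∀ a b, 0 < K a b) {m m₀ : κ}
    (hm : ∀ i, s i ≤ s m) (hm₀ : ∀ i, s i ≤ s m₀) : m = m₀ := by
  by_contra hne
  obtain ⟨a₀, -⟩ := exists_coe_ne_zero (hsvd.orthonormal_left.ne_zero m)
  obtain ⟨b, -⟩ := exists_coe_ne_zero (hsvd.orthonormal_right.ne_zero m)
  have hpos (a : α) : 0 < u m b * u m₀ b * (v m a * v m₀ a) := by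
    have h := mul_pos (hsvd.mul_pos_of_forall_le hK hm a b) (hsvd.mul_pos_of_forall_le hK hm₀ a b)
    linarith
  have hsum := (hpos a₀).trans_le <| le_hasSum
    ((hasSum_coe_mul_coe (v m) (v m₀)).mul_left (u m b * u m₀ b)) a₀ fun a _ => (hpos a).le
  rw [hsvd.orthonormal_left.2 hne, mul_zero] at hsum
  exact hsum.false

end Rectangular

section Symmetric

variable {α κ : Type*} [Fintype κ] {K : Matrix α α ℝ} {s : κ → ℝ} {v u : κ → ℓ²(α, ℝ)}

theorem smul_right_eq_sum_of_isSymm (hsvd : IsSVD K s v u) (hK : K.IsSymm) (m : κ) :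
    s m • u m = ∑ i, (s i * inner ℝ (u i) (v m)) • v i := by
  ext a
  have hright := hsvd.transpose.hasSum_mul_right a m
  rw [hK.eq] at hright
  have hsum := hright.unique (hsvd.hasSum_mul_coe a (v m))
  simp only [lp.coeFn_smul, Pi.smul_apply, smul_eq_mul, lp.coeFn_sum, Finset.sum_apply]
  exact hsum.trans (Finset.sum_congr rfl fun i _ => by ring)

theorem mul_inner_eq_of_isSymm (hsvd : IsSVD K s v u) (hK : K.IsSymm) (i m : κ) :
    s m * inner ℝ (u m) (v i) = s i * inner ℝ (u i) (v m) := by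
  rw [← real_inner_smul_left, hsvd.smul_right_eq_sum_of_isSymm hK,
    hsvd.orthonormal_left.inner_left_fintype]
  rfl

theorem inner_eq_zero_of_isSymm (hsvd : IsSVD K s v u) (hK : K.IsSymm) {i m : κ}
    (hne : s i ≠ s m) : inner ℝ (u i) (v m) = 0 := by
  have hsvd_symm : IsSVD K s u v := hK.eq ▸ hsvd.transpose
  have h₁ := hsvd.mul_inner_eq_of_isSymm hK i m
  have h₂ := hsvd_symm.mul_inner_eq_of_isSymm hK i m
  rw [real_inner_comm, real_inner_comm (u m)] at h₂
  have hsq : (s m ^ 2 - s i ^ 2) * inner ℝ (u i) (v m) = 0 := by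
    linear_combination s m * h₂ + s i * h₁
  refine (mul_eq_zero.mp hsq).resolve_left fun h => hne ?_
  exact ((sq_eq_sq₀ (hsvd.pos m).le (hsvd.pos i).le).mp (sub_eq_zero.mp h)).symm

theorem right_eq_left_of_inner_pos (hsvd : IsSVD K s v u) (hK : K.IsSymm) {m : κ}
    (hm : ∀ i, i ≠ m → s i ≠ s m) (hpos : 0 < inner ℝ (u m) (v m)) : u m = v m := by
  have hsmul : u m = inner ℝ (u m) (v m) • v m := by
    have hsum := hsvd.smul_right_eq_sum_of_isSymm hK m
    rw [Finset.sum_eq_single_of_mem m (Finset.mem_univ m) fun i _ hi => by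
      rw [hsvd.inner_eq_zero_of_isSymm hK (hm i hi), mul_zero, zero_smul], mul_smul] at hsum
    exact smul_right_injective _ (hsvd.pos m).ne' hsum
  have hnorm := congrArg norm hsmul
  rw [norm_smul, hsvd.orthonormal_left.1, hsvd.orthonormal_right.1, mul_one,
    Real.norm_of_nonneg hpos.le] at hnorm
  rw [hsmul, ← hnorm, one_smul]

end Symmetric

end IsSVD

theorem castLEOrderEmb_le {p n : ℕ} (hp : p ≤ n) (m : Fin p ↪o Fin n) (i : Fin p) :
    Fin.castLEOrderEmb hp i ≤ m i := by
  obtain ⟨i, hi⟩ := i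
  induction i with
  | zero => exact Nat.zero_le _
  | succ i ih =>
    exact (Nat.succ_le_succ (ih (Nat.lt_of_succ_lt hi))).trans
      (m.strictMono (Fin.mk_lt_mk.mpr (Nat.lt_succ_self i)))

theorem prod_le_prod_castLE {p n : ℕ} {s : Fin n → ℝ} (hnonneg : ∀ i, 0 ≤ s i) (hs : Antitone s)
    (hp : p ≤ n) (m : Fin p ↪o Fin n) : ∏ i, s (m i) ≤ ∏ i, s (Fin.castLEOrderEmb hp i) :=
  Finset.prod_le_prod (fun i _ => hnonneg (m i)) fun i _ => hs (castLEOrderEmb_le hp m i)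

namespace IsSVD

section LeadingSingularValues

variable {α β : Type*} [LinearOrder α] [LinearOrder β] {n k : ℕ} {K : Matrix α β ℝ}
  {s : Fin n → ℝ} {v : Fin n → ℓ²(α, ℝ)} {u : Fin n → ℓ²(β, ℝ)}

theorem singularValue_succ_lt (hsvd : IsSVD K s v u) (hs : Antitone s) {q : ℕ} (hq : q + 1 < n)
    (hK : ∀ I J, 0 < compoundMatrix (q + 1) K I J) :
    s ⟨q + 1, hq⟩ < s ⟨q, Nat.lt_of_succ_lt hq⟩ := by
  refine (hs (Nat.le_succ q)).lt_of_ne fun heq => ?_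
  -- If `s q = s (q + 1)`, replacing `q` by `q + 1` in the leading tuple `m₀` gives a second largest
  -- singular value of the compound.
  let m₀ : Fin (q + 1) ↪o Fin n := Fin.castLEOrderEmb hq.le
  let m : Fin (q + 1) ↪o Fin n :=
    (Fin.succAboveOrderEmb (Fin.last q).castSucc).trans (Fin.castLEOrderEmb hq)
  have hm_last : m (Fin.last q) = ⟨q + 1, hq⟩ := by
    simp [m, Fin.ext_iff]
  have hm_castSucc (i : Fin q) : m i.castSucc = m₀ i.castSucc := by
    simp [m, m₀, Fin.succAbove, Fin.lt_def]
  have hprod : ∏ i, s (m i) = ∏ i, s (m₀ i) := by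
    rw [Fin.prod_univ_castSucc, Fin.prod_univ_castSucc, hm_last, heq]
    simp only [hm_castSucc]
    rfl
  have hmax := prod_le_prod_castLE (fun i => (hsvd.pos i).le) hs hq.le
  have hmm₀ : m = m₀ := (hsvd.compoundMatrix (q + 1)).eq_of_forall_le hK
    (fun i => (hmax i).trans_eq hprod.symm) hmax
  have hlast := congrArg Fin.val (hm_last.symm.trans (DFunLike.congr_fun hmm₀ (Fin.last q)))
  exact Nat.succ_ne_self q hlast

theorem singularValue_lt_of_lt (hsvd : IsSVD K s v u) (hs : Antitone s)
    (hK : ∀ p ≤ k, ∀ I J, 0 < compoundMatrix p K I J) {i j : Fin n} (hi : i < k) (hij : i < j) :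
    s j < s i :=
  (hs (show ⟨i + 1, Nat.lt_of_le_of_lt hij j.2⟩ ≤ j from hij)).trans_lt <|
    hsvd.singularValue_succ_lt hs _ (hK _ hi)

theorem singularValue_ne (hsvd : IsSVD K s v u) (hs : Antitone s)
    (hK : ∀ p ≤ k, ∀ I J, 0 < compoundMatrix p K I J) {i a : Fin n} (ha : a < k) (hne : i ≠ a) :
    s i ≠ s a := by
  obtain hlt | hgt := hne.lt_or_gt
  · exact (hsvd.singularValue_lt_of_lt hs hK (Nat.lt_trans hlt ha) hlt).ne'
  · exact (hsvd.singularValue_lt_of_lt hs hK ha hgt).ne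

end LeadingSingularValues

section LeadingSingularVectors

variable {α : Type*} [LinearOrder α] {n p k : ℕ} {K : Matrix α α ℝ} {s : Fin n → ℝ}
  {v u : Fin n → ℓ²(α, ℝ)}

theorem inner_wedge_castLE_pos (hsvd : IsSVD K s v u) (hs : Antitone s)
    (hK : ∀ I J, 0 < compoundMatrix p K I J) (hp : p ≤ n) :
    0 < inner ℝ (wedge p u (Fin.castLEOrderEmb hp)) (wedge p v (Fin.castLEOrderEmb hp)) := by
  have hsvd_p := hsvd.compoundMatrix p
  have hmax := prod_le_prod_castLE (fun i => (hsvd.pos i).le) hs hp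
  have hpos (J : Fin p ↪o α) := hsvd_p.mul_pos_of_forall_le hK hmax J J
  obtain ⟨J, -⟩ := exists_coe_ne_zero (hsvd_p.orthonormal_left.ne_zero (Fin.castLEOrderEmb hp))
  rw [real_inner_comm]
  exact (hpos J).trans_le (le_hasSum (hasSum_coe_mul_coe _ _) J fun J _ => (hpos J).le)

theorem prod_inner_castLE_pos (hsvd : IsSVD K s v u) (hs : Antitone s) (hsymm : K.IsSymm)
    (hK : ∀ p ≤ k, ∀ I J, 0 < compoundMatrix p K I J) (hpk : p ≤ k) (hp : p ≤ n) :
    0 < ∏ i : Fin p, inner ℝ (u (Fin.castLE hp i)) (v (Fin.castLE hp i)) := by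
  have hpos := hsvd.inner_wedge_castLE_pos hs (hK p hpk) hp
  rw [inner_wedge, compoundMatrix_apply] at hpos
  rw [← det_diagonal]
  refine hpos.trans_eq (congrArg det (Matrix.ext fun i j => ?_))
  obtain rfl | hne := eq_or_ne i j
  · rw [diagonal_apply_eq]
    rfl
  · rw [diagonal_apply_ne _ hne]
    exact hsvd.inner_eq_zero_of_isSymm hsymm
      (hsvd.singularValue_ne hs hK (j.2.trans_le hpk) fun h => hne (Fin.castLE_injective hp h))

theorem right_eq_left (hsvd : IsSVD K s v u) (hs : Antitone s) (hsymm : K.IsSymm)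
    (hK : ∀ p ≤ k, ∀ I J, 0 < compoundMatrix p K I J) {a : Fin n} (ha : a < k) : u a = v a := by
  refine hsvd.right_eq_left_of_inner_pos hsymm (fun i => hsvd.singularValue_ne hs hK ha) ?_
  have hprod := hsvd.prod_inner_castLE_pos hs hsymm hK ha.le a.2.le
  have hprod_succ := hsvd.prod_inner_castLE_pos hs hsymm hK ha a.2
  rw [Fin.prod_univ_castSucc] at hprod_succ
  exact (pos_iff_pos_of_mul_pos hprod_succ).mp hprod

end LeadingSingularVectors

end IsSVD

section PowersTendToZero

open Filter Topology

theorem tendsto_pow_of_spectralRadius_lt_one {𝓐 : Type*} [NormedRing 𝓐] [NormedAlgebra ℂ 𝓐]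
    [CompleteSpace 𝓐] {a : 𝓐} (ha : spectralRadius ℂ a < 1) :
    Tendsto (fun t : ℕ => a ^ t) atTop (𝓝 0) := by
  obtain ⟨q, haq, hq⟩ := exists_between ha
  have hgelfand := spectrum.pow_nnnorm_pow_one_div_tendsto_nhds_spectralRadius a
  have hbound : ∀ᶠ t : ℕ in atTop, ‖a ^ t‖ₑ ≤ q ^ t := by
    filter_upwards [hgelfand.eventually_lt_const haq, eventually_ne_atTop 0] with t ht ht0
    have hpow := ENNReal.rpow_le_rpow ht.le (Nat.cast_nonneg (α := ℝ) t)
    rwa [← ENNReal.rpow_mul, one_div_mul_cancel (Nat.cast_ne_zero.mpr ht0), ENNReal.rpow_one,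
      ENNReal.rpow_natCast] at hpow
  rw [tendsto_zero_iff_enorm_tendsto_zero]
  exact tendsto_of_tendsto_of_tendsto_of_le_of_le' tendsto_const_nhds
    (ENNReal.tendsto_pow_atTop_nhds_zero_of_lt_one hq) (.of_forall fun _ => zero_le) hbound

theorem tendsto_pow_of_forall_spectrum_norm_lt_one {ι : Type*} [Fintype ι] [DecidableEq ι]
    {A : Matrix ι ι ℝ} (hA : ∀ μ ∈ spectrum ℂ (A.map (Complex.ofReal ·)), ‖μ‖ < 1) :
    Tendsto (fun t : ℕ => A ^ t) atTop (𝓝 0) := by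
  let _ := Matrix.linftyOpNormedRing (n := ι) (α := ℂ)
  let _ := Matrix.linftyOpNormedAlgebra (n := ι) (R := ℂ) (α := ℂ)
  cases isEmpty_or_nonempty ι
  · exact tendsto_const_nhds.congr fun t => Subsingleton.elim _ _
  have hpow := tendsto_pow_of_spectralRadius_lt_one (a := A.map (Complex.ofReal ·)) <| by
    exact_mod_cast spectrum.spectralRadius_lt_of_forall_lt (r := 1) _ hA
  have hre : Continuous fun M : Matrix ι ι ℂ => M.map Complex.re :=
    continuous_id.matrix_map Complex.continuous_re
  have hlim := (hre.tendsto 0).comp hpow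
  rw [Matrix.map_zero _ Complex.zero_re] at hlim
  refine hlim.congr fun t => ?_
  have hmap : (A.map (Complex.ofReal ·)) ^ t = (A ^ t).map (Complex.ofReal ·) :=
    (map_pow Complex.ofRealHom.mapMatrix A t).symm
  ext i j
  simp [hmap]

end PowersTendToZero

section Gramian

open Filter Topology

variable {ι : Type*} [Fintype ι] [DecidableEq ι] {A D : Matrix ι ι ℝ} {c : ι → ℝ}

theorem tendsto_transpose_pow (hA : Tendsto (fun t : ℕ => A ^ t) atTop (𝓝 0)) :
    Tendsto (fun t : ℕ => Aᵀ ^ t) atTop (𝓝 0) := by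
  have hcont : Continuous fun M : Matrix ι ι ℝ => Mᵀ := by fun_prop
  simpa only [Function.comp_def, transpose_pow, transpose_zero] using (hcont.tendsto 0).comp hA

theorem sum_range_vecMulVec_pow (h : Aᵀ * D * A - D + vecMulVec c c = 0) (N : ℕ) :
    ∑ t ∈ Finset.range N, vecMulVec (c ᵥ* A ^ t) (c ᵥ* A ^ t) = D - (A ^ N)ᵀ * D * A ^ N := by
  induction N with
  | zero => simp
  | succ N ih =>
    have hc : vecMulVec c c = D - Aᵀ * D * A := by
      rw [← sub_eq_zero, ← h]
      abel
    have hterm : vecMulVec (c ᵥ* A ^ N) (c ᵥ* A ^ N) = (A ^ N)ᵀ * vecMulVec c c * A ^ N := by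
      rw [mul_vecMulVec, vecMulVec_mul, mulVec_transpose]
    rw [Finset.sum_range_succ, ih, hterm, hc, pow_succ' A N, transpose_mul]
    noncomm_ring

theorem hasSum_gramian (h : Aᵀ * D * A - D + vecMulVec c c = 0)
    (hA : Tendsto (fun t : ℕ => A ^ t) atTop (𝓝 0)) (i j : ι) :
    HasSum (fun t => (c ᵥ* A ^ t) i * (c ᵥ* A ^ t) j) (D i j) := by
  have hcont : Continuous fun M : Matrix ι ι ℝ => D - Mᵀ * D * M := by fun_prop
  have hlim : Tendsto (fun N => D - (A ^ N)ᵀ * D * A ^ N) atTop (𝓝 D) := by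
    simpa only [Function.comp_def, mul_zero, sub_zero] using (hcont.tendsto 0).comp hA
  have hpartial (i j : ι) : Tendsto (fun N => ∑ t ∈ Finset.range N,
      (c ᵥ* A ^ t) i * (c ᵥ* A ^ t) j) atTop (𝓝 (D i j)) := by
    refine (tendsto_pi_nhds.mp (tendsto_pi_nhds.mp hlim i) j).congr fun N => ?_
    rw [← sum_range_vecMulVec_pow h N, Matrix.sum_apply]
    rfl
  have hsq (i : ι) : Summable fun t => (c ᵥ* A ^ t) i ^ 2 := by
    refine ((hasSum_iff_tendsto_nat_of_nonneg (fun t => sq_nonneg _) (D i i)).mpr ?_).summable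
    simpa only [sq] using hpartial i i
  have hsummable : Summable fun t => (c ᵥ* A ^ t) i * (c ᵥ* A ^ t) j := by
    refine .of_norm_bounded ((hsq i).add (hsq j)) fun t => ?_
    rw [Real.norm_eq_abs, abs_le]
    constructor <;>
      nlinarith [sq_nonneg ((c ᵥ* A ^ t) i + (c ᵥ* A ^ t) j),
        sq_nonneg ((c ᵥ* A ^ t) i - (c ᵥ* A ^ t) j)]
  exact hsummable.hasSum_iff_tendsto_nat.mpr (hpartial i j)

theorem hasSum_gramian_shift (h : Aᵀ * D * A - D + vecMulVec c c = 0)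
    (hA : Tendsto (fun t : ℕ => A ^ t) atTop (𝓝 0)) (i j : ι) :
    HasSum (fun t => (c ᵥ* A ^ t) i * (c ᵥ* A ^ (t + 1)) j) ((D * A) i j) := by
  refine (hasSum_sum fun l _ => (hasSum_gramian h hA i l).mul_right (A l j)).congr_fun fun t => ?_
  rw [pow_succ, ← vecMul_vecMul]
  generalize c ᵥ* A ^ t = x
  simp only [vecMul, dotProduct, Finset.mul_sum, mul_assoc]

theorem hasSum_gramian_transpose (h : A * D * Aᵀ - D + vecMulVec c c = 0)
    (hA : Tendsto (fun t : ℕ => A ^ t) atTop (𝓝 0)) (i j : ι) :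
    HasSum (fun t => (A ^ t *ᵥ c) i * (A ^ t *ᵥ c) j) (D i j) := by
  rw [← transpose_transpose A] at h
  simpa only [← transpose_pow, vecMul_transpose] using
    hasSum_gramian h (tendsto_transpose_pow hA) i j

theorem hasSum_gramian_transpose_shift (h : A * D * Aᵀ - D + vecMulVec c c = 0)
    (hA : Tendsto (fun t : ℕ => A ^ t) atTop (𝓝 0)) (i j : ι) :
    HasSum (fun t => (A ^ t *ᵥ c) i * (A ^ (t + 1) *ᵥ c) j) ((D * Aᵀ) i j) := by
  rw [← transpose_transpose A] at h
  simpa only [← transpose_pow, vecMul_transpose] using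
    hasSum_gramian_shift h (tendsto_transpose_pow hA) i j

end Gramian

section HankelMatrix

open Filter Topology

/-- The infinite Hankel matrix of the sequence `g`, with rows and columns indexed from `0`. -/
def hankelMatrix (g : ℕ → ℝ) : Matrix ℕ ℕ ℝ :=
  of fun s t => g (s + t)

theorem isSymm_hankelMatrix (g : ℕ → ℝ) : (hankelMatrix g).IsSymm :=
  Matrix.ext fun s t => congrArg g (add_comm t s)

theorem HankelStrictlyKPositive.compoundMatrix_pos {g : ℕ → ℝ} {k : ℕ}
    (hg : HankelStrictlyKPositive g k) {p : ℕ} (hp : p ≤ k) (I J : Fin p ↪o ℕ) :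
    0 < compoundMatrix p (hankelMatrix g) I J := by
  obtain rfl | hp0 := p.eq_zero_or_pos
  · rw [compoundMatrix_apply, det_isEmpty]
    exact one_pos
  · exact hg p hp0 hp I J I.strictMono J.strictMono

theorem exists_orthonormal_eq_sqrt_mul {α κ : Type*} [DecidableEq κ] {f : κ → α → ℝ} {σ : κ → ℝ}
    (hσ : ∀ i, 0 < σ i) (hf : ∀ i j, HasSum (fun t => f i t * f j t) (diagonal σ i j)) :
    ∃ v : κ → ℓ²(α, ℝ), Orthonormal ℝ v ∧ ∀ i t, f i t = √(σ i) * v i t := by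
  have hscaled (i j : κ) : HasSum (fun t => f i t / √(σ i) * (f j t / √(σ j)))
      ((1 : Matrix κ κ ℝ) i j) := by
    have hdiag : diagonal σ i j / (√(σ i) * √(σ j)) = (1 : Matrix κ κ ℝ) i j := by
      obtain rfl | hne := eq_or_ne i j
      · rw [diagonal_apply_eq, one_apply_eq, Real.mul_self_sqrt (hσ i).le, div_self (hσ i).ne']
      · rw [diagonal_apply_ne _ hne, one_apply_ne hne, zero_div]
    rw [← hdiag]
    simpa only [div_mul_div_comm] using (hf i j).div_const (√(σ i) * √(σ j))
  let v (i : κ) : ℓ²(α, ℝ) := ⟨fun t => f i t / √(σ i), memℓp_gen <| by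
    simpa [← sq, div_pow] using (hscaled i i).summable⟩
  refine ⟨v, orthonormal_iff_ite.mpr fun i j => ?_, fun i t => ?_⟩
  · exact (hasSum_coe_mul_coe (v i) (v j)).unique (hscaled i j)
  · exact (mul_div_cancel₀ _ (Real.sqrt_pos.mpr (hσ i)).ne').symm

theorem exists_isSVD_hankelMatrix {ι : Type*} [Fintype ι] [DecidableEq ι] {A : Matrix ι ι ℝ}
    {b c σ : ι → ℝ} (hσ : ∀ i, 0 < σ i) (hA : Tendsto (fun t : ℕ => A ^ t) atTop (𝓝 0))
    (hb : A * diagonal σ * Aᵀ - diagonal σ + vecMulVec b b = 0)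
    (hc : Aᵀ * diagonal σ * A - diagonal σ + vecMulVec c c = 0) :
    ∃ v u : ι → ℓ²(ℕ, ℝ), IsSVD (hankelMatrix fun t => c ⬝ᵥ A ^ t *ᵥ b) σ v u ∧
      (∀ i t, (c ᵥ* A ^ t) i = √(σ i) * v i t) ∧ ∀ i t, (A ^ t *ᵥ b) i = √(σ i) * u i t := by
  obtain ⟨v, hv, hvc⟩ := exists_orthonormal_eq_sqrt_mul hσ (hasSum_gramian hc hA)
  obtain ⟨u, hu, hub⟩ := exists_orthonormal_eq_sqrt_mul hσ (hasSum_gramian_transpose hb hA)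
  refine ⟨v, u, ⟨hσ, hv, hu, fun s t => ?_⟩, hvc, hub⟩
  have hsplit : c ⬝ᵥ A ^ (s + t) *ᵥ b = (c ᵥ* A ^ s) ⬝ᵥ (A ^ t *ᵥ b) := by
    rw [pow_add, ← mulVec_mulVec, dotProduct_mulVec]
  refine hsplit.trans (Finset.sum_congr rfl fun i _ => ?_)
  rw [hvc, hub, mul_mul_mul_comm, Real.mul_self_sqrt (hσ i).le]

end HankelMatrix

namespace IsBalancedRealization

open Filter Topology

variable {n k : ℕ} {A : Matrix (Fin n) (Fin n) ℝ} {b c σ : Fin n → ℝ}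

theorem tendsto_pow (h : IsBalancedRealization A b c σ) :
    Tendsto (fun t : ℕ => A ^ t) atTop (𝓝 0) :=
  tendsto_pow_of_forall_spectrum_norm_lt_one h.1

theorem antitone (h : IsBalancedRealization A b c σ) : Antitone σ :=
  fun i j hij => h.2.2.2.1 i j hij

theorem pos (h : IsBalancedRealization A b c σ) (i : Fin n) : 0 < σ i :=
  h.2.2.2.2.1 i

theorem stein_ctrb (h : IsBalancedRealization A b c σ) :
    A * diagonal σ * Aᵀ - diagonal σ + vecMulVec b b = 0 :=
  h.2.2.2.2.2.1

theorem stein_obsv (h : IsBalancedRealization A b c σ) :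
    Aᵀ * diagonal σ * A - diagonal σ + vecMulVec c c = 0 :=
  h.2.2.2.2.2.2

theorem exists_isSVD (h : IsBalancedRealization A b c σ) :
    ∃ v u : Fin n → ℓ²(ℕ, ℝ), IsSVD (hankelMatrix fun t => c ⬝ᵥ A ^ t *ᵥ b) σ v u ∧
      (∀ i t, (c ᵥ* A ^ t) i = √(σ i) * v i t) ∧ ∀ i t, (A ^ t *ᵥ b) i = √(σ i) * u i t :=
  exists_isSVD_hankelMatrix h.pos h.tendsto_pow h.stein_ctrb h.stein_obsv

theorem sigma_lt_of_lt (h : IsBalancedRealization A b c σ)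
    (hk : HankelStrictlyKPositive (fun t => c ⬝ᵥ A ^ t *ᵥ b) k) {i j : Fin n} (hi : i < k)
    (hij : i < j) : σ j < σ i := by
  obtain ⟨v, u, hsvd, -, -⟩ := h.exists_isSVD
  exact hsvd.singularValue_lt_of_lt h.antitone (fun _ => hk.compoundMatrix_pos) hi hij

theorem vecMul_pow_eq_pow_mulVec (h : IsBalancedRealization A b c σ)
    (hk : HankelStrictlyKPositive (fun t => c ⬝ᵥ A ^ t *ᵥ b) k) {i : Fin n} (hi : i < k) (t : ℕ) :
    (c ᵥ* A ^ t) i = (A ^ t *ᵥ b) i := by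
  obtain ⟨v, u, hsvd, hvc, hub⟩ := h.exists_isSVD
  rw [hvc, hub, hsvd.right_eq_left h.antitone (isSymm_hankelMatrix _)
    (fun _ => hk.compoundMatrix_pos) hi]

theorem apply_eq (h : IsBalancedRealization A b c σ)
    (hk : HankelStrictlyKPositive (fun t => c ⬝ᵥ A ^ t *ᵥ b) k) {i : Fin n} (hi : i < k) :
    c i = b i := by
  simpa only [pow_zero, vecMul_one, one_mulVec] using h.vecMul_pow_eq_pow_mulVec hk hi 0

theorem apply_apply_comm (h : IsBalancedRealization A b c σ)
    (hk : HankelStrictlyKPositive (fun t => c ⬝ᵥ A ^ t *ᵥ b) k) {i j : Fin n} (hi : i < k)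
    (hj : j < k) : A i j = A j i := by
  have hobsv := hasSum_gramian_shift h.stein_obsv h.tendsto_pow i j
  have hctrb := hasSum_gramian_transpose_shift h.stein_ctrb h.tendsto_pow i j
  simp only [h.vecMul_pow_eq_pow_mulVec hk hi, h.vecMul_pow_eq_pow_mulVec hk hj] at hobsv
  have heq := hobsv.unique hctrb
  rw [diagonal_mul, diagonal_mul] at heq
  exact mul_left_cancel₀ (h.pos i).ne' heq

theorem det_submatrix_castLE_pos (h : IsBalancedRealization A b c σ)
    (hk : HankelStrictlyKPositive (fun t => c ⬝ᵥ A ^ t *ᵥ b) k) {p : ℕ} (hpk : p ≤ k)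
    (hp : p ≤ n) : 0 < (A.submatrix (Fin.castLE hp) (Fin.castLE hp)).det := by
  obtain ⟨v, u, hsvd, hvc, -⟩ := h.exists_isSVD
  let m : Fin p ↪o Fin n := Fin.castLEOrderEmb hp
  let shift : ℕ ↪o ℕ := OrderEmbedding.ofStrictMono _ (add_left_strictMono (a := 1))
  have hσ : 0 < ∏ i, σ (m i) := Finset.prod_pos fun i _ => h.pos (m i)
  have hminor (J : Fin p ↪o ℕ) : (of fun i j => (c ᵥ* A ^ J j) (m i)).det =
      (∏ i, √(σ (m i))) * wedge p v m J := by
    rw [wedge_apply, ← det_mul_column]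
    exact congrArg det (Matrix.ext fun i j => hvc _ _)
  have hcb := hasSum_det_mul_det (φ := of fun i t => (c ᵥ* A ^ t) (m i))
    (ψ := of fun j t => (c ᵥ* A ^ (t + 1)) (m j)) (G := (diagonal σ * A).submatrix m m)
    fun i j => hasSum_gramian_shift h.stein_obsv h.tendsto_pow (m i) (m j)
  have hterm (J : Fin p ↪o ℕ) :
      ((of fun i t => (c ᵥ* A ^ t) (m i)).submatrix id J).det *
        ((of fun j t => (c ᵥ* A ^ (t + 1)) (m j)).submatrix id J).det =
      (∏ i, σ (m i)) * (wedge p v m J * wedge p v m (J.trans shift)) := by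
    refine (congrArg₂ (· * ·) (hminor J) (hminor (J.trans shift))).trans ?_
    rw [mul_mul_mul_comm, ← Finset.prod_mul_distrib]
    simp only [Real.mul_self_sqrt (h.pos _).le]
  have hpos (J : Fin p ↪o ℕ) : 0 < wedge p v m J * wedge p v m (J.trans shift) :=
    (hsvd.compoundMatrix p).left_mul_left_pos_of_forall_le (hk.compoundMatrix_pos hpk)
      (prod_le_prod_castLE (fun i => (h.pos i).le) h.antitone hp) _ _
  simp only [hterm] at hcb
  have hdet : ((diagonal σ * A).submatrix m m).det = (∏ i, σ (m i)) * (A.submatrix m m).det := by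
    rw [← det_mul_column]
    exact congrArg det (Matrix.ext fun i j => diagonal_mul _ _ (m i) (m j))
  rw [hdet] at hcb
  exact pos_of_mul_pos_right ((mul_pos hσ (hpos _)).trans_le
    (le_hasSum hcb (Fin.valOrderEmb p) fun J _ => (mul_pos hσ (hpos J)).le)) hσ.le

end IsBalancedRealization

section Sylvester

theorem posDef_fromBlocks_of_det_pos {κ ν : Type*} [Fintype κ] [DecidableEq κ] [Fintype ν]
    [DecidableEq ν] [Unique ν] {N : Matrix κ κ ℝ} (hN : N.PosDef) {x : Matrix κ ν ℝ}
    {y : Matrix ν ν ℝ} (hdet : 0 < (fromBlocks N x xᵀ y).det) : (fromBlocks N x xᵀ y).PosDef := by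
  have : Invertible N := hN.isUnit.invertible
  have hschur : 0 < (y - xᵀ * N⁻¹ * x) default default := by
    rw [det_fromBlocks₁₁, invOf_eq_nonsing_inv,
      det_unique (y - xᵀ * N⁻¹ * x)] at hdet
    exact pos_of_mul_pos_right hdet hN.det_pos.le
  have hpsd : (fromBlocks N x xᵀ y).PosSemidef := by
    rw [← conjTranspose_eq_transpose_of_trivial, hN.fromBlocks₁₁,
      conjTranspose_eq_transpose_of_trivial]
    generalize y - xᵀ * N⁻¹ * x = S at hschur
    have hS : S = diagonal fun _ => S default default := by
      ext i j
      rw [Unique.eq_default i, Unique.eq_default j, diagonal_apply_eq]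
    rw [hS]
    exact .diagonal fun _ => hschur.le
  exact hpsd.posDef_iff_det_ne_zero.mpr hdet.ne'

theorem posDef_of_forall_leading_det_pos {r : ℕ} {M : Matrix (Fin r) (Fin r) ℝ} (hM : M.IsSymm)
    (hdet : ∀ (p : ℕ) (hp : p ≤ r), 0 < (M.submatrix (Fin.castLE hp) (Fin.castLE hp)).det) :
    M.PosDef := by
  induction r with
  | zero =>
    exact .of_dotProduct_mulVec_pos (Subsingleton.elim _ _)
      fun x hx => (hx (Subsingleton.elim _ _)).elim
  | succ r ih =>
    have hN : (M.submatrix Fin.castSucc Fin.castSucc).PosDef :=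
      ih (hM.submatrix _) fun p hp => hdet p (hp.trans r.le_succ)
    let F := M.submatrix (finSumFinEquiv : Fin r ⊕ Fin 1 ≃ Fin (r + 1)) finSumFinEquiv
    have hF : fromBlocks (M.submatrix Fin.castSucc Fin.castSucc) F.toBlocks₁₂ F.toBlocks₁₂ᵀ
        F.toBlocks₂₂ = F := by
      have hsymm : F.toBlocks₁₂ᵀ = F.toBlocks₂₁ :=
        Matrix.ext fun i j => hM.apply (finSumFinEquiv (Sum.inr i)) (finSumFinEquiv (Sum.inl j))
      rw [hsymm]
      exact fromBlocks_toBlocks F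
    have hF_posDef : F.PosDef := by
      rw [← hF]
      refine posDef_fromBlocks_of_det_pos hN ?_
      rw [hF, det_submatrix_equiv_self]
      exact hdet (r + 1) le_rfl
    have hM_posDef := hF_posDef.submatrix finSumFinEquiv.symm.injective
    rwa [submatrix_submatrix, Equiv.self_comp_symm, submatrix_id_id] at hM_posDef

end Sylvester

section PerneboSilverman

open Filter Topology

variable {ι : Type*} [Fintype ι] {A D : Matrix ι ι ℝ} {b c w : ι → ℝ} {μ : ℝ}

theorem stein_mulVec (h : Aᵀ * D * A - D + vecMulVec c c = 0) (w : ι → ℝ) :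
    Aᵀ *ᵥ D *ᵥ A *ᵥ w = D *ᵥ w - (c ⬝ᵥ w) • c := by
  have hw := congrArg (· *ᵥ w) h
  simp only [add_mulVec, sub_mulVec, zero_mulVec, ← mulVec_mulVec, vecMulVec_mulVec,
    op_smul_eq_smul] at hw
  rwa [eq_sub_iff_add_eq, ← sub_eq_zero, add_sub_right_comm]

theorem stein_dotProduct (h : Aᵀ * D * A - D + vecMulVec c c = 0) (w : ι → ℝ) :
    A *ᵥ w ⬝ᵥ D *ᵥ A *ᵥ w + (c ⬝ᵥ w) ^ 2 = w ⬝ᵥ D *ᵥ w := by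
  have hw := congrArg (w ⬝ᵥ ·) (stein_mulVec h w)
  simp only [dotProduct_sub, dotProduct_smul, smul_eq_mul] at hw
  rw [dotProduct_mulVec, vecMul_transpose, dotProduct_comm w c] at hw
  linarith

theorem sum_mul_sq_eq_add {y : ι → ℝ} (hy : ∀ i, w i ≠ 0 → y i = μ * w i) (σ : ι → ℝ) :
    ∑ i, σ i * y i ^ 2 = μ ^ 2 * ∑ i, σ i * w i ^ 2 + ∑ i, σ i * (y i - μ * w i) ^ 2 := by
  rw [Finset.mul_sum, ← Finset.sum_add_distrib]
  refine Finset.sum_congr rfl fun i _ => ?_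
  obtain hi | hi := eq_or_ne (w i) 0
  · simp only [hi]
    ring
  · rw [hy i hi]
    ring

theorem sum_cube_mul_sq_le {σ x : ι → ℝ} {τ : ℝ} (hσ : ∀ i, 0 < σ i)
    (hle : ∀ i, x i ≠ 0 → σ i ≤ τ) : ∑ i, σ i ^ 3 * x i ^ 2 ≤ τ ^ 2 * ∑ i, σ i * x i ^ 2 := by
  rw [Finset.mul_sum]
  refine Finset.sum_le_sum fun i _ => ?_
  obtain hi | hi := eq_or_ne (x i) 0
  · simp [hi]
  · rw [pow_succ, mul_assoc]
    exact mul_le_mul_of_nonneg_right (pow_le_pow_left₀ (hσ i).le (hle i hi) 2)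
      (mul_nonneg (hσ i).le (sq_nonneg _))

theorem mul_sum_lt_sum_cube_mul_sq {σ x : ι → ℝ} {τ : ℝ} (hτ : 0 ≤ τ) (hx : x ≠ 0)
    (hlt : ∀ i, x i ≠ 0 → τ < σ i) : τ ^ 2 * ∑ i, σ i * x i ^ 2 < ∑ i, σ i ^ 3 * x i ^ 2 := by
  have hterm (i : ι) (hi : x i ≠ 0) : τ ^ 2 * (σ i * x i ^ 2) < σ i ^ 3 * x i ^ 2 := by
    rw [pow_succ (σ i), mul_assoc]
    exact mul_lt_mul_of_pos_right (pow_lt_pow_left₀ (hlt i hi) hτ two_ne_zero)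
      (mul_pos (hτ.trans_lt (hlt i hi)) (sq_pos_of_ne_zero hi))
  rw [Finset.mul_sum]
  obtain ⟨i₀, hi₀⟩ := Function.ne_iff.mp hx
  refine Finset.sum_lt_sum (fun i _ => ?_) ⟨i₀, Finset.mem_univ _, hterm i₀ hi₀⟩
  obtain hi | hi := eq_or_ne (x i) 0
  · simp [hi]
  · exact (hterm i hi).le

theorem dotProduct_extend {κ : Type*} [Fintype κ] {e : κ → ι} (he : Function.Injective e)
    (c : ι → ℝ) (v : κ → ℝ) : c ⬝ᵥ Function.extend e v 0 = (c ∘ e) ⬝ᵥ v :=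
  (Fintype.sum_of_injective e he _ _ (fun j hj => by
    rw [Function.extend_apply' _ _ _ hj, Pi.zero_apply, mul_zero]) fun j => by
    rw [he.extend_apply, Function.comp_apply]).symm

theorem mulVec_extend {κ : Type*} [Fintype κ] {e : κ → ι} (he : Function.Injective e)
    (M : Matrix ι ι ℝ) (v : κ → ℝ) : M *ᵥ Function.extend e v 0 = M.submatrix id e *ᵥ v :=
  funext fun i => dotProduct_extend he (M i) v

variable [DecidableEq ι] {σ : ι → ℝ}

theorem abs_lt_one_of_mulVec_eq_smul (hA : Tendsto (fun t : ℕ => A ^ t) atTop (𝓝 0)) (hw : w ≠ 0)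
    (hAw : A *ᵥ w = μ • w) : |μ| < 1 := by
  obtain ⟨i, hi⟩ := Function.ne_iff.mp hw
  have hpow (t : ℕ) : A ^ t *ᵥ w = μ ^ t • w := by
    induction t with
    | zero => simp only [pow_zero, one_mulVec, one_smul]
    | succ t ih => rw [pow_succ, ← mulVec_mulVec, hAw, mulVec_smul, ih, smul_smul, pow_succ']
  have hcont : Continuous fun M : Matrix ι ι ℝ => (M *ᵥ w) i := by fun_prop
  have hlim := (hcont.tendsto 0).comp hA
  simp only [Function.comp_def, hpow, Pi.smul_apply, smul_eq_mul, zero_mulVec] at hlim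
  have hlim_div := hlim.div_const (w i)
  simp only [mul_div_cancel_right₀ _ hi, Pi.zero_apply, zero_div] at hlim_div
  exact tendsto_pow_atTop_nhds_zero_iff.mp hlim_div

theorem dotProduct_diagonal_mulVec (σ w : ι → ℝ) :
    w ⬝ᵥ diagonal σ *ᵥ w = ∑ i, σ i * w i ^ 2 := by
  simp only [dotProduct, mulVec_diagonal]
  exact Finset.sum_congr rfl fun i _ => by ring

theorem dotProduct_diagonal_mulVec_pos (hσ : ∀ i, 0 < σ i) (hw : w ≠ 0) :
    0 < w ⬝ᵥ diagonal σ *ᵥ w :=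
  (posDef_diagonal_iff.mpr hσ).dotProduct_mulVec_pos hw

theorem sq_lt_one_of_stein (hc : Aᵀ * diagonal σ * A - diagonal σ + vecMulVec c c = 0)
    (hA : Tendsto (fun t : ℕ => A ^ t) atTop (𝓝 0)) (hσ : ∀ i, 0 < σ i) (hw : w ≠ 0)
    (hAw : ∀ i, w i ≠ 0 → (A *ᵥ w) i = μ * w i) : μ ^ 2 < 1 := by
  obtain heq | hne := eq_or_ne (A *ᵥ w) (μ • w)
  · exact (sq_lt_one_iff_abs_lt_one μ).mpr (abs_lt_one_of_mulVec_eq_smul hA hw heq)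
  have henergy := stein_dotProduct hc w
  have hw_pos := dotProduct_diagonal_mulVec_pos hσ hw
  have hres_pos := dotProduct_diagonal_mulVec_pos hσ (sub_ne_zero.mpr hne)
  rw [dotProduct_diagonal_mulVec] at henergy hw_pos hres_pos
  rw [dotProduct_diagonal_mulVec, sum_mul_sq_eq_add hAw] at henergy
  simp only [Pi.sub_apply, Pi.smul_apply, smul_eq_mul] at hres_pos
  have hlt : μ ^ 2 * ∑ i, σ i * w i ^ 2 < 1 * ∑ i, σ i * w i ^ 2 := by
    linarith [sq_nonneg (c ⬝ᵥ w)]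
  exact lt_of_mul_lt_mul_right hlt hw_pos.le

/-- For an unobservable eigenvector `w` of a balanced truncation, the energy balances of `w` in the
observability equation and of `Σ A w` in the controllability equation contradict the gap `τ`. -/
theorem dotProduct_ne_zero_of_stein
    (hb : A * diagonal σ * Aᵀ - diagonal σ + vecMulVec b b = 0)
    (hc : Aᵀ * diagonal σ * A - diagonal σ + vecMulVec c c = 0)
    (hσ : ∀ i, 0 < σ i) (hμ : μ ^ 2 < 1) (hw : w ≠ 0)
    (hAw : ∀ i, w i ≠ 0 → (A *ᵥ w) i = μ * w i) {τ : ℝ} (hτ : 0 ≤ τ)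
    (hlt : ∀ i, w i ≠ 0 → τ < σ i) (hle : ∀ i, (A *ᵥ w) i ≠ μ * w i → σ i ≤ τ) :
    c ⬝ᵥ w ≠ 0 := by
  intro hcw
  have hobsv := stein_dotProduct hc w
  have hadj := stein_mulVec hc w
  rw [hcw, zero_smul, sub_zero] at hadj
  rw [← transpose_transpose A] at hb
  have hctrb := stein_dotProduct hb (diagonal σ *ᵥ A *ᵥ w)
  rw [hadj] at hctrb
  simp only [dotProduct_diagonal_mulVec, mulVec_diagonal, mul_pow, ← mul_assoc, ← pow_succ']
    at hobsv hctrb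
  rw [sum_mul_sq_eq_add hAw, hcw] at hobsv
  rw [sum_mul_sq_eq_add hAw] at hctrb
  have hres := sum_cube_mul_sq_le hσ fun i hi => hle i (sub_ne_zero.mp hi)
  have hgap := mul_lt_mul_of_pos_left (mul_sum_lt_sum_cube_mul_sq hτ hw hlt) (sub_pos.mpr hμ)
  have hsq := sq_nonneg (b ⬝ᵥ diagonal σ *ᵥ A *ᵥ w)
  refine hgap.not_ge ?_
  linear_combination hctrb + hsq + hres + τ ^ 2 * hobsv

theorem sq_lt_one_and_dotProduct_ne_zero_of_submatrix {κ : Type*} [Fintype κ] {e : κ → ι}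
    (hb : A * diagonal σ * Aᵀ - diagonal σ + vecMulVec b b = 0)
    (hc : Aᵀ * diagonal σ * A - diagonal σ + vecMulVec c c = 0)
    (hA : Tendsto (fun t : ℕ => A ^ t) atTop (𝓝 0)) (hσ : ∀ i, 0 < σ i)
    (he : Function.Injective e) {τ : ℝ} (hτ : 0 ≤ τ) (hlt : ∀ i, τ < σ (e i))
    (hle : ∀ i ∉ Set.range e, σ i ≤ τ) {v : κ → ℝ} (hv : v ≠ 0)
    (hAv : A.submatrix e e *ᵥ v = μ • v) : μ ^ 2 < 1 ∧ (c ∘ e) ⬝ᵥ v ≠ 0 := by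
  let w : ι → ℝ := Function.extend e v 0
  have hwe (i : κ) : w (e i) = v i := he.extend_apply v 0 i
  have hw_mem (i : ι) (hi : w i ≠ 0) : i ∈ Set.range e := by
    contrapose! hi
    exact Function.extend_apply' v (0 : ι → ℝ) i hi
  have hw : w ≠ 0 := fun hw => hv (funext fun i => by rw [← hwe, hw]; rfl)
  have hAwe (i : κ) : (A *ᵥ w) (e i) = μ * w (e i) := by
    rw [hwe, mulVec_extend he]
    exact congrFun hAv i
  have hAw (i : ι) (hi : w i ≠ 0) : (A *ᵥ w) i = μ * w i := by
    obtain ⟨j, rfl⟩ := hw_mem i hi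
    exact hAwe j
  have hμ := sq_lt_one_of_stein hc hA hσ hw hAw
  refine ⟨hμ, ?_⟩
  rw [← dotProduct_extend he]
  refine dotProduct_ne_zero_of_stein hb hc hσ hμ hw hAw hτ (fun i hi => ?_) fun i hi => ?_
  · obtain ⟨j, rfl⟩ := hw_mem i hi
    exact hlt j
  · refine hle i ?_
    rintro ⟨j, rfl⟩
    exact hi (hAwe j)

end PerneboSilverman

section SpectralExpansion

variable {κ : Type*} [Fintype κ] [DecidableEq κ] {M : Matrix κ κ ℝ} {β : κ → ℝ}

theorem eigenvectorBasis_dotProduct (hM : M.IsHermitian) (i j : κ) :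
    ⇑(hM.eigenvectorBasis i) ⬝ᵥ ⇑(hM.eigenvectorBasis j) = if i = j then 1 else 0 := by
  rw [dotProduct_comm, ← orthonormal_iff_ite.mp hM.eigenvectorBasis.orthonormal i j]
  exact (EuclideanSpace.inner_eq_star_dotProduct _ _).symm

theorem eigenvectorBasis_ne_zero (hM : M.IsHermitian) (i : κ) : ⇑(hM.eigenvectorBasis i) ≠ 0 :=
  fun h => by simpa [h] using eigenvectorBasis_dotProduct hM i i

theorem pow_mulVec_eigenvectorBasis (hM : M.IsHermitian) (t : ℕ) (i : κ) :
    M ^ t *ᵥ ⇑(hM.eigenvectorBasis i) = hM.eigenvalues i ^ t • ⇑(hM.eigenvectorBasis i) := by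
  induction t with
  | zero => simp only [pow_zero, one_mulVec, one_smul]
  | succ t ih =>
    rw [pow_succ, ← mulVec_mulVec, hM.mulVec_eigenvectorBasis, mulVec_smul, ih, smul_smul,
      pow_succ']

theorem dotProduct_pow_mulVec_eq_sum (hM : M.IsHermitian) (β : κ → ℝ) (t : ℕ) :
    β ⬝ᵥ M ^ t *ᵥ β = ∑ i, (β ⬝ᵥ ⇑(hM.eigenvectorBasis i)) ^ 2 * hM.eigenvalues i ^ t := by
  have hparseval := hM.eigenvectorBasis.sum_inner_mul_inner (WithLp.toLp 2 (M ^ t *ᵥ β))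
    (WithLp.toLp 2 β)
  simp only [EuclideanSpace.inner_eq_star_dotProduct, star_trivial] at hparseval
  rw [← hparseval]
  refine Finset.sum_congr rfl fun i _ => ?_
  have hsymm : (M ^ t)ᵀ = M ^ t := (hM.pow t).eq
  rw [dotProduct_mulVec, ← mulVec_transpose, hsymm, pow_mulVec_eigenvectorBasis, smul_dotProduct,
    smul_eq_mul, dotProduct_comm _ β]
  ring

theorem eigenvalues_injective_of_dotProduct_ne_zero (hM : M.IsHermitian)
    (hβ : ∀ (μ : ℝ) (v : κ → ℝ), v ≠ 0 → M *ᵥ v = μ • v → β ⬝ᵥ v ≠ 0) :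
    Function.Injective hM.eigenvalues := by
  intro i j hij
  by_contra hne
  let e (i : κ) : κ → ℝ := ⇑(hM.eigenvectorBasis i)
  have he (i : κ) : M *ᵥ e i = hM.eigenvalues i • e i := hM.mulVec_eigenvectorBasis i
  have horth (i j : κ) : e i ⬝ᵥ e j = if i = j then 1 else 0 := eigenvectorBasis_dotProduct hM i j
  have hβe : β ⬝ᵥ e j ≠ 0 := hβ _ _ (eigenvectorBasis_ne_zero hM j) (he j)
  -- The combination of `e i` and `e j` orthogonal to `β` is again an eigenvector.
  refine hβ (hM.eigenvalues i) ((β ⬝ᵥ e j) • e i - (β ⬝ᵥ e i) • e j) (fun h => hβe ?_) ?_ ?_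
  · have hcoord := congrArg (e i ⬝ᵥ ·) h
    simpa only [dotProduct_sub, dotProduct_smul, horth, if_true, if_neg hne, smul_eq_mul, mul_one,
      mul_zero, sub_zero, dotProduct_zero] using hcoord
  · rw [mulVec_sub, mulVec_smul, mulVec_smul, he, he, ← hij, smul_sub, smul_comm (β ⬝ᵥ e j),
      smul_comm (β ⬝ᵥ e i)]
  · rw [dotProduct_sub, dotProduct_smul, dotProduct_smul, smul_eq_mul, smul_eq_mul, mul_comm,
      sub_self]

theorem exists_perm_strictAnti {r : ℕ} {f : Fin r → ℝ} (hf : Function.Injective f) :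
    ∃ π : Equiv.Perm (Fin r), StrictAnti (f ∘ π) :=
  ⟨Tuple.sort fun i => OrderDual.toDual (f i),
    (Tuple.monotone_sort fun i => OrderDual.toDual (f i)).strictMono_of_injective
      (hf.comp (Equiv.injective _))⟩

theorem exists_exponential_sum_of_posDef {r : ℕ} {M : Matrix (Fin r) (Fin r) ℝ} {β : Fin r → ℝ}
    (hM : M.PosDef)
    (hβ : ∀ (μ : ℝ) (v : Fin r → ℝ), v ≠ 0 → M *ᵥ v = μ • v → μ ^ 2 < 1 ∧ β ⬝ᵥ v ≠ 0) :
    ∃ ρ μ : Fin r → ℝ, (∀ i, 0 < ρ i) ∧ StrictAnti μ ∧ (∀ i, 0 < μ i ∧ μ i < 1) ∧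
      ∀ t : ℕ, β ⬝ᵥ M ^ t *ᵥ β = ∑ i, ρ i * μ i ^ t := by
  have hsymm := hM.isHermitian
  have heigen (i : Fin r) :=
    hβ _ _ (eigenvectorBasis_ne_zero hsymm i) (hsymm.mulVec_eigenvectorBasis i)
  obtain ⟨π, hπ⟩ := exists_perm_strictAnti <|
    eigenvalues_injective_of_dotProduct_ne_zero hsymm fun μ v hv hMv => (hβ μ v hv hMv).2
  refine ⟨fun i => (β ⬝ᵥ ⇑(hsymm.eigenvectorBasis (π i))) ^ 2, hsymm.eigenvalues ∘ π,
    fun i => sq_pos_of_ne_zero (heigen (π i)).2, hπ,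
    fun i => ⟨hM.eigenvalues_pos _, (abs_lt.mp <| (sq_lt_one_iff_abs_lt_one _).mp
      (heigen (π i)).1).2⟩, fun t => ?_⟩
  rw [dotProduct_pow_mulVec_eq_sum hsymm]
  exact (Equiv.sum_comp π _).symm

end SpectralExpansion

section GeneralizedVandermonde

variable {R : Type*} [CommRing R]

theorem det_of_sum_mul_pow {p : ℕ} (a : Fin p → ℕ → R) (S : Fin p → Finset ℕ) (x : Fin p → R) :
    (of fun j i => ∑ l ∈ S j, a j l * x i ^ l).det =
      ∑ f ∈ Fintype.piFinset S, (∏ j, a j (f j)) * (of fun j i => x i ^ f j).det := by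
  have hrows : (of fun j i => ∑ l ∈ S j, a j l * x i ^ l) =
      fun j => ∑ l ∈ S j, fun i => a j l * x i ^ l := by
    ext j i
    rw [of_apply, Finset.sum_apply]
  rw [hrows]
  refine (MultilinearMap.map_sum_finset (detRowAlternating (R := R)).toMultilinearMap
    (fun j l i => a j l * x i ^ l) S).trans (Finset.sum_congr rfl fun f _ => ?_)
  exact det_mul_column (fun j => a j (f j)) (of fun j i => x i ^ f j)

theorem det_of_pow_succ {p : ℕ} (x : Fin (p + 1) → R) {e : Fin (p + 1) → ℕ} (he : Monotone e) :
    (of fun j i => x i ^ e j).det = x 0 ^ e 0 * ((∏ i : Fin p, (x i.succ - x 0)) *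
      (of fun j i : Fin p => ∑ l ∈ Finset.Ico (e j.castSucc) (e j.succ),
        x 0 ^ (e j.succ - 1 - l) * x i.succ ^ l).det) := by
  let B : Matrix (Fin (p + 1)) (Fin (p + 1)) R := of fun j i => Fin.cases (x i ^ e 0)
    (fun j => (x i - x 0) * ∑ l ∈ Finset.Ico (e j.castSucc) (e j.succ),
      x 0 ^ (e j.succ - 1 - l) * x i ^ l) j
  have hB : (of fun j i => x i ^ e j).det = B.det := by
    refine det_eq_of_forall_row_eq_smul_add_pred (fun j => x 0 ^ (e j.succ - e j.castSucc))
      (fun i => rfl) fun j i => ?_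
    have hgeom := mul_geom_sum₂_Ico (x i) (x 0) (he (Fin.castSucc_le_succ j))
    simp only [B, of_apply, Fin.cases_succ, mul_comm (x 0 ^ _), hgeom, sub_add_cancel]
  have hcol (j : Fin p) : B j.succ 0 = 0 := by
    simp only [B, of_apply, Fin.cases_succ, sub_self, zero_mul]
  rw [hB, det_succ_column_zero, Fin.sum_univ_succ, Finset.sum_eq_zero fun j _ => by
    rw [hcol, mul_zero, zero_mul], add_zero, ← det_mul_row]
  simp only [Fin.val_zero, pow_zero, one_mul]
  rfl

/-- A generalized Vandermonde determinant. Subtracting from each row the multiple of the previous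
one that clears the first column leaves geometric sums, whose multilinear expansion only involves
smaller determinants of the same kind. -/
theorem det_of_pow_nonneg [LinearOrder R] [IsStrictOrderedRing R] {p : ℕ} {x : Fin p → R}
    (hx : Monotone x) (hx_nonneg : ∀ i, 0 ≤ x i) {e : Fin p → ℕ} (he : StrictMono e) :
    0 ≤ (of fun j i => x i ^ e j).det := by
  induction p with
  | zero => simp
  | succ p ih =>
    rw [det_of_pow_succ x he.monotone, det_of_sum_mul_pow]
    refine mul_nonneg (pow_nonneg (hx_nonneg 0) _) (mul_nonneg ?_ ?_)
    · exact Finset.prod_nonneg fun i _ => sub_nonneg.mpr (hx (Fin.zero_le _))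
    · refine Finset.sum_nonneg fun f hf => mul_nonneg ?_ ?_
      · exact Finset.prod_nonneg fun j _ => pow_nonneg (hx_nonneg 0) _
      · refine ih (hx.comp Fin.strictMono_succ.monotone) (fun i => hx_nonneg _) ?_
        have hmem (j : Fin p) := Finset.mem_Ico.mp (Fintype.mem_piFinset.mp hf j)
        intro i j hij
        have hij_le := he.monotone (Fin.succ_le_castSucc_iff.mpr hij)
        exact (hmem i).2.trans_le (hij_le.trans (hmem j).1)

theorem hankelTotallyPositive_of_eq_sum {ι : Type*} [Fintype ι] [LinearOrder ι] {g : ℕ → ℝ}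
    {ρ μ : ι → ℝ} (hρ : ∀ i, 0 ≤ ρ i) (hμ : Monotone μ) (hμ_nonneg : ∀ i, 0 ≤ μ i)
    (hg : ∀ t, g t = ∑ i, ρ i * μ i ^ t) : HankelTotallyPositive g := by
  intro p I J hI hJ
  have hcb := hasSum_det_mul_det (φ := of fun s i => ρ i * μ i ^ I s)
    (ψ := of fun t i => μ i ^ J t) (G := hankelSub g I J) fun s t => by
      simpa only [hankelSub, of_apply, hg, pow_add, mul_assoc]
        using hasSum_fintype fun i => ρ i * μ i ^ I s * μ i ^ J t
  refine hcb.nonneg fun m => mul_nonneg ?_ ?_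
  · have hdet : ((of fun s i => ρ i * μ i ^ I s).submatrix id m).det =
        (∏ i, ρ (m i)) * (of fun s i => μ (m i) ^ I s).det := by
      rw [← det_mul_row]
      rfl
    rw [hdet]
    exact mul_nonneg (Finset.prod_nonneg fun i _ => hρ _)
      (det_of_pow_nonneg (hμ.comp m.monotone) (fun i => hμ_nonneg _) hI)
  · exact det_of_pow_nonneg (hμ.comp m.monotone) (fun i => hμ_nonneg _) hJ

end GeneralizedVandermonde

theorem HankelTotallyPositive.nonneg {g : ℕ → ℝ} (hg : HankelTotallyPositive g) (t : ℕ) :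
    0 ≤ g t := by
  simpa [hankelSub] using hg 1 (fun _ => t) (fun _ => 0) (Subsingleton.strictMono _)
    (Subsingleton.strictMono _)

namespace IsBalancedRealization

variable {n k r : ℕ} {A : Matrix (Fin n) (Fin n) ℝ} {b c σ : Fin n → ℝ}

theorem exists_sigma_gap (h : IsBalancedRealization A b c σ)
    (hk : HankelStrictlyKPositive (fun t => c ⬝ᵥ A ^ t *ᵥ b) k) (hrk : r ≤ k) (hrn : r ≤ n) :
    ∃ τ, 0 ≤ τ ∧ (∀ i, τ < σ (Fin.castLE hrn i)) ∧
      ∀ i ∉ Set.range (Fin.castLE hrn), σ i ≤ τ := by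
  have hle {i : Fin n} (hi : i ∉ Set.range (Fin.castLE hrn)) : r ≤ i :=
    not_lt.mp fun hir => hi ⟨⟨i, hir⟩, rfl⟩
  obtain rfl | hlt := hrn.eq_or_lt
  · exact ⟨0, le_rfl, fun i => h.pos _, fun i hi => absurd i.2 (hle hi).not_gt⟩
  · exact ⟨σ ⟨r, hlt⟩, (h.pos _).le, fun i => h.sigma_lt_of_lt hk (i.2.trans_le hrk) i.2,
      fun i hi => h.antitone (hle hi)⟩

theorem posDef_submatrix_castLE (h : IsBalancedRealization A b c σ)
    (hk : HankelStrictlyKPositive (fun t => c ⬝ᵥ A ^ t *ᵥ b) k) (hrk : r ≤ k) (hrn : r ≤ n) :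
    (A.submatrix (Fin.castLE hrn) (Fin.castLE hrn)).PosDef :=
  posDef_of_forall_leading_det_pos
    (Matrix.ext fun i j => h.apply_apply_comm hk (j.2.trans_le hrk) (i.2.trans_le hrk))
    fun _ hp => h.det_submatrix_castLE_pos hk (hp.trans hrk) (hp.trans hrn)

theorem truncResponse_eq_of_kPositive (h : IsBalancedRealization A b c σ)
    (hk : HankelStrictlyKPositive (fun t => c ⬝ᵥ A ^ t *ᵥ b) k) (hrk : r ≤ k) (hrn : r ≤ n)
    (t : ℕ) : truncResponse A b c r hrn t = (c ∘ Fin.castLE hrn) ⬝ᵥ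
      A.submatrix (Fin.castLE hrn) (Fin.castLE hrn) ^ t *ᵥ (c ∘ Fin.castLE hrn) := by
  have hcb : c ∘ Fin.castLE hrn = b ∘ Fin.castLE hrn :=
    funext fun i => h.apply_eq hk (i.2.trans_le hrk)
  rw [truncResponse, hcb]

theorem exists_truncResponse_eq_sum (h : IsBalancedRealization A b c σ)
    (hk : HankelStrictlyKPositive (fun t => c ⬝ᵥ A ^ t *ᵥ b) k) (hrk : r ≤ k) (hrn : r ≤ n) :
    ∃ ρ μ : Fin r → ℝ, (∀ i, 0 < ρ i) ∧ StrictAnti μ ∧ (∀ i, 0 < μ i ∧ μ i < 1) ∧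
      ∀ t : ℕ, truncResponse A b c r hrn t = ∑ i, ρ i * μ i ^ t := by
  obtain ⟨τ, hτ, hlt, hle⟩ := h.exists_sigma_gap hk hrk hrn
  simp only [h.truncResponse_eq_of_kPositive hk hrk hrn]
  exact exists_exponential_sum_of_posDef (h.posDef_submatrix_castLE hk hrk hrn) fun μ v hv hAv =>
    sq_lt_one_and_dotProduct_ne_zero_of_submatrix h.stein_ctrb h.stein_obsv h.tendsto_pow h.pos
      (Fin.castLE_injective hrn) hτ hlt hle hv hAv

end IsBalancedRealization

theorem balanced_truncation_of_strictly_kpositive_general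
    {n : ℕ} (A : Matrix (Fin n) (Fin n) ℝ) (b c : Fin n → ℝ) (σ : Fin n → ℝ)
    (hbal : IsBalancedRealization A b c σ)
    (k : ℕ) (hkpos : HankelStrictlyKPositive (fun t => c ⬝ᵥ (A ^ t).mulVec b) k)
    (r : ℕ) (hrk : r ≤ k) (hrn : r ≤ n) :
    (∃ ρ μ : Fin r → ℝ, (∀ i, 0 < ρ i) ∧ StrictAnti μ ∧
      (∀ i, 0 < μ i ∧ μ i < 1) ∧
      ∀ t : ℕ, truncResponse A b c r hrn t = ∑ i, ρ i * μ i ^ t) ∧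
    HankelTotallyPositive (truncResponse A b c r hrn) ∧
    (∀ t : ℕ, 0 ≤ truncResponse A b c r hrn t) := by
  obtain ⟨ρ, μ, hρ, hμ, hμ_mem, hsum⟩ := hbal.exists_truncResponse_eq_sum hkpos hrk hrn
  have htp : HankelTotallyPositive (truncResponse A b c r hrn) :=
    hankelTotallyPositive_of_eq_sum (ι := (Fin r)ᵒᵈ) (fun i => (hρ i).le) hμ.antitone.dual_left
      (fun i => (hμ_mem i).1.le) hsum
  exact ⟨⟨ρ, μ, hρ, hμ, hμ_mem, hsum⟩, htp, htp.nonneg⟩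

/-- If `(A,b,c)` is a balanced realization of `g(t) = cA^{t-1}b` whose Hankel
matrix is strictly `k`-positive with `2 ≤ k ≤ n`, then for every
`1 ≤ r ≤ k-1` the balanced truncation of order `r` has impulse response
`g_r(t) = ∑_{i=1}^r ρ_i μ_i^{t-1}` with `ρ_i > 0` and `1 > μ_1 > … > μ_r > 0`;
in particular `H(g_r)` is totally positive and `g_r(t) ≥ 0` for all `t`. -/
theorem balanced_truncation_of_strictly_kpositive
    {n : ℕ} (A : Matrix (Fin n) (Fin n) ℝ) (b c : Fin n → ℝ) (σ : Fin n → ℝ)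
    (hbal : IsBalancedRealization A b c σ)
    (k : ℕ) (hk2 : 2 ≤ k) (hkn : k ≤ n)
    (hkpos : HankelStrictlyKPositive (fun t => c ⬝ᵥ (A ^ t).mulVec b) k)
    (r : ℕ) (hr1 : 1 ≤ r) (hrk : r ≤ k - 1) (hrn : r ≤ n) :
    (∃ ρ μ : Fin r → ℝ, (∀ i, 0 < ρ i) ∧ StrictAnti μ ∧
      (∀ i, 0 < μ i ∧ μ i < 1) ∧
      ∀ t : ℕ, truncResponse A b c r hrn t = ∑ i, ρ i * μ i ^ t) ∧
    HankelTotallyPositive (truncResponse A b c r hrn) ∧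
    (∀ t : ℕ, 0 ≤ truncResponse A b c r hrn t) :=
  balanced_truncation_of_strictly_kpositive_general A b c σ hbal k hkpos r
    (hrk.trans (k.sub_le 1)) hrn
end

section
/- Let (A,b,c) be a balanced realization of a SISO impulse response g(t) = cA^{t−1}b, and suppose the Hankel matrix H(g) is strictly k-positive for some 2 ≤ k ≤ n. Then for every 1 ≤ r ≤ k−1 the balanced truncation (A₁₁, b₁, c₁) of order r satisfies: A₁₁ is symmetric, b₁ = c₁ᵀ, and A₁₁ has r distinct real eigenvalues, all contained in the open interval (0,1). -/
open Matrix Polynomial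

/-!
The controllability and the observability matrix factor the Hankel matrix, and balancing says that
both factors have the Gramian `Σ`. By Cauchy–Binet this persists for their `p`-th compounds, whose
products are the minors of the Hankel matrix. As these are positive for `p ≤ k`, a
Perron–Frobenius argument shows that the top eigenvalue of the `p`-th compound of `Σ` is simple, so
that the first `k` singular values are strictly decreasing, and that the leading columns of the
compounded factors have constant sign, so that the leading `p × p` minor of `A` is positive.

The Hankel matrix is symmetric, hence a symmetric `T` with `T Σ T = Σ` maps the columns `Aⁱ b` to
`(Aᵀ)ⁱ c`. It commutes with `Σ²`, so on the leading coordinates it is a diagonal matrix of signs,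
and the sign pattern above makes all of them `1`; this gives `b₁ = c₁` and the symmetry of `A₁₁`,
and Sylvester's criterion gives its positivity. The two Stein equations finally exclude
eigenvalues of `A₁₁` outside `(-1, 1)` and eigenvectors of `A₁₁` orthogonal to `c₁`; in a
multiple eigenspace such an eigenvector would exist.
-/

theorem posDef_fromBlocks_of_det_pos_s11 {m n : Type*} [Fintype m] [DecidableEq m] [Unique n]
    [DecidableEq n] {P : Matrix m m ℝ} (hP : P.PosDef) (B : Matrix m n ℝ) (D : Matrix n n ℝ)
    (hdet : 0 < (fromBlocks P B Bᴴ D).det) : (fromBlocks P B Bᴴ D).PosDef := by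
  have : Invertible P := hP.isUnit.invertible
  set S := D - Bᴴ * P⁻¹ * B with hS
  have schur_pos : 0 < S default default := by
    rw [det_fromBlocks₁₁, invOf_eq_nonsing_inv, ← hS, det_unique (n := n)] at hdet
    exact pos_of_mul_pos_right hdet hP.det_pos.le
  have schur_herm : S.IsHermitian := by
    ext i j
    rw [Subsingleton.elim i j]
    rfl
  have psd : (fromBlocks P B Bᴴ D).PosSemidef := by
    rw [PosDef.fromBlocks₁₁ B D hP]
    refine .of_dotProduct_mulVec_nonneg schur_herm fun x => ?_
    simp only [dotProduct, mulVec, Fintype.sum_unique, star_trivial]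
    nlinarith [mul_nonneg schur_pos.le (mul_self_nonneg (x default))]
  exact psd.posDef_iff_det_ne_zero.2 hdet.ne'

theorem posDef_of_leadingMinors_pos {p : ℕ} {A : Matrix (Fin p) (Fin p) ℝ} (hA : A.IsSymm)
    (hminor : ∀ q (hq : q ≤ p), 0 < (A.submatrix (Fin.castLE hq) (Fin.castLE hq)).det) :
    A.PosDef := by
  induction p with
  | zero => exact .of_dotProduct_mulVec_pos (Subsingleton.elim _ _) fun x hx =>
      absurd (Subsingleton.elim x 0) hx
  | succ p ih =>
    let P := A.submatrix Fin.castSucc Fin.castSucc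
    let B := A.submatrix Fin.castSucc (Fin.natAdd p : Fin 1 → Fin (p + 1))
    let D := A.submatrix (Fin.natAdd p : Fin 1 → Fin (p + 1)) (Fin.natAdd p)
    have hP : P.PosDef := ih (hA.submatrix _) fun q hq => hminor q (hq.trans p.le_succ)
    have blocks : A.submatrix finSumFinEquiv finSumFinEquiv = fromBlocks P B Bᴴ D := by
      ext (i | i) (j | j)
      · rfl
      · rfl
      · exact hA.apply _ _
      · rfl
    have hdet : 0 < (fromBlocks P B Bᴴ D).det := by
      rw [← blocks, det_submatrix_equiv_self]
      exact hminor (p + 1) le_rfl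
    have hsub := posDef_fromBlocks_of_det_pos_s11 hP B D hdet
    rw [← blocks] at hsub
    simpa using hsub.submatrix finSumFinEquiv.symm.injective

section Gramian

variable {ι κ m : Type*} [Fintype m]

theorem hasSum_dotProduct (v : m → ℝ) {f : ι → m → ℝ} {x : m → ℝ} (hf : HasSum f x) :
    HasSum (fun i => v ⬝ᵥ f i) (v ⬝ᵥ x) :=
  hf.map (dotProductBilin ℝ ℝ v) (LinearMap.continuous_of_finiteDimensional _)

theorem hasSum_mulVec {f : ι → Matrix m m ℝ} {M : Matrix m m ℝ} (hf : HasSum f M) (v : m → ℝ) :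
    HasSum (fun i => f i *ᵥ v) (M *ᵥ v) :=
  hf.map ((mulVecBilin ℝ ℝ).flip v) (LinearMap.continuous_of_finiteDimensional _)

theorem summable_mul_of_summable_sq {f g : ι → ℝ} (hf : Summable fun i => f i ^ 2)
    (hg : Summable fun i => g i ^ 2) : Summable fun i => f i * g i := by
  refine .of_norm_bounded (hf.add hg) fun i => ?_
  rw [Real.norm_eq_abs, abs_le]
  constructor <;> nlinarith [sq_nonneg (f i + g i), sq_nonneg (f i - g i)]

theorem dotProduct_diagonal_mulVec_le [DecidableEq m] {γ : m → ℝ} {lead : m}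
    (hγ : ∀ I, γ I ≤ γ lead) (u : m → ℝ) :
    u ⬝ᵥ diagonal γ *ᵥ u ≤ γ lead * (u ⬝ᵥ u) := by
  simp only [dotProduct, mulVec_diagonal, Finset.mul_sum]
  refine Finset.sum_le_sum fun I _ => ?_
  nlinarith [mul_le_mul_of_nonneg_right (hγ I) (mul_self_nonneg (u I))]

/-- `HasGramian ξ Γ` says that the possibly infinite family of vectors `ξ` has the frame operator
`∑ᵢ ξᵢ ξᵢᵀ = Γ`. Both Gramians of a stable linear system and their compounds are of this form. -/
def HasGramian (ξ : ι → m → ℝ) (Γ : Matrix m m ℝ) : Prop :=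
  HasSum (fun i => vecMulVec (ξ i) (ξ i)) Γ

namespace HasGramian

variable {ξ ζ : ι → m → ℝ} {η : κ → m → ℝ} {Γ Δ : Matrix m m ℝ}

omit [Fintype m] in
theorem isSymm (hξ : HasGramian ξ Γ) : Γ.IsSymm := by
  have htr : HasGramian ξ Γᵀ := by
    simpa only [transpose_vecMulVec, HasGramian] using HasSum.matrix_transpose hξ
  exact htr.unique hξ

theorem hasSum_smul (hξ : HasGramian ξ Γ) (w : m → ℝ) :
    HasSum (fun i => (ξ i ⬝ᵥ w) • ξ i) (Γ *ᵥ w) := by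
  simpa only [vecMulVec_mulVec, op_smul_eq_smul] using hasSum_mulVec hξ w

theorem hasSum_mul (hξ : HasGramian ξ Γ) (u v : m → ℝ) :
    HasSum (fun i => (ξ i ⬝ᵥ u) * (ξ i ⬝ᵥ v)) (u ⬝ᵥ Γ *ᵥ v) := by
  simpa only [dotProduct_smul, smul_eq_mul, mul_comm, dotProduct_comm u (ξ _)]
    using hasSum_dotProduct u (hξ.hasSum_smul v)

theorem hasSum_sq (hξ : HasGramian ξ Γ) (u : m → ℝ) :
    HasSum (fun i => (ξ i ⬝ᵥ u) ^ 2) (u ⬝ᵥ Γ *ᵥ u) := by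
  simpa only [sq] using hξ.hasSum_mul u u

omit [Fintype m] in
theorem summable_sq_apply (hξ : HasGramian ξ Γ) (I : m) : Summable fun i => ξ i I ^ 2 := by
  simpa only [vecMulVec_apply, ← sq] using (Pi.hasSum.1 (Pi.hasSum.1 hξ I) I).summable

omit [Fintype m] in
theorem summable_smul (hξ : HasGramian ξ Γ) {s : ι → ℝ} (hs : Summable fun i => s i ^ 2) :
    Summable fun i => s i • ξ i :=
  Pi.summable.2 fun I => summable_mul_of_summable_sq hs (hξ.summable_sq_apply I)

omit [Fintype m] in
theorem summable_vecMulVec (hξ : HasGramian ξ Γ) (hζ : HasGramian ζ Δ) :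
    Summable fun i => vecMulVec (ξ i) (ζ i) :=
  Pi.summable.2 fun I => Pi.summable.2 fun J =>
    summable_mul_of_summable_sq (hξ.summable_sq_apply I) (hζ.summable_sq_apply J)

theorem map (hξ : HasGramian ξ Γ) (T : Matrix m m ℝ) :
    HasGramian (fun i => T *ᵥ ξ i) (T * Γ * Tᵀ) := by
  classical
  simpa only [HasGramian, mul_vecMulVec, vecMulVec_mul, vecMul_transpose]
    using (HasSum.mul_left T hξ).mul_right Tᵀ

theorem mul_eq_mul_of_mulVec_eq (hξ : HasGramian ξ Γ) {M N : Matrix m m ℝ}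
    (h : ∀ i, M *ᵥ ξ i = N *ᵥ ξ i) : M * Γ = N * Γ := by
  classical
  have hM := HasSum.mul_left M hξ
  have hN := HasSum.mul_left N hξ
  simp only [mul_vecMulVec, h] at hM hN
  exact hM.unique hN

omit [Fintype m] in
theorem of_tendsto {F : ℕ → Finset ι} (hF : Monotone F) (hexhaust : ∀ i, ∃ N, i ∈ F N)
    (hlim : Filter.Tendsto (fun N => ∑ i ∈ F N, vecMulVec (ξ i) (ξ i)) Filter.atTop (nhds Γ)) :
    HasGramian ξ Γ := by
  have hFtop := Filter.tendsto_atTop_finset_of_monotone hF hexhaust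
  have summable_sq (I : m) : Summable fun i => ξ i I ^ 2 := by
    have hII : Filter.Tendsto (fun N => ∑ i ∈ F N, ξ i I ^ 2) Filter.atTop (nhds (Γ I I)) :=
      (((continuous_id.matrix_elem I I).tendsto Γ).comp hlim).congr fun N => by
        simp only [Function.comp_apply, id, Matrix.sum_apply, vecMulVec_apply, sq]
    have mono : Monotone fun s : Finset ι => ∑ i ∈ s, ξ i I ^ 2 := fun _ _ hst =>
      Finset.sum_le_sum_of_subset_of_nonneg hst fun _ _ _ => sq_nonneg _
    refine summable_of_sum_le (fun _ => sq_nonneg _) (c := Γ I I) fun s => ?_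
    obtain ⟨N, hN⟩ := (hFtop.eventually_ge_atTop s).exists
    exact (mono hN).trans ((mono.comp hF).ge_of_tendsto hII N)
  have hsum : Summable fun i => vecMulVec (ξ i) (ξ i) :=
    Pi.summable.2 fun I => Pi.summable.2 fun J =>
      summable_mul_of_summable_sq (summable_sq I) (summable_sq J)
  exact tendsto_nhds_unique (hsum.hasSum.comp hFtop) hlim ▸ hsum.hasSum

variable {μ : ℝ} {w : m → ℝ}

theorem dotProduct_self_le_of_hasSum_smul (hξ : HasGramian ξ Γ) (hμ : 0 < μ)
    (hΓ : ∀ u, u ⬝ᵥ Γ *ᵥ u ≤ μ * (u ⬝ᵥ u)) {s : ι → ℝ} {S : ℝ} (hs : HasSum (fun i => s i ^ 2) S)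
    {z : m → ℝ} (hz : HasSum (fun i => s i • ξ i) z) : z ⬝ᵥ z ≤ μ * S := by
  have am_gm (i : ι) : 2 * (z ⬝ᵥ s i • ξ i) ≤ μ * s i ^ 2 + μ⁻¹ * (ξ i ⬝ᵥ z) ^ 2 := by
    have hsq : μ * s i ^ 2 + μ⁻¹ * (ξ i ⬝ᵥ z) ^ 2 - 2 * (z ⬝ᵥ s i • ξ i) =
        μ * (s i - μ⁻¹ * (ξ i ⬝ᵥ z)) ^ 2 := by
      rw [dotProduct_smul, dotProduct_comm, smul_eq_mul]
      field_simp
      ring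
    linarith [mul_nonneg hμ.le (sq_nonneg (s i - μ⁻¹ * (ξ i ⬝ᵥ z)))]
  have hle := hasSum_le am_gm ((hasSum_dotProduct z hz).mul_left 2)
    ((hs.mul_left μ).add ((hξ.hasSum_sq z).mul_left μ⁻¹))
  have hbound : μ⁻¹ * (z ⬝ᵥ Γ *ᵥ z) ≤ z ⬝ᵥ z := by
    rw [inv_mul_le_iff₀ hμ]
    exact hΓ z
  linarith

/-- Every `j` satisfies `⟨ηⱼ, z⟩ ≥ μ |⟨ηⱼ, w⟩|`, while `z ⬝ᵥ z ≤ μ² (w ⬝ᵥ w)`; summing squares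
over `j` turns all these inequalities into equalities. -/
theorem dotProduct_eq_abs_of_hasSum_abs_smul (hξ : HasGramian ξ Γ) (hη : HasGramian η Γ)
    (hpos : ∀ i j, 0 < η j ⬝ᵥ ξ i) (hμ : 0 < μ) (hΓ : ∀ u, u ⬝ᵥ Γ *ᵥ u ≤ μ * (u ⬝ᵥ u))
    (hw : Γ *ᵥ w = μ • w) {z : m → ℝ} (hz : HasSum (fun i => |ξ i ⬝ᵥ w| • ξ i) z) (j : κ) :
    η j ⬝ᵥ z = |μ * (η j ⬝ᵥ w)| := by
  have hle (j : κ) : |μ * (η j ⬝ᵥ w)| ≤ η j ⬝ᵥ z := by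
    have hηz := hasSum_dotProduct (η j) hz
    have hηw := hasSum_dotProduct (η j) (hξ.hasSum_smul w)
    simp only [hw, dotProduct_smul, smul_eq_mul] at hηz hηw
    refine abs_le'.2 ⟨hasSum_le (fun i => ?_) hηw hηz, hasSum_le (fun i => ?_) hηw.neg hηz⟩
    · exact mul_le_mul_of_nonneg_right (le_abs_self _) (hpos i j).le
    · rw [← neg_mul]
      exact mul_le_mul_of_nonneg_right (neg_le_abs _) (hpos i j).le
  have gap_nonneg (j : κ) : 0 ≤ (η j ⬝ᵥ z) ^ 2 - μ ^ 2 * (η j ⬝ᵥ w) ^ 2 := by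
    rw [← mul_pow, sub_nonneg]
    exact sq_le_sq.2 ((hle j).trans (le_abs_self _))
  have hgap := (hη.hasSum_sq z).sub ((hη.hasSum_sq w).mul_left (μ ^ 2))
  have gap_nonpos : z ⬝ᵥ Γ *ᵥ z - μ ^ 2 * (w ⬝ᵥ Γ *ᵥ w) ≤ 0 := by
    have hww : w ⬝ᵥ Γ *ᵥ w = μ * (w ⬝ᵥ w) := by rw [hw, dotProduct_smul, smul_eq_mul]
    have habs : HasSum (fun i => |ξ i ⬝ᵥ w| ^ 2) (μ * (w ⬝ᵥ w)) := by
      simpa only [sq_abs, hww] using hξ.hasSum_sq w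
    rw [hww]
    nlinarith [hΓ z, hξ.dotProduct_self_le_of_hasSum_smul hμ hΓ habs hz]
  rw [gap_nonpos.antisymm (hgap.nonneg gap_nonneg)] at hgap
  have gap_zero := congrFun ((hasSum_zero_iff_of_nonneg gap_nonneg).1 hgap) j
  rw [Pi.zero_apply, ← mul_pow, sub_eq_zero, sq_eq_sq_iff_abs_eq_abs] at gap_zero
  rwa [abs_of_nonneg ((abs_nonneg _).trans (hle j))] at gap_zero

theorem sign_mul_dotProduct_eq_abs (hξ : HasGramian ξ Γ) (hη : HasGramian η Γ)
    (hpos : ∀ i j, 0 < η j ⬝ᵥ ξ i) (hμ : 0 < μ) (hΓ : ∀ u, u ⬝ᵥ Γ *ᵥ u ≤ μ * (u ⬝ᵥ u))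
    (hw : Γ *ᵥ w = μ • w) (i : ι) (j : κ) :
    SignType.sign (η j ⬝ᵥ w) * (ξ i ⬝ᵥ w) = |ξ i ⬝ᵥ w| := by
  obtain ⟨z, hz⟩ := hξ.summable_smul (s := fun i => |ξ i ⬝ᵥ w|)
    (by simpa only [sq_abs] using (hξ.hasSum_sq w).summable)
  have hηz := hasSum_dotProduct (η j) hz
  have hηw := hasSum_dotProduct (η j) (hξ.hasSum_smul w)
  have hsign : η j ⬝ᵥ z = SignType.sign (η j ⬝ᵥ w) * (μ * (η j ⬝ᵥ w)) := by
    rw [hξ.dotProduct_eq_abs_of_hasSum_abs_smul hη hpos hμ hΓ hw hz j, abs_mul, abs_of_pos hμ,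
      ← sign_mul_self (η j ⬝ᵥ w)]
    ring
  have hdiff := hηz.sub (hηw.mul_left (SignType.sign (η j ⬝ᵥ w) : ℝ))
  simp only [hw, dotProduct_smul, smul_eq_mul, hsign, sub_self, ← mul_assoc, ← sub_mul] at hdiff
  have diff_nonneg (i : ι) :
      0 ≤ (|ξ i ⬝ᵥ w| - SignType.sign (η j ⬝ᵥ w) * (ξ i ⬝ᵥ w)) * (η j ⬝ᵥ ξ i) := by
    refine mul_nonneg (sub_nonneg.2 ?_) (hpos i j).le
    cases SignType.sign (η j ⬝ᵥ w) <;> simp [le_abs_self, neg_le_abs]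
  have diff_zero := congrFun ((hasSum_zero_iff_of_nonneg diff_nonneg).1 hdiff) i
  exact (sub_eq_zero.1 ((mul_eq_zero.1 diff_zero).resolve_right (hpos i j).ne')).symm

theorem dotProduct_ne_zero_of_pos (hξ : HasGramian ξ Γ) (hη : HasGramian η Γ)
    (hpos : ∀ i j, 0 < η j ⬝ᵥ ξ i) (hμ : 0 < μ) (hΓ : ∀ u, u ⬝ᵥ Γ *ᵥ u ≤ μ * (u ⬝ᵥ u))
    (hw : Γ *ᵥ w = μ • w) (hw0 : w ≠ 0) (j : κ) : η j ⬝ᵥ w ≠ 0 := by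
  intro hj
  have hξw (i : ι) : ξ i ⬝ᵥ w = 0 := by
    simpa [hj, eq_comm] using hξ.sign_mul_dotProduct_eq_abs hη hpos hμ hΓ hw i j
  have hμw := hξ.hasSum_smul w
  simp only [hξw, zero_smul, hw] at hμw
  exact (smul_ne_zero hμ.ne' hw0) (hμw.unique hasSum_zero)

/-- A version of the Perron–Frobenius theorem. -/
theorem dotProduct_mul_dotProduct_pos (hξ : HasGramian ξ Γ) (hη : HasGramian η Γ)
    (hpos : ∀ i j, 0 < η j ⬝ᵥ ξ i) (hμ : 0 < μ) (hΓ : ∀ u, u ⬝ᵥ Γ *ᵥ u ≤ μ * (u ⬝ᵥ u))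
    (hw : Γ *ᵥ w = μ • w) (hw0 : w ≠ 0) (i : ι) (j : κ) : 0 < (η j ⬝ᵥ w) * (ξ i ⬝ᵥ w) := by
  have hξw : ξ i ⬝ᵥ w ≠ 0 := hη.dotProduct_ne_zero_of_pos hξ
    (fun j i => dotProduct_comm (η j) (ξ i) ▸ hpos i j) hμ hΓ hw hw0 i
  have hηw : η j ⬝ᵥ w ≠ 0 := hξ.dotProduct_ne_zero_of_pos hη hpos hμ hΓ hw hw0 j
  rw [← abs_mul_sign (η j ⬝ᵥ w), mul_assoc,
    hξ.sign_mul_dotProduct_eq_abs hη hpos hμ hΓ hw i j]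
  positivity

section Diagonal

variable [DecidableEq m] {γ : m → ℝ} {lead : m}

theorem apply_mul_apply_pos_of_diagonal (hξ : HasGramian ξ (diagonal γ))
    (hη : HasGramian η (diagonal γ)) (hpos : ∀ i j, 0 < η j ⬝ᵥ ξ i) (hlead : 0 < γ lead)
    (hγ : ∀ I, γ I ≤ γ lead) {I : m} (hI : γ I = γ lead) (i : ι) (j : κ) :
    0 < η j I * ξ i I := by
  have heig : diagonal γ *ᵥ Pi.single I 1 = γ lead • Pi.single I 1 := by
    rw [diagonal_mulVec_single, ← Pi.single_smul', smul_eq_mul, hI]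
  simpa only [dotProduct_single_one] using hξ.dotProduct_mul_dotProduct_pos hη hpos hlead
    (dotProduct_diagonal_mulVec_le hγ) heig (by simp) i j

theorem lt_of_ne_of_diagonal (hξ : HasGramian ξ (diagonal γ))
    (hη : HasGramian η (diagonal γ)) (hpos : ∀ i j, 0 < η j ⬝ᵥ ξ i) (hlead : 0 < γ lead)
    (hγ : ∀ I, γ I ≤ γ lead) {I : m} (hI : I ≠ lead) (i : ι) (j : κ) : γ I < γ lead := by
  refine (hγ I).lt_of_ne fun heq => ?_
  set w : m → ℝ := η j I • Pi.single lead 1 - η j lead • Pi.single I 1 with hw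
  have heig : diagonal γ *ᵥ w = γ lead • w := by
    ext J
    by_cases hJI : J = I <;> by_cases hJl : J = lead <;> simp [mulVec_diagonal, *]
  have hηI : η j I ≠ 0 :=
    left_ne_zero_of_mul (hξ.apply_mul_apply_pos_of_diagonal hη hpos hlead hγ heq i j).ne'
  have hw0 : w ≠ 0 := fun h => hηI (by simpa [hw, hI.symm] using congrFun h lead)
  refine hξ.dotProduct_ne_zero_of_pos hη hpos hlead (dotProduct_diagonal_mulVec_le hγ) heig hw0 j ?_
  simp only [hw, dotProduct_sub, dotProduct_smul, dotProduct_single_one, smul_eq_mul]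
  ring

end Diagonal

end HasGramian

end Gramian

section Compound

variable {R α β δ : Type*} [CommRing R] [LinearOrder α] [LinearOrder β] [LinearOrder δ] {p : ℕ}

theorem bijective_perm_trans_orderEmbedding : Function.Bijective
    fun x : Equiv.Perm (Fin p) × (Fin p ↪o α) => x.1.toEmbedding.trans x.2.toEmbedding := by
  constructor
  · rintro ⟨τ, ρ⟩ ⟨τ', ρ'⟩ h
    have happly (i : Fin p) : ρ (τ i) = ρ' (τ' i) := DFunLike.congr_fun h i
    obtain rfl : ρ = ρ' := OrderEmbedding.range_inj.1 <| by
      rw [← τ.surjective.range_comp ρ, ← τ'.surjective.range_comp ρ']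
      exact congrArg Set.range (funext happly)
    exact Prod.ext (Equiv.ext fun i => ρ.injective (happly i)) rfl
  · intro f
    have sorted : StrictMono (f ∘ Tuple.sort f) := (Tuple.monotone_sort f).strictMono_of_injective
      (f.injective.comp (Tuple.sort f).injective)
    refine ⟨((Tuple.sort f).symm, OrderEmbedding.ofStrictMono _ sorted), ?_⟩
    ext i
    simp

theorem det_mul_eq_sum_embedding {ι : Type*} [Fintype ι] (M : Matrix (Fin p) ι R)
    (N : Matrix ι (Fin p) R) :
    (M * N).det = ∑ f : Fin p ↪ ι, (M.submatrix id f).det * ∏ i, N (f i) i := by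
  have expand : (M * N).det = ∑ f : Fin p → ι, (M.submatrix id f).det * ∏ i, N (f i) i := by
    simp only [det_apply', mul_apply, Finset.prod_univ_sum, Finset.mul_sum,
      Fintype.piFinset_univ, Finset.sum_mul, submatrix_apply, id]
    rw [Finset.sum_comm]
    simp only [Finset.prod_mul_distrib, mul_assoc]
  rw [expand]
  refine (Fintype.sum_of_injective _ DFunLike.coe_injective _ _ (fun f hf => ?_) fun _ => rfl).symm
  obtain ⟨i, j, hij, hne⟩ := Function.not_injective_iff.1 fun hinj => hf ⟨⟨f, hinj⟩, rfl⟩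
  rw [det_zero_of_column_eq hne fun k => by simp [hij], zero_mul]

/-- The `p`-th compound of `M`: the matrix of its minors of order `p`, whose rows and columns are
the `p`-element sets of indices, encoded as order embeddings. -/
noncomputable def compound (p : ℕ) (M : Matrix α β R) : Matrix (Fin p ↪o α) (Fin p ↪o β) R :=
  of fun I J => (M.submatrix I J).det

theorem compound_apply (M : Matrix α β R) (I : Fin p ↪o α) (J : Fin p ↪o β) :
    compound p M I J = (M.submatrix I J).det := rfl

/-- The Cauchy–Binet formula. -/
theorem compound_mul [Fintype β] (M : Matrix α β R) (N : Matrix β δ R) :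
    compound p (M * N) = compound p M * compound p N := by
  ext I J
  have product : (M * N).submatrix I J = M.submatrix I id * N.submatrix id J := rfl
  have permuted (τ : Equiv.Perm (Fin p)) (K : Fin p ↪o β) :
      (M.submatrix I (K ∘ τ)).det = τ.sign * (M.submatrix I K).det := by
    rw [← det_permute', submatrix_submatrix]
    rfl
  rw [compound_apply, product, det_mul_eq_sum_embedding, mul_apply,
    ← bijective_perm_trans_orderEmbedding.sum_comp, Fintype.sum_prod_type_right]
  refine Finset.sum_congr rfl fun K _ => ?_
  rw [compound_apply, compound_apply, det_apply' (N.submatrix K J), Finset.mul_sum]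
  refine Finset.sum_congr rfl fun τ _ => ?_
  change (M.submatrix I (K ∘ τ)).det * _ = _
  rw [permuted, mul_comm ((τ.sign : ℤ) : R), mul_assoc]
  rfl

theorem compound_transpose (M : Matrix α β R) : compound p Mᵀ = (compound p M)ᵀ := by
  ext I J
  exact det_transpose (M.submatrix J I)

theorem compound_diagonal (d : α → R) :
    compound p (diagonal d) = diagonal fun I : Fin p ↪o α => ∏ j, d (I j) := by
  ext I J
  rw [compound_apply]
  rcases eq_or_ne I J with rfl | hne
  · rw [diagonal_apply_eq, submatrix_diagonal _ _ I.injective, det_diagonal]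
    rfl
  · rw [diagonal_apply_ne _ hne]
    obtain ⟨j, hj⟩ : ∃ j, I j ∉ Set.range J := by
      by_contra! hsub
      have himage : Finset.univ.image I ⊆ Finset.univ.image J := by
        simpa [Finset.subset_iff] using hsub
      have heq := Finset.eq_of_subset_of_card_le himage (by
        rw [Finset.card_image_of_injective _ I.injective,
          Finset.card_image_of_injective _ J.injective])
      exact hne (OrderEmbedding.range_inj.1 (by
        simpa using congrArg (fun s : Finset α => (s : Set α)) heq))
    exact det_eq_zero_of_row_eq_zero j fun l => diagonal_apply_ne _ fun h => hj ⟨l, h.symm⟩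

/-- The strictly increasing `p`-tuples with values below `N`. -/
noncomputable def boundedTuples (p N : ℕ) : Finset (Fin p ↪o ℕ) :=
  Finset.univ.map ⟨fun ρ : Fin p ↪o Fin N => ρ.trans (Fin.valOrderEmb N), fun _ _ h =>
    DFunLike.ext _ _ fun i => Fin.val_injective (DFunLike.congr_fun h i)⟩

theorem mem_boundedTuples {N : ℕ} {ρ : Fin p ↪o ℕ} : ρ ∈ boundedTuples p N ↔ ∀ i, ρ i < N := by
  constructor
  · intro h
    obtain ⟨ρ', -, rfl⟩ := Finset.mem_map.1 h
    exact fun i => (ρ' i).isLt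
  · intro h
    exact Finset.mem_map.2 ⟨OrderEmbedding.ofStrictMono (fun i => ⟨ρ i, h i⟩) ρ.strictMono,
      Finset.mem_univ _, rfl⟩

theorem monotone_boundedTuples : Monotone (boundedTuples p) := fun _ _ hle _ hρ =>
  mem_boundedTuples.2 fun i => (mem_boundedTuples.1 hρ i).trans_le hle

theorem exists_mem_boundedTuples (ρ : Fin p ↪o ℕ) : ∃ N, ρ ∈ boundedTuples p N := by
  obtain ⟨N, hN⟩ := (Set.finite_range ρ).bddAbove
  exact ⟨N + 1, mem_boundedTuples.2 fun i => Nat.lt_succ_of_le (hN ⟨i, rfl⟩)⟩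

/-- The Cauchy–Binet formula for products with infinitely many inner indices. -/
theorem HasGramian.compound {X : Matrix ℕ α ℝ} {Γ : Matrix α α ℝ}
    (hX : HasGramian X Γ) : HasGramian (compound p X) (compound p Γ) := by
  have hcont : Continuous fun M : Matrix α α ℝ => _root_.compound p M :=
    continuous_matrix fun I J => (continuous_id.matrix_submatrix I J).matrix_det
  refine .of_tendsto monotone_boundedTuples exists_mem_boundedTuples <|
    ((hcont.tendsto Γ).comp (HasSum.tendsto_sum_nat hX)).congr fun N => ?_
  let XN := X.submatrix (Fin.val : Fin N → ℕ) id
  have hgram : ∑ i ∈ Finset.range N, vecMulVec (X i) (X i) = XNᵀ * XN := by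
    ext I J
    rw [Matrix.sum_apply, mul_apply, Finset.sum_range]
    rfl
  rw [Function.comp_apply, hgram, compound_mul, compound_transpose, boundedTuples, Finset.sum_map]
  ext I J
  rw [mul_apply, Matrix.sum_apply]
  rfl

end Compound

section Stein

variable {m : Type*} [Fintype m] [DecidableEq m] {A S : Matrix m m ℝ} {b : m → ℝ}

/-- The controllability matrix with infinitely many samples; row `i` is the state `Aⁱ b`. -/
def krylov (A : Matrix m m ℝ) (b : m → ℝ) : Matrix ℕ m ℝ :=
  of fun i => A ^ i *ᵥ b

theorem krylov_apply (A : Matrix m m ℝ) (b : m → ℝ) (i : ℕ) : krylov A b i = A ^ i *ᵥ b := rfl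

theorem krylov_zero (A : Matrix m m ℝ) (b : m → ℝ) : krylov A b 0 = b := by
  rw [krylov_apply, pow_zero, one_mulVec]

theorem mulVec_krylov (A : Matrix m m ℝ) (b : m → ℝ) (i : ℕ) :
    A *ᵥ krylov A b i = krylov A b (i + 1) := by
  rw [krylov_apply, krylov_apply, mulVec_mulVec, pow_succ']

theorem krylov_transpose_dotProduct_krylov (A : Matrix m m ℝ) (b c : m → ℝ) (i j : ℕ) :
    krylov Aᵀ c i ⬝ᵥ krylov A b j = c ⬝ᵥ A ^ (i + j) *ᵥ b := by
  rw [krylov_apply, krylov_apply, ← transpose_pow, mulVec_transpose, ← dotProduct_mulVec,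
    mulVec_mulVec, pow_add]

theorem sum_vecMulVec_krylov (hS : A * S * Aᵀ - S + vecMulVec b b = 0) (N : ℕ) :
    ∑ i ∈ Finset.range N, vecMulVec (krylov A b i) (krylov A b i) =
      S - A ^ N * S * (A ^ N)ᵀ := by
  have hb : vecMulVec b b = S - A * S * Aᵀ := by
    rw [← sub_eq_zero, ← hS]
    abel
  induction N with
  | zero => simp
  | succ N ih =>
    have hterm : vecMulVec (krylov A b N) (krylov A b N) =
        A ^ N * vecMulVec b b * (A ^ N)ᵀ := by
      rw [mul_vecMulVec, vecMulVec_mul, vecMul_transpose, krylov_apply]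
    rw [Finset.sum_range_succ, ih, hterm, hb, pow_succ, transpose_mul]
    simp only [Matrix.mul_sub, Matrix.sub_mul, Matrix.mul_assoc]
    abel

theorem tendsto_krylov_of_stein (hS : A * S * Aᵀ - S + vecMulVec b b = 0)
    (hS0 : S.PosSemidef) : Filter.Tendsto (krylov A b) Filter.atTop (nhds 0) := by
  refine tendsto_pi_nhds.2 fun I => ?_
  have hbound (N : ℕ) : ∑ i ∈ Finset.range N, krylov A b i I ^ 2 ≤ S I I := by
    have hentry := congrFun (congrFun (sum_vecMulVec_krylov hS N) I) I
    simp only [Matrix.sum_apply, vecMulVec_apply, ← sq, Matrix.sub_apply] at hentry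
    have hdiag := (hS0.mul_mul_conjTranspose_same (A ^ N)).diag_nonneg (i := I)
    rw [conjTranspose_eq_transpose_of_trivial] at hdiag
    linarith
  have hsq := (summable_of_sum_range_le (fun _ => sq_nonneg _) hbound).tendsto_atTop_zero
  refine (tendsto_zero_iff_abs_tendsto_zero _).2 ?_
  simpa [Function.comp_def, Real.sqrt_sq_eq_abs] using
    (Real.continuous_sqrt.tendsto 0).comp hsq

theorem hasGramian_krylov_of_stein (hA : Filter.Tendsto (fun N => A ^ N) Filter.atTop (nhds 0))
    (hS : A * S * Aᵀ - S + vecMulVec b b = 0) : HasGramian (krylov A b) S := by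
  have hcont : Continuous fun M : Matrix m m ℝ => S - M * S * Mᵀ := by fun_prop
  refine .of_tendsto (F := Finset.range) Finset.range_mono (fun i => ⟨i + 1, by simp⟩) ?_
  simpa [Function.comp_def, sum_vecMulVec_krylov hS] using (hcont.tendsto 0).comp hA

theorem tendsto_pow_of_stein {n : ℕ} {A S : Matrix (Fin n) (Fin n) ℝ} {b : Fin n → ℝ}
    (hctrb : (ctrbMatrix A b).det ≠ 0) (hS : A * S * Aᵀ - S + vecMulVec b b = 0)
    (hS0 : S.PosSemidef) : Filter.Tendsto (fun N => A ^ N) Filter.atTop (nhds 0) := by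
  set K := ctrbMatrix A b
  have hK_unit : IsUnit K.det := hctrb.isUnit
  have hAK : Filter.Tendsto (fun N => A ^ N * K) Filter.atTop (nhds 0) := by
    refine tendsto_pi_nhds.2 fun I => tendsto_pi_nhds.2 fun j => ?_
    have hcol (N : ℕ) : (A ^ N * K) I j = krylov A b (N + j) I := by
      rw [krylov_apply, pow_add, ← mulVec_mulVec]
      rfl
    simp only [hcol]
    exact (tendsto_pi_nhds.1 (tendsto_krylov_of_stein hS hS0) I).comp
      (Filter.tendsto_add_atTop_nat j)
  simpa [mul_nonsing_inv_cancel_right _ _ hK_unit] using hAK.mul_const K⁻¹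

theorem sq_lt_one_of_mulVec_eq_smul (hA : Filter.Tendsto (fun N => A ^ N) Filter.atTop (nhds 0))
    {v : m → ℝ} (hv : v ≠ 0) {t : ℝ} (hAv : A *ᵥ v = t • v) : t ^ 2 < 1 := by
  have hpow (N : ℕ) : A ^ N *ᵥ v = t ^ N • v := by
    induction N with
    | zero => simp
    | succ N ih => rw [pow_succ, ← mulVec_mulVec, hAv, mulVec_smul, ih, smul_smul, ← pow_succ']
  have hcont : Continuous fun M : Matrix m m ℝ => M *ᵥ v := by fun_prop
  obtain ⟨I, hI⟩ := Function.ne_iff.1 hv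
  have hlim : Filter.Tendsto (fun N => t ^ N * v I) Filter.atTop (nhds 0) := by
    simpa [Function.comp_def, hpow] using tendsto_pi_nhds.1 ((hcont.tendsto 0).comp hA) I
  have htN : Filter.Tendsto (fun N => t ^ N) Filter.atTop (nhds 0) := by
    simpa [mul_assoc, mul_inv_cancel₀ hI] using hlim.mul_const (v I)⁻¹
  rw [sq_lt_one_iff_abs_lt_one]
  exact tendsto_pow_atTop_nhds_zero_iff.1 htN

end Stein

section Intertwiner

variable {ι m : Type*} [Fintype m] [DecidableEq m]

theorem HasGramian.exists_symm_intertwiner {ξ η : ι → m → ℝ} {Γ : Matrix m m ℝ}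
    (hξ : HasGramian ξ Γ) (hη : HasGramian η Γ) (hΓ : IsUnit Γ.det)
    (hsymm : ∀ i j, η i ⬝ᵥ ξ j = η j ⬝ᵥ ξ i) :
    ∃ T : Matrix m m ℝ, T.IsSymm ∧ (∀ i, T *ᵥ ξ i = η i) ∧ T * Γ * T = Γ := by
  obtain ⟨S, hS⟩ := hξ.summable_vecMulVec hη
  have hSξ (j : ι) : S *ᵥ ξ j = Γ *ᵥ η j := by
    have hleft := hasSum_mulVec hS (ξ j)
    simp only [vecMulVec_mulVec, op_smul_eq_smul, hsymm _ j] at hleft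
    simp only [dotProduct_comm (η j)] at hleft
    exact hleft.unique (hξ.hasSum_smul (η j))
  have hTξ (i : ι) : (Γ⁻¹ * S) *ᵥ ξ i = η i := by
    rw [← mulVec_mulVec, hSξ, mulVec_mulVec, nonsing_inv_mul _ hΓ, one_mulVec]
  have hTΓ : Γ⁻¹ * S * Γ = Sᵀ := by
    have hleft := HasSum.mul_left (Γ⁻¹ * S) hξ
    have hright := hS.matrix_transpose
    simp only [mul_vecMulVec, hTξ] at hleft
    simp only [transpose_vecMulVec] at hright
    exact hleft.unique hright
  have hT : (Γ⁻¹ * S).IsSymm := by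
    rw [IsSymm, transpose_mul, transpose_nonsing_inv, hξ.isSymm.eq, ← hTΓ,
      mul_nonsing_inv_cancel_right _ _ hΓ]
  refine ⟨Γ⁻¹ * S, hT, hTξ, ?_⟩
  have hmap := hξ.map (Γ⁻¹ * S)
  simp only [hTξ, hT.eq] at hmap
  exact hmap.unique hη

theorem intertwiner_mul_eq_transpose_mul {A T Γ : Matrix m m ℝ} {b c : m → ℝ}
    (hξ : HasGramian (krylov A b) Γ) (hΓ : IsUnit Γ.det)
    (hT : ∀ i, T *ᵥ krylov A b i = krylov Aᵀ c i) : T * A = Aᵀ * T := by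
  have heq : T * A * Γ = Aᵀ * T * Γ := hξ.mul_eq_mul_of_mulVec_eq fun i => by
    rw [← mulVec_mulVec, ← mulVec_mulVec, mulVec_krylov, hT, hT, mulVec_krylov]
  rw [← mul_nonsing_inv_cancel_right Γ (T * A) hΓ, heq, mul_nonsing_inv_cancel_right _ _ hΓ]

variable {T : Matrix m m ℝ} {γ : m → ℝ}

theorem apply_eq_zero_of_mul_diagonal_mul (hT : T * diagonal γ * T = diagonal γ)
    (hγ : ∀ i, 0 < γ i) {i j : m} (hne : γ i ≠ γ j) : T i j = 0 := by
  have hcomm : T * (diagonal γ * diagonal γ) = diagonal γ * diagonal γ * T := by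
    calc T * (diagonal γ * diagonal γ)
        = T * diagonal γ * (T * diagonal γ * T) := by rw [hT, Matrix.mul_assoc]
      _ = T * diagonal γ * T * diagonal γ * T := by simp only [Matrix.mul_assoc]
      _ = diagonal γ * diagonal γ * T := by rw [hT]
  have hentry := congrFun (congrFun hcomm i) j
  rw [diagonal_mul_diagonal, mul_diagonal, diagonal_mul] at hentry
  have hsq : γ j * γ j - γ i * γ i ≠ 0 := fun h => hne <| by nlinarith [hγ i, hγ j]
  exact (mul_eq_zero.1 (show T i j * (γ j * γ j - γ i * γ i) = 0 by linarith)).resolve_right hsq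

theorem sq_apply_self_eq_one_of_mul_diagonal_mul (hT : T * diagonal γ * T = diagonal γ) {j : m}
    (hγ : γ j ≠ 0) (hcol : ∀ i ≠ j, T i j = 0) : T j j ^ 2 = 1 := by
  have hentry := congrFun (congrFun hT j) j
  rw [mul_apply, Finset.sum_eq_single j (fun i _ hi => by rw [hcol i hi, mul_zero]) (by simp),
    mul_diagonal, diagonal_apply_eq] at hentry
  exact mul_right_cancel₀ hγ (by linarith)

end Intertwiner

section Truncation

variable {l m : Type*} [Fintype l] [Fintype m] {A S : Matrix m m ℝ} {b c x σ : m → ℝ}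
  {e : l → m} {y : l → ℝ} {t : ℝ}

theorem mulVec_of_stein (hS : Aᵀ * S * A - S + vecMulVec c c = 0) (x : m → ℝ) :
    Aᵀ *ᵥ S *ᵥ A *ᵥ x + (c ⬝ᵥ x) • c = S *ᵥ x := by
  have happly := congrArg (· *ᵥ x) hS
  simp only [add_mulVec, sub_mulVec, zero_mulVec, ← mulVec_mulVec, vecMulVec_mulVec,
    op_smul_eq_smul] at happly
  rw [← sub_eq_zero, ← happly]
  abel

theorem quadratic_of_stein (hS : Aᵀ * S * A - S + vecMulVec c c = 0) (x : m → ℝ) :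
    A *ᵥ x ⬝ᵥ S *ᵥ A *ᵥ x + (c ⬝ᵥ x) ^ 2 = x ⬝ᵥ S *ᵥ x := by
  rw [← mulVec_of_stein hS x, dotProduct_add, dotProduct_smul, dotProduct_mulVec x Aᵀ,
    vecMul_transpose, dotProduct_comm x c, smul_eq_mul, sq]

theorem dotProduct_diagonal_mulVec_self [DecidableEq m] (σ x : m → ℝ) :
    x ⬝ᵥ diagonal σ *ᵥ x = ∑ i, σ i * x i ^ 2 :=
  Finset.sum_congr rfl fun i _ => by rw [mulVec_diagonal]; ring

theorem dotProduct_extend_zero (he : Function.Injective e) (f : m → ℝ) (y : l → ℝ) :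
    f ⬝ᵥ Function.extend e y 0 = (f ∘ e) ⬝ᵥ y := by
  refine (Fintype.sum_of_injective e he _ _ (fun i hi => ?_) fun j => ?_).symm
  · rw [Function.extend_apply' _ _ _ hi, Pi.zero_apply, mul_zero]
  · rw [he.extend_apply, Function.comp_apply]

theorem mulVec_extend_zero_apply (he : Function.Injective e)
    (hy : A.submatrix e e *ᵥ y = t • y) (j : l) :
    (A *ᵥ Function.extend e y 0) (e j) = t * Function.extend e y 0 (e j) := by
  rw [he.extend_apply]
  exact (dotProduct_extend_zero he (A (e j)) y).trans (congrFun hy j)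

omit [Fintype l] [Fintype m] in
theorem extend_zero_ne_zero (he : Function.Injective e) (hy : y ≠ 0) :
    Function.extend e y 0 ≠ 0 := fun hx => hy <| funext fun j => by
  rw [← he.extend_apply y 0 j, hx, Pi.zero_apply, Pi.zero_apply]

variable [DecidableEq m]

/-- If `1 ≤ t ^ 2`, then the quadratic form of `diagonal σ` does not decrease along `A` at the
extension of `y` by zero, so this extension is an eigenvector of `A`. -/
theorem sq_lt_one_of_submatrix_mulVec_eq_smul
    (hA : Filter.Tendsto (fun N => A ^ N) Filter.atTop (nhds 0)) (hσ : ∀ i, 0 < σ i)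
    (hobsv : Aᵀ * diagonal σ * A - diagonal σ + vecMulVec c c = 0) (he : Function.Injective e)
    (hy0 : y ≠ 0) (hy : A.submatrix e e *ᵥ y = t • y) : t ^ 2 < 1 := by
  by_contra! ht
  set x := Function.extend e y 0 with hx
  have hAx : ∀ j, (A *ᵥ x) (e j) = t * x (e j) := mulVec_extend_zero_apply he hy
  have hx_tail {i : m} (hi : i ∉ Set.range e) : x i = 0 := Function.extend_apply' _ _ _ hi
  have hnonneg (i : m) : 0 ≤ σ i * (A *ᵥ x) i ^ 2 - σ i * x i ^ 2 := by
    rw [← mul_sub]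
    refine mul_nonneg (hσ i).le ?_
    by_cases hi : i ∈ Set.range e
    · obtain ⟨j, rfl⟩ := hi
      rw [hAx]
      nlinarith [sq_nonneg (x (e j))]
    · rw [hx_tail hi]
      nlinarith [sq_nonneg ((A *ᵥ x) i)]
  have hsum : ∑ i, (σ i * (A *ᵥ x) i ^ 2 - σ i * x i ^ 2) ≤ 0 := by
    have hquad := quadratic_of_stein hobsv x
    rw [dotProduct_diagonal_mulVec_self, dotProduct_diagonal_mulVec_self] at hquad
    rw [Finset.sum_sub_distrib]
    linarith [sq_nonneg (c ⬝ᵥ x)]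
  have hzero (i : m) : σ i * (A *ᵥ x) i ^ 2 - σ i * x i ^ 2 = 0 :=
    (Finset.sum_eq_zero_iff_of_nonneg fun i _ => hnonneg i).1
      (hsum.antisymm (Finset.sum_nonneg fun i _ => hnonneg i)) i (Finset.mem_univ i)
  refine ht.not_gt <| sq_lt_one_of_mulVec_eq_smul hA (extend_zero_ne_zero he hy0) <|
    funext fun i => ?_
  by_cases hi : i ∈ Set.range e
  · obtain ⟨j, rfl⟩ := hi
    exact hAx j
  · have hAx_tail : (A *ᵥ x) i = 0 := by
      simpa [hx_tail hi, (hσ i).ne'] using hzero i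
    rw [← hx, hAx_tail, Pi.smul_apply, hx_tail hi, smul_zero]

/-- The weights `σᵢ` and `σᵢ ^ 3` come from the two Stein equations, applied to `x` and to
`diagonal σ *ᵥ A *ᵥ x`. -/
theorem sum_mul_sq_sub_sq_nonpos_of_dotProduct_eq_zero
    (hctrb : A * diagonal σ * Aᵀ - diagonal σ + vecMulVec b b = 0)
    (hobsv : Aᵀ * diagonal σ * A - diagonal σ + vecMulVec c c = 0) (hcx : c ⬝ᵥ x = 0) (τ : ℝ) :
    ∑ i, σ i * ((σ i ^ 2 - τ ^ 2) * (x i ^ 2 - (A *ᵥ x) i ^ 2)) ≤ 0 := by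
  set u := A *ᵥ x with hu
  have hlinear : ∑ i, σ i * u i ^ 2 = ∑ i, σ i * x i ^ 2 := by
    have hquad := quadratic_of_stein hobsv x
    rwa [hcx, zero_pow two_ne_zero, add_zero, dotProduct_diagonal_mulVec_self,
      dotProduct_diagonal_mulVec_self] at hquad
  have hcubic : ∑ i, σ i * (σ i * x i) ^ 2 ≤ ∑ i, σ i * (σ i * u i) ^ 2 := by
    have hquad := quadratic_of_stein (A := Aᵀ) (c := b) hctrb (diagonal σ *ᵥ u)
    have hpull := mulVec_of_stein hobsv x
    rw [hcx, zero_smul, add_zero, ← hu] at hpull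
    simp only [hpull, dotProduct_diagonal_mulVec_self, mulVec_diagonal] at hquad
    linarith [sq_nonneg (b ⬝ᵥ diagonal σ *ᵥ u)]
  calc ∑ i, σ i * ((σ i ^ 2 - τ ^ 2) * (x i ^ 2 - u i ^ 2))
      = ∑ i, σ i * (σ i * x i) ^ 2 - ∑ i, σ i * (σ i * u i) ^ 2 -
          τ ^ 2 * (∑ i, σ i * x i ^ 2 - ∑ i, σ i * u i ^ 2) := by
        simp only [Finset.mul_sum, ← Finset.sum_sub_distrib]
        exact Finset.sum_congr rfl fun i _ => by ring
    _ ≤ 0 := by rw [hlinear, sub_self, mul_zero, sub_zero]; exact sub_nonpos.2 hcubic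

theorem comp_dotProduct_ne_zero_of_submatrix_mulVec_eq_smul
    (hA : Filter.Tendsto (fun N => A ^ N) Filter.atTop (nhds 0)) (hσ : ∀ i, 0 < σ i)
    (hctrb : A * diagonal σ * Aᵀ - diagonal σ + vecMulVec b b = 0)
    (hobsv : Aᵀ * diagonal σ * A - diagonal σ + vecMulVec c c = 0)
    (he : Function.Injective e) {τ : ℝ} (hτ0 : 0 ≤ τ) (hτ : ∀ j, τ < σ (e j))
    (hτ_tail : ∀ i ∉ Set.range e, σ i ≤ τ)
    (hy0 : y ≠ 0) (hy : A.submatrix e e *ᵥ y = t • y) : (c ∘ e) ⬝ᵥ y ≠ 0 := by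
  intro hcy
  set x := Function.extend e y 0
  have hAx : ∀ j, (A *ᵥ x) (e j) = t * x (e j) := mulVec_extend_zero_apply he hy
  have hsum := sum_mul_sq_sub_sq_nonpos_of_dotProduct_eq_zero (x := x) hctrb hobsv
    ((dotProduct_extend_zero he c y).trans hcy) τ
  have hhead (j : l) : 0 < (σ (e j) ^ 2 - τ ^ 2) * (1 - t ^ 2) :=
    mul_pos (sub_pos.2 (pow_lt_pow_left₀ (hτ j) hτ0 two_ne_zero))
      (sub_pos.2 (sq_lt_one_of_submatrix_mulVec_eq_smul hA hσ hobsv he hy0 hy))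
  have hnonneg (i : m) : 0 ≤ σ i * ((σ i ^ 2 - τ ^ 2) * (x i ^ 2 - (A *ᵥ x) i ^ 2)) := by
    refine mul_nonneg (hσ i).le ?_
    by_cases hi : i ∈ Set.range e
    · obtain ⟨j, rfl⟩ := hi
      rw [hAx]
      nlinarith [mul_nonneg (hhead j).le (sq_nonneg (x (e j)))]
    · rw [show x i = 0 from Function.extend_apply' _ _ _ hi]
      nlinarith [pow_le_pow_left₀ (hσ i).le (hτ_tail i hi) 2, sq_nonneg ((A *ᵥ x) i)]
  obtain ⟨j, hj⟩ := Function.ne_iff.1 hy0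
  have hxj : x (e j) ≠ 0 := (he.extend_apply y 0 j).trans_ne hj
  refine hsum.not_gt <| Finset.sum_pos' (fun i _ => hnonneg i)
    ⟨e j, Finset.mem_univ _, mul_pos (hσ _) ?_⟩
  rw [hAx]
  nlinarith [mul_pos (hhead j) (pow_two_pos_of_ne_zero hxj)]

theorem injective_eigenvalues_of_dotProduct_ne_zero [DecidableEq l] {M : Matrix l l ℝ}
    (hM : M.IsHermitian) (v : l → ℝ)
    (hv : ∀ (t : ℝ) (y : l → ℝ), y ≠ 0 → M *ᵥ y = t • y → v ⬝ᵥ y ≠ 0) :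
    Function.Injective hM.eigenvalues := by
  intro i j hij
  by_contra hne
  let V (i : l) : l → ℝ := hM.eigenvectorBasis i
  have hMV (i : l) : M *ᵥ V i = hM.eigenvalues i • V i := hM.mulVec_eigenvectorBasis i
  have hV0 (i : l) : V i ≠ 0 := fun h =>
    hM.eigenvectorBasis.orthonormal.ne_zero i (WithLp.ofLp_injective 2 h)
  have hpair := (LinearIndepOn.pair_iff hM.eigenvectorBasis hne).1
    (hM.eigenvectorBasis.orthonormal.linearIndependent.linearIndepOn {i, j})
  refine hv (hM.eigenvalues i) ((v ⬝ᵥ V j) • V i + -(v ⬝ᵥ V i) • V j) (fun h => ?_) ?_ ?_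
  · exact hv _ _ (hV0 j) (hMV j) (hpair _ _ (WithLp.ofLp_injective 2 h)).1
  · simp only [mulVec_add, mulVec_smul, hMV, hij, smul_add, smul_comm (hM.eigenvalues j)]
  · simp only [dotProduct_add, dotProduct_smul, smul_eq_mul]
    ring

end Truncation

section StrictlyKPositive

/-- A matrix is strictly `k`-positive if all its minors of order at most `k` are positive. -/
def StrictlyKPositive {α β : Type*} [LinearOrder α] [LinearOrder β] (k : ℕ) (M : Matrix α β ℝ) :
    Prop :=
  ∀ p ≤ k, ∀ (I : Fin p ↪o α) (J : Fin p ↪o β), 0 < compound p M I J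

theorem strictlyKPositive_krylov_mul_krylov {n k : ℕ} {A : Matrix (Fin n) (Fin n) ℝ}
    {b c : Fin n → ℝ} (hk : HankelStrictlyKPositive (fun t => c ⬝ᵥ A ^ t *ᵥ b) k) :
    StrictlyKPositive k (krylov Aᵀ c * (krylov A b)ᵀ) := by
  intro p hpk ρ κ
  rcases Nat.eq_zero_or_pos p with rfl | hp
  · simp [compound_apply]
  · refine (hk p hp hpk ρ κ ρ.strictMono κ.strictMono).trans_eq (congrArg det ?_)
    ext i j
    exact (krylov_transpose_dotProduct_krylov A b c (ρ i) (κ j)).symm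

theorem orderEmbedding_fin_le {n p : ℕ} (I : Fin p ↪o Fin n) (j : Fin p) : (j : ℕ) ≤ I j := by
  rw [← Fin.card_Iio j, ← Fin.card_Iio (I j)]
  exact Finset.card_le_card_of_injOn I (by simp [Set.MapsTo]) I.injective.injOn

theorem prod_comp_orderEmbedding_le {n p : ℕ} {σ : Fin n → ℝ} (hσ : ∀ i, 0 ≤ σ i)
    (hmono : Antitone σ) (hpn : p ≤ n) (I : Fin p ↪o Fin n) :
    ∏ j, σ (I j) ≤ ∏ j, σ (Fin.castLEOrderEmb hpn j) :=
  Finset.prod_le_prod (fun _ _ => hσ _) fun j _ => hmono (Fin.le_def.2 (orderEmbedding_fin_le I j))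

namespace StrictlyKPositive

variable {n k p : ℕ} {X O : Matrix ℕ (Fin n) ℝ}

theorem compound_dotProduct_compound_pos (hpos : StrictlyKPositive k (O * Xᵀ)) (hpk : p ≤ k)
    (ρ κ : Fin p ↪o ℕ) : 0 < compound p O κ ⬝ᵥ compound p X ρ := by
  have hminor := hpos p hpk κ ρ
  rwa [compound_mul, compound_transpose] at hminor

end StrictlyKPositive

/-- `IsBalancedFactorization k O X σ` says that the strictly `k`-positive matrix `O * Xᵀ` is
factored so that both factors have the diagonal Gramian `σ`, in decreasing order. The observability
and controllability matrices of a balanced realization factor the Hankel matrix in this way. -/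
structure IsBalancedFactorization {n : ℕ} (k : ℕ) (O X : Matrix ℕ (Fin n) ℝ) (σ : Fin n → ℝ) :
    Prop where
  pos : StrictlyKPositive k (O * Xᵀ)
  gramian_left : HasGramian O (diagonal σ)
  gramian_right : HasGramian X (diagonal σ)
  weight_pos : ∀ i, 0 < σ i
  antitone : Antitone σ

namespace IsBalancedFactorization

variable {n k p : ℕ} {X O : Matrix ℕ (Fin n) ℝ} {σ : Fin n → ℝ} {T : Matrix (Fin n) (Fin n) ℝ}

theorem compound_mul_compound_pos (h : IsBalancedFactorization k O X σ) (hpk : p ≤ k) (hpn : p ≤ n)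
    (ρ κ : Fin p ↪o ℕ) :
    0 < compound p O κ (Fin.castLEOrderEmb hpn) * compound p X ρ (Fin.castLEOrderEmb hpn) :=
  HasGramian.apply_mul_apply_pos_of_diagonal (compound_diagonal σ ▸ h.gramian_right.compound)
    (compound_diagonal σ ▸ h.gramian_left.compound) (h.pos.compound_dotProduct_compound_pos hpk)
    (Finset.prod_pos fun _ _ => h.weight_pos _)
    (prod_comp_orderEmbedding_le (fun i => (h.weight_pos i).le) h.antitone hpn) rfl ρ κ

theorem compound_mul_compound_self_pos (h : IsBalancedFactorization k O X σ) (hpk : p ≤ k)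
    (hpn : p ≤ n) (ρ κ : Fin p ↪o ℕ) :
    0 < compound p X κ (Fin.castLEOrderEmb hpn) * compound p X ρ (Fin.castLEOrderEmb hpn) := by
  have hκ := h.compound_mul_compound_pos hpk hpn κ κ
  have hρ := h.compound_mul_compound_pos hpk hpn ρ κ
  refine pos_of_mul_pos_right (a := compound p O κ (Fin.castLEOrderEmb hpn) ^ 2) ?_ (sq_nonneg _)
  linarith [mul_pos hκ hρ]

theorem prod_lt_of_ne (h : IsBalancedFactorization k O X σ) (hpk : p ≤ k) (hpn : p ≤ n)
    {I : Fin p ↪o Fin n} (hI : I ≠ Fin.castLEOrderEmb hpn) :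
    ∏ j, σ (I j) < ∏ j, σ (Fin.castLEOrderEmb hpn j) :=
  HasGramian.lt_of_ne_of_diagonal (compound_diagonal σ ▸ h.gramian_right.compound)
    (compound_diagonal σ ▸ h.gramian_left.compound) (h.pos.compound_dotProduct_compound_pos hpk)
    (Finset.prod_pos fun _ _ => h.weight_pos _)
    (prod_comp_orderEmbedding_le (fun i => (h.weight_pos i).le) h.antitone hpn)
    hI (Fin.valOrderEmb p) (Fin.valOrderEmb p)

theorem apply_lt_apply (h : IsBalancedFactorization k O X σ) {i l : Fin n} (hik : (i : ℕ) < k)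
    (hil : i < l) : σ l < σ i := by
  let I : Fin (i + 1) ↪o Fin n := OrderEmbedding.ofStrictMono
    (Fin.snoc (α := fun _ => Fin n) (Fin.castLE i.isLt.le) l) fun j j' hjj' => by
      induction j using Fin.lastCases with
      | last => exact absurd (Fin.le_last j') hjj'.not_ge
      | cast j =>
        rw [Fin.snoc_castSucc]
        induction j' using Fin.lastCases with
        | last =>
          rw [Fin.snoc_last]
          exact lt_trans (show Fin.castLE _ j < i from j.isLt) hil
        | cast j' =>
          rw [Fin.snoc_castSucc]
          exact hjj'
  have hI_last : I (Fin.last i) = l := Fin.snoc_last (α := fun _ => Fin n) _ _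
  have hI_cast (j : Fin i) : I j.castSucc = Fin.castLE i.isLt.le j :=
    Fin.snoc_castSucc (α := fun _ => Fin n) _ _ _
  have hlt := h.prod_lt_of_ne hik i.isLt (I := I) fun hI =>
    hil.ne' (hI_last.symm.trans (DFunLike.congr_fun hI (Fin.last i)))
  rw [Fin.prod_univ_castSucc, Fin.prod_univ_castSucc, hI_last] at hlt
  simp only [hI_cast] at hlt
  exact lt_of_mul_lt_mul_left hlt (Finset.prod_nonneg fun _ _ => (h.weight_pos _).le)

theorem intertwiner_apply_eq_zero (h : IsBalancedFactorization k O X σ)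
    (hT : T * diagonal σ * T = diagonal σ) {i j : Fin n} (hjk : (j : ℕ) < k)
    (hij : i ≠ j) : T i j = 0 := by
  refine apply_eq_zero_of_mul_diagonal_mul hT h.weight_pos ?_
  rcases lt_or_gt_of_ne hij with hlt | hgt
  · exact (h.apply_lt_apply ((Fin.lt_def.1 hlt).trans hjk) hlt).ne'
  · exact (h.apply_lt_apply hjk hgt).ne

theorem intertwiner_mulVec_apply_eq_mul (h : IsBalancedFactorization k O X σ)
    (hT : T * diagonal σ * T = diagonal σ) (hTsymm : T.IsSymm) (x : Fin n → ℝ) {j : Fin n}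
    (hjk : (j : ℕ) < k) : (T *ᵥ x) j = T j j * x j := by
  refine Finset.sum_eq_single j (fun i _ hij => ?_)
    fun hj => absurd (Finset.mem_univ j) hj
  change T j i * x i = 0
  rw [← hTsymm.apply, h.intertwiner_apply_eq_zero hT hjk hij, zero_mul]

theorem prod_intertwiner_pos (h : IsBalancedFactorization k O X σ)
    (hT : T * diagonal σ * T = diagonal σ) (hTsymm : T.IsSymm) (hTX : ∀ i, T *ᵥ X i = O i)
    (hpk : p ≤ k) (hpn : p ≤ n) :
    0 < ∏ j : Fin p, T (Fin.castLE hpn j) (Fin.castLE hpn j) := by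
  let ρ : Fin p ↪o ℕ := Fin.valOrderEmb p
  have hdet : compound p O ρ (Fin.castLEOrderEmb hpn) =
      (∏ j : Fin p, T (Fin.castLE hpn j) (Fin.castLE hpn j)) *
        compound p X ρ (Fin.castLEOrderEmb hpn) := by
    rw [compound_apply, compound_apply, ← det_mul_row]
    congr 1
    ext i j
    exact (congrFun (hTX (ρ i)) _).symm.trans
      (h.intertwiner_mulVec_apply_eq_mul hT hTsymm _ (j.isLt.trans_le hpk))
  have hsign := h.compound_mul_compound_pos hpk hpn ρ ρ
  rw [hdet, mul_assoc] at hsign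
  exact pos_of_mul_pos_left hsign (mul_self_nonneg _)

theorem intertwiner_apply_self (h : IsBalancedFactorization k O X σ)
    (hT : T * diagonal σ * T = diagonal σ) (hTsymm : T.IsSymm) (hTX : ∀ i, T *ᵥ X i = O i)
    {j : Fin n} (hjk : (j : ℕ) < k) : T j j = 1 := by
  have hsq : T j j ^ 2 = 1 :=
    sq_apply_self_eq_one_of_mul_diagonal_mul hT (h.weight_pos j).ne' fun i hij =>
      h.intertwiner_apply_eq_zero hT hjk hij
  have hprod := h.prod_intertwiner_pos hT hTsymm hTX hjk j.isLt
  rw [Fin.prod_univ_castSucc] at hprod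
  have hTjj : 0 < T j j :=
    pos_of_mul_pos_right hprod (h.prod_intertwiner_pos hT hTsymm hTX hjk.le j.isLt.le).le
  exact (pow_eq_one_iff_of_nonneg hTjj.le two_ne_zero).1 hsq

theorem intertwiner_mulVec_apply (h : IsBalancedFactorization k O X σ)
    (hT : T * diagonal σ * T = diagonal σ) (hTsymm : T.IsSymm) (hTX : ∀ i, T *ᵥ X i = O i)
    (x : Fin n → ℝ) {j : Fin n} (hjk : (j : ℕ) < k) : (T *ᵥ x) j = x j := by
  rw [h.intertwiner_mulVec_apply_eq_mul hT hTsymm x hjk,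
    h.intertwiner_apply_self hT hTsymm hTX hjk, one_mul]

theorem compound_shift_pos (h : IsBalancedFactorization k O X σ) {A : Matrix (Fin n) (Fin n) ℝ}
    (hAX : ∀ i, A *ᵥ X i = X (i + 1)) (hpk : p ≤ k) (hpn : p ≤ n) :
    0 < compound p A (Fin.castLEOrderEmb hpn) (Fin.castLEOrderEmb hpn) := by
  set lead : Fin p ↪o Fin n := Fin.castLEOrderEmb hpn
  let shift (ρ : Fin p ↪o ℕ) : Fin p ↪o ℕ :=
    .ofStrictMono (fun i => ρ i + 1) fun _ _ hij => Nat.succ_lt_succ (ρ.strictMono hij)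
  have hshift (ρ : Fin p ↪o ℕ) : compound p A *ᵥ compound p X ρ = compound p X (shift ρ) := by
    have hXA : X * Aᵀ = X.submatrix Nat.succ id := by
      ext i I
      exact (dotProduct_comm _ _).trans (congrFun (hAX i) I)
    have hrow := congrFun (compound_mul (p := p) X Aᵀ) ρ
    rw [hXA, compound_transpose, mul_apply_eq_vecMul, vecMul_transpose] at hrow
    exact hrow.symm
  have hsum : HasSum (fun ρ : Fin p ↪o ℕ => compound p X (shift ρ) lead * compound p X ρ lead)
      (compound p A lead lead * ∏ j, σ (lead j)) := by
    have hmatrix := HasSum.mul_left (compound p A) h.gramian_right.compound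
    simp only [mul_vecMulVec, hshift, compound_diagonal] at hmatrix
    simpa only [mul_diagonal, vecMulVec_apply] using Pi.hasSum.1 (Pi.hasSum.1 hmatrix lead) lead
  have hterm (ρ : Fin p ↪o ℕ) : 0 < compound p X (shift ρ) lead * compound p X ρ lead :=
    h.compound_mul_compound_self_pos hpk hpn ρ (shift ρ)
  refine pos_of_mul_pos_left ?_ (b := ∏ j, σ (lead j))
    (Finset.prod_nonneg fun _ _ => (h.weight_pos _).le)
  exact hasSum_lt (fun ρ => (hterm ρ).le) (hterm (Fin.valOrderEmb p)) hasSum_zero hsum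

end IsBalancedFactorization

end StrictlyKPositive

namespace IsBalancedRealization

variable {n k r : ℕ} {A : Matrix (Fin n) (Fin n) ℝ} {b c σ : Fin n → ℝ}

theorem tendsto_pow_s11 (hbal : IsBalancedRealization A b c σ) :
    Filter.Tendsto (fun N => A ^ N) Filter.atTop (nhds 0) :=
  let ⟨_, hctrb, _, _, hσ, hSteinC, _⟩ := hbal
  tendsto_pow_of_stein hctrb hSteinC (.diagonal fun i => (hσ i).le)

theorem hasGramian_krylov (hbal : IsBalancedRealization A b c σ) :
    HasGramian (krylov A b) (diagonal σ) :=
  let ⟨_, _, _, _, _, hSteinC, _⟩ := hbal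
  hasGramian_krylov_of_stein hbal.tendsto_pow_s11 hSteinC

theorem hasGramian_krylov_transpose (hbal : IsBalancedRealization A b c σ) :
    HasGramian (krylov Aᵀ c) (diagonal σ) := by
  obtain ⟨_, _, _, _, _, _, hSteinO⟩ := id hbal
  refine hasGramian_krylov_of_stein ?_ ((transpose_transpose A).symm ▸ hSteinO)
  simpa [Function.comp_def, transpose_pow] using
    ((Continuous.matrix_transpose continuous_id).tendsto 0).comp hbal.tendsto_pow_s11

theorem isBalancedFactorization (hbal : IsBalancedRealization A b c σ)
    (hk : HankelStrictlyKPositive (fun t => c ⬝ᵥ A ^ t *ᵥ b) k) :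
    IsBalancedFactorization k (krylov Aᵀ c) (krylov A b) σ where
  pos := strictlyKPositive_krylov_mul_krylov hk
  gramian_left := hbal.hasGramian_krylov_transpose
  gramian_right := hbal.hasGramian_krylov
  weight_pos := hbal.2.2.2.2.1
  antitone := hbal.2.2.2.1

theorem exists_intertwiner (hbal : IsBalancedRealization A b c σ)
    (hk : HankelStrictlyKPositive (fun t => c ⬝ᵥ A ^ t *ᵥ b) k) :
    ∃ T : Matrix (Fin n) (Fin n) ℝ, T *ᵥ b = c ∧ (T * A).IsSymm ∧
      ∀ (x : Fin n → ℝ) (j : Fin n), (j : ℕ) < k → (T *ᵥ x) j = x j := by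
  have hX := hbal.hasGramian_krylov
  have hfac := hbal.isBalancedFactorization hk
  have hσ_unit : IsUnit (diagonal σ).det := by
    rw [det_diagonal]
    exact (Finset.prod_pos fun i _ => hfac.weight_pos i).ne'.isUnit
  obtain ⟨T, hTsymm, hTX, hTσ⟩ :=
    hX.exists_symm_intertwiner hbal.hasGramian_krylov_transpose hσ_unit fun i j => by
      rw [krylov_transpose_dotProduct_krylov, krylov_transpose_dotProduct_krylov, add_comm]
  refine ⟨T, ?_, ?_, fun x _ hj => hfac.intertwiner_mulVec_apply hTσ hTsymm hTX x hj⟩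
  · simpa only [krylov_zero] using hTX 0
  · rw [IsSymm, transpose_mul, hTsymm.eq, intertwiner_mul_eq_transpose_mul hX hσ_unit hTX]

theorem comp_castLE_eq (hbal : IsBalancedRealization A b c σ)
    (hk : HankelStrictlyKPositive (fun t => c ⬝ᵥ A ^ t *ᵥ b) k) (hrk : r ≤ k) (hrn : r ≤ n) :
    b ∘ Fin.castLE hrn = c ∘ Fin.castLE hrn := by
  obtain ⟨T, hTb, -, hT⟩ := hbal.exists_intertwiner hk
  funext j
  exact (hT b _ (j.isLt.trans_le hrk)).symm.trans (congrFun hTb _)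

theorem isSymm_truncation (hbal : IsBalancedRealization A b c σ)
    (hk : HankelStrictlyKPositive (fun t => c ⬝ᵥ A ^ t *ᵥ b) k) (hrk : r ≤ k) (hrn : r ≤ n) :
    (A.submatrix (Fin.castLE hrn) (Fin.castLE hrn)).IsSymm := by
  obtain ⟨T, -, hTA, hT⟩ := hbal.exists_intertwiner hk
  have hTA_apply (i : Fin r) (j : Fin n) : (T * A) (Fin.castLE hrn i) j = A (Fin.castLE hrn i) j :=
    hT (A.col j) _ (i.isLt.trans_le hrk)
  refine IsSymm.ext fun i j => ?_
  rw [submatrix_apply, submatrix_apply, ← hTA_apply, ← hTA_apply, hTA.apply]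

theorem posDef_truncation (hbal : IsBalancedRealization A b c σ)
    (hk : HankelStrictlyKPositive (fun t => c ⬝ᵥ A ^ t *ᵥ b) k) (hrk : r ≤ k) (hrn : r ≤ n) :
    (A.submatrix (Fin.castLE hrn) (Fin.castLE hrn)).PosDef :=
  posDef_of_leadingMinors_pos (hbal.isSymm_truncation hk hrk hrn) fun _ hqr =>
    (hbal.isBalancedFactorization hk).compound_shift_pos (mulVec_krylov A b) (hqr.trans hrk)
      (hqr.trans hrn)

theorem sq_lt_one_of_truncation_mulVec_eq_smul (hbal : IsBalancedRealization A b c σ)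
    (hrn : r ≤ n) {y : Fin r → ℝ} (hy0 : y ≠ 0) {t : ℝ}
    (hy : A.submatrix (Fin.castLE hrn) (Fin.castLE hrn) *ᵥ y = t • y) : t ^ 2 < 1 :=
  let ⟨_, _, _, _, hσ, _, hSteinO⟩ := hbal
  sq_lt_one_of_submatrix_mulVec_eq_smul hbal.tendsto_pow_s11 hσ hSteinO (Fin.castLE_injective hrn)
    hy0 hy

theorem exists_singularValue_gap (hbal : IsBalancedRealization A b c σ)
    (hk : HankelStrictlyKPositive (fun t => c ⬝ᵥ A ^ t *ᵥ b) k) (hrk : r ≤ k) (hrn : r ≤ n) :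
    ∃ τ, 0 ≤ τ ∧ (∀ j, τ < σ (Fin.castLE hrn j)) ∧ ∀ i ∉ Set.range (Fin.castLE hrn), σ i ≤ τ := by
  have hfac := hbal.isBalancedFactorization hk
  have htail {i : Fin n} (hi : i ∉ Set.range (Fin.castLE hrn)) : r ≤ i := by
    by_contra! hir
    exact hi ⟨⟨i, hir⟩, rfl⟩
  rcases hrn.lt_or_eq with hlt | rfl
  · exact ⟨σ ⟨r, hlt⟩, (hfac.weight_pos _).le,
      fun j => hfac.apply_lt_apply (j.isLt.trans_le hrk) (Fin.lt_def.2 j.isLt),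
      fun _ hi => hfac.antitone (Fin.le_def.2 (htail hi))⟩
  · exact ⟨0, le_rfl, fun _ => hfac.weight_pos _,
      fun i hi => absurd (htail hi) i.isLt.not_ge⟩

theorem truncation_dotProduct_ne_zero (hbal : IsBalancedRealization A b c σ)
    (hk : HankelStrictlyKPositive (fun t => c ⬝ᵥ A ^ t *ᵥ b) k) (hrk : r ≤ k) (hrn : r ≤ n)
    {y : Fin r → ℝ} (hy0 : y ≠ 0) {t : ℝ}
    (hy : A.submatrix (Fin.castLE hrn) (Fin.castLE hrn) *ᵥ y = t • y) :
    (c ∘ Fin.castLE hrn) ⬝ᵥ y ≠ 0 :=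
  let ⟨_, _, _, _, hσ, hSteinC, hSteinO⟩ := hbal
  let ⟨_, hτ0, hτ, hτ_tail⟩ := hbal.exists_singularValue_gap hk hrk hrn
  comp_dotProduct_ne_zero_of_submatrix_mulVec_eq_smul hbal.tendsto_pow_s11 hσ hSteinC hSteinO
    (Fin.castLE_injective hrn) hτ0 hτ hτ_tail hy0 hy

end IsBalancedRealization

theorem balanced_truncation_symmetric_positive_spectrum_general
    {n : ℕ} (A : Matrix (Fin n) (Fin n) ℝ) (b c : Fin n → ℝ) (σ : Fin n → ℝ)
    (hbal : IsBalancedRealization A b c σ)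
    (k : ℕ) (hkpos : HankelStrictlyKPositive (fun t => c ⬝ᵥ (A ^ t).mulVec b) k)
    (r : ℕ) (hrk : r ≤ k) (hrn : r ≤ n) :
    (A.submatrix (Fin.castLE hrn) (Fin.castLE hrn)).IsSymm ∧
    b ∘ Fin.castLE hrn = c ∘ Fin.castLE hrn ∧
    ∃ μ : Fin r → ℝ, Function.Injective μ ∧ (∀ i, 0 < μ i ∧ μ i < 1) ∧
      (A.submatrix (Fin.castLE hrn) (Fin.castLE hrn)).charpoly =
        ∏ i, (X - C (μ i)) := by
  have hpos := hbal.posDef_truncation hkpos hrk hrn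
  have hlt_one (i : Fin r) : hpos.1.eigenvalues i < 1 := by
    have hsq := hbal.sq_lt_one_of_truncation_mulVec_eq_smul hrn
      (fun h => hpos.1.eigenvectorBasis.orthonormal.ne_zero i (WithLp.ofLp_injective 2 h))
      (hpos.1.mulVec_eigenvectorBasis i)
    exact (abs_lt.1 ((sq_lt_one_iff_abs_lt_one _).1 hsq)).2
  exact ⟨hbal.isSymm_truncation hkpos hrk hrn, hbal.comp_castLE_eq hkpos hrk hrn,
    hpos.1.eigenvalues,
    injective_eigenvalues_of_dotProduct_ne_zero hpos.1 _ fun _ _ hy0 hy =>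
      hbal.truncation_dotProduct_ne_zero hkpos hrk hrn hy0 hy,
    fun i => ⟨hpos.eigenvalues_pos i, hlt_one i⟩, hpos.1.charpoly_eq⟩

/-- If `(A,b,c)` is a balanced realization of `g(t) = cA^{t-1}b` whose Hankel
matrix is strictly `k`-positive with `2 ≤ k ≤ n`, then for every `1 ≤ r ≤ k-1`
the balanced truncation `(A₁₁, b₁, c₁)` of order `r` satisfies: `A₁₁` is
symmetric, `b₁ = c₁ᵀ`, and `A₁₁` has `r` distinct real eigenvalues, all in the
open interval `(0,1)`. -/
theorem balanced_truncation_symmetric_positive_spectrum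
    {n : ℕ} (A : Matrix (Fin n) (Fin n) ℝ) (b c : Fin n → ℝ) (σ : Fin n → ℝ)
    (hbal : IsBalancedRealization A b c σ)
    (k : ℕ) (hk2 : 2 ≤ k) (hkn : k ≤ n)
    (hkpos : HankelStrictlyKPositive (fun t => c ⬝ᵥ (A ^ t).mulVec b) k)
    (r : ℕ) (hr1 : 1 ≤ r) (hrk : r ≤ k - 1) (hrn : r ≤ n) :
    (A.submatrix (Fin.castLE hrn) (Fin.castLE hrn)).IsSymm ∧
    b ∘ Fin.castLE hrn = c ∘ Fin.castLE hrn ∧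
    ∃ μ : Fin r → ℝ, Function.Injective μ ∧ (∀ i, 0 < μ i ∧ μ i < 1) ∧
      (A.submatrix (Fin.castLE hrn) (Fin.castLE hrn)).charpoly =
        ∏ i, (X - C (μ i)) :=
  balanced_truncation_symmetric_positive_spectrum_general A b c σ hbal k hkpos r
    (hrk.trans (Nat.sub_le k 1)) hrn
end

section
/- Let (A,b,c) be a balanced realization of a SISO impulse response g(t) = cA^{t−1}b with pairwise distinct Hankel singular values σ₁ > … > σ_n > 0, and suppose the Hankel matrix H(g) is totally positive. Then for every 1 ≤ r ≤ n the balanced truncation of order r has a totally positive Hankel matrix H(g_r); that is, balanced truncation preserves total positivity of the Hankel matrix for every truncation order. -/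
open Matrix

/-!
Total positivity makes the Hankel matrices `O C` and `O A C` positive semidefinite, where `C` and
`O` are the controllability and observability matrices. Hence the symmetrizer `T = C⁻ᵀ O`, for which
`T b = c`, is positive semidefinite and so is `T A`. The matrices `T Σ T` and `Σ` solve the same
Stein equation, which has a unique solution because `A` is Schur stable, and `T Σ T = Σ` forces
`T = 1`. Thus `A` is positive semidefinite and `b = c`, and both properties pass to principal
subsystems. Diagonalizing such a subsystem, its impulse response is `∑ wₗ xₗ ^ t` with nonnegative
`wₗ` and `xₗ`, so by the Cauchy–Binet formula the minors of its Hankel matrix are nonnegative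
combinations of products of generalized Vandermonde determinants, whose signs come from Descartes'
rule of signs.
-/

section SignVariations

open Polynomial

theorem signVariations_lt_card_support {R : Type*} [Semiring R] [LinearOrder R] {P : R[X]}
    (hP : P ≠ 0) : P.signVariations < P.support.card := by
  induction h : P.support.card generalizing P with
  | zero => exact absurd (card_support_eq_zero.mp h) hP
  | succ m ih =>
    have hcard : P.eraseLead.support.card = m := P.card_support_eraseLead' h
    have hle : P.signVariations ≤ P.eraseLead.signVariations + 1 :=
      P.signVariations_le_eraseLead_succ
    by_cases hE : P.eraseLead = 0
    · have hmonomial := P.eraseLead_add_monomial_natDegree_leadingCoeff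
      rw [hE, zero_add] at hmonomial
      rw [← hmonomial, signVariations_monomial]
      exact m.succ_pos
    · exact hle.trans_lt (Nat.succ_lt_succ (ih hE hcard))

theorem card_lt_card_support_of_pos_roots {R : Type*} [CommRing R] [LinearOrder R]
    [IsStrictOrderedRing R] {P : R[X]} (hP : P ≠ 0) {s : Finset R} (hpos : ∀ x ∈ s, 0 < x)
    (hroot : ∀ x ∈ s, P.IsRoot x) : s.card < P.support.card := by
  have hsub : s.val ≤ P.roots.filter (0 < ·) := (Multiset.le_iff_subset s.nodup).mpr fun x hx =>
    Multiset.mem_filter.mpr ⟨(mem_roots hP).mpr (hroot x hx), hpos x hx⟩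
  calc s.card ≤ P.roots.countP (0 < ·) := by
        rw [Multiset.countP_eq_card_filter]
        exact Multiset.card_le_card hsub
    _ ≤ P.signVariations := P.roots_countP_pos_le_signVariations
    _ < P.support.card := signVariations_lt_card_support hP

end SignVariations

section GeneralizedVandermonde

/-- The generalized Vandermonde matrix `(x i ^ e j)` with nodes `x` and exponents `e`; `e j = j`
gives `Matrix.vandermonde`. -/
def generalizedVandermonde {R ι κ : Type*} [Monoid R] (x : ι → R) (e : κ → ℕ) : Matrix ι κ R :=
  of fun i j => x i ^ e j

theorem det_generalizedVandermonde_ne_zero {R ι : Type*} [CommRing R] [LinearOrder R]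
    [IsStrictOrderedRing R] [Fintype ι] [DecidableEq ι] {x : ι → R} {e : ι → ℕ}
    (hx : Function.Injective x) (hpos : ∀ i, 0 < x i) (he : Function.Injective e) :
    (generalizedVandermonde x e).det ≠ 0 := by
  intro hdet
  obtain ⟨v, hv, hker⟩ := exists_mulVec_eq_zero_iff.mpr hdet
  let P : Polynomial R := ∑ j, Polynomial.monomial (e j) (v j)
  have hcoeff : ∀ j, P.coeff (e j) = v j := fun j => by
    simp [P, Polynomial.finsetSum_coeff, Polynomial.coeff_monomial, he.eq_iff]
  have hP : P ≠ 0 := fun h0 => hv <| funext fun j => by simp [← hcoeff, h0]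
  have hroot : ∀ i, P.IsRoot (x i) := fun i => by
    simpa [P, Polynomial.IsRoot, Polynomial.eval_finsetSum, generalizedVandermonde, mulVec,
      dotProduct, mul_comm] using congrFun hker i
  have hsupport : P.support ⊆ Finset.univ.image e := by
    intro m hm
    rw [Polynomial.mem_support_iff, Polynomial.finsetSum_coeff] at hm
    obtain ⟨j, -, hj⟩ := Finset.exists_ne_zero_of_sum_ne_zero hm
    rw [Polynomial.coeff_monomial, ite_ne_right_iff] at hj
    exact Finset.mem_image.mpr ⟨j, Finset.mem_univ j, hj.1⟩
  have hlt : (Finset.univ.image x).card < P.support.card :=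
    card_lt_card_support_of_pos_roots hP (by simpa using hpos) (by simpa using hroot)
  rw [Finset.card_image_of_injective _ hx] at hlt
  exact (hlt.trans_le ((Finset.card_le_card hsupport).trans Finset.card_image_le)).false

theorem updateRow_generalizedVandermonde {R ι κ : Type*} [Monoid R] [DecidableEq ι]
    (x : ι → R) (e : κ → ℕ) (i : ι) (y : R) :
    (generalizedVandermonde x e).updateRow i (fun j => y ^ e j) =
      generalizedVandermonde (Function.update x i y) e := by
  ext k j
  obtain rfl | hk := eq_or_ne k i <;> simp [generalizedVandermonde, *]

theorem det_updateRow_pow_sub {K ι : Type*} [Field K] [Fintype ι] [DecidableEq ι] (x : ι → K)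
    {e : ι → ℕ} {m : ℕ} (he : ∀ j, e j ≤ m) (i : ι) {s : K} (hs : s ≠ 0) :
    ((generalizedVandermonde x e).updateRow i fun j => s ^ (m - e j)).det =
      s ^ m * (generalizedVandermonde (Function.update x i s⁻¹) e).det := by
  have hrow : (fun j => s ^ (m - e j)) = s ^ m • fun j => s⁻¹ ^ e j := by
    funext j
    rw [Pi.smul_apply, smul_eq_mul, inv_pow, pow_sub₀ s hs (he j)]
  rw [hrow, det_updateRow_smul, updateRow_generalizedVandermonde]

theorem det_updateRow_last_zero_pow_sub {R : Type*} [CommRing R] {k : ℕ} (x : Fin (k + 1) → R)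
    {e : Fin (k + 1) → ℕ} (he : StrictMono e) :
    ((generalizedVandermonde x e).updateRow (Fin.last k) fun j => 0 ^ (e (Fin.last k) - e j)).det =
      (generalizedVandermonde (x ∘ Fin.castSucc) (e ∘ Fin.castSucc)).det := by
  have hrow : (fun j => (0 : R) ^ (e (Fin.last k) - e j)) = Pi.single (Fin.last k) 1 := by
    funext j
    obtain rfl | hj := eq_or_ne j (Fin.last k)
    · simp
    · have hlt : e j < e (Fin.last k) := he (Fin.lt_last_iff_ne_last.mpr hj)
      rw [Pi.single_eq_of_ne hj, zero_pow (Nat.sub_ne_zero_of_lt hlt)]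
  rw [hrow, ← adjugate_apply, adjugate_fin_succ_eq_det_submatrix, Fin.succAbove_last,
    (Even.add_self _).neg_one_pow, one_mul]
  rfl

theorem strictMono_update_last {α : Type*} [Preorder α] {k : ℕ} {x : Fin (k + 1) → α}
    (hx : StrictMono x) {y : α} (hy : x (Fin.last k) ≤ y) :
    StrictMono (Function.update x (Fin.last k) y) := by
  intro i j hij
  rw [Function.update_of_ne (hij.trans_le j.le_last).ne]
  obtain rfl | hj := eq_or_ne j (Fin.last k)
  · simpa using (hx hij).trans_le hy
  · simpa [hj] using hx hij

/- Replace the last node by `s⁻¹` and divide the last row by `s⁻¹ ^ e (Fin.last k)`. The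
determinant is then a polynomial in `s` whose value at `s = 0` is the leading minor of order `k`,
and Descartes' rule of signs keeps it from vanishing for `0 < s ≤ (x (Fin.last k))⁻¹`. -/
theorem det_generalizedVandermonde_pos {k : ℕ} {x : Fin k → ℝ} {e : Fin k → ℕ}
    (hx : StrictMono x) (hpos : ∀ i, 0 < x i) (he : StrictMono e) :
    0 < (generalizedVandermonde x e).det := by
  induction k with
  | zero => simp
  | succ k ih =>
    let l := Fin.last k
    have hl : 0 < (x l)⁻¹ := inv_pos.mpr (hpos l)
    let D : ℝ → ℝ := fun s =>
      ((generalizedVandermonde x e).updateRow l fun j => s ^ (e l - e j)).det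
    have hcont : Continuous D := (continuous_const.matrix_updateRow l (by fun_prop)).matrix_det
    have hscale : ∀ s, 0 < s → D s =
        s ^ e l * (generalizedVandermonde (Function.update x l s⁻¹) e).det := fun s hs =>
      det_updateRow_pow_sub x (fun j => he.monotone j.le_last) l hs.ne'
    have hzero : 0 < D 0 := by
      simp only [D, l, det_updateRow_last_zero_pow_sub x he]
      exact ih (hx.comp Fin.strictMono_castSucc) (fun i => hpos _)
        (he.comp Fin.strictMono_castSucc)
    have hne : ∀ s, 0 < s → s ≤ (x l)⁻¹ → D s ≠ 0 := fun s hs hsl => by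
      have hmono := strictMono_update_last hx ((le_inv_comm₀ hs (hpos l)).mp hsl)
      have hpos' : ∀ i, 0 < Function.update x l s⁻¹ i :=
        (Function.forall_update_iff x (p := fun _ y => 0 < y)).mpr
          ⟨inv_pos.mpr hs, fun i _ => hpos i⟩
      rw [hscale s hs]
      exact mul_ne_zero (pow_pos hs _).ne'
        (det_generalizedVandermonde_ne_zero hmono.injective hpos' he.injective)
    have hD : 0 < D (x l)⁻¹ := by
      by_contra! hle
      obtain ⟨s, ⟨hs0, hsl⟩, hs⟩ :=
        intermediate_value_Icc' hl.le hcont.continuousOn ⟨hle, hzero.le⟩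
      obtain rfl | hs0 := hs0.eq_or_lt
      · exact hzero.ne' hs
      · exact hne s hs0 hsl hs
    rw [hscale _ hl, inv_inv, Function.update_eq_self] at hD
    exact pos_of_mul_pos_right hD (pow_pos hl _).le

theorem det_generalizedVandermonde_nonneg {k : ℕ} {x : Fin k → ℝ} {e : Fin k → ℕ}
    (hx : Monotone x) (hnonneg : ∀ i, 0 ≤ x i) (he : StrictMono e) :
    0 ≤ (generalizedVandermonde x e).det := by
  let D : ℝ → ℝ := fun ε => (generalizedVandermonde (fun i => x i + ε * (i + 1)) e).det
  have hcont : Continuous D :=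
    (continuous_matrix fun i j => by simp only [generalizedVandermonde, of_apply]; fun_prop)
      |>.matrix_det
  have hpos : ∀ ε > 0, 0 ≤ D ε := fun ε hε => by
    refine (det_generalizedVandermonde_pos (fun i j hij => ?_) (fun i => ?_) he).le
    · have hij' : (i : ℝ) < j := by exact_mod_cast hij
      exact add_lt_add_of_le_of_lt (hx hij.le) (by gcongr)
    · have := hnonneg i
      positivity
  have hlim : 0 ≤ D 0 := ge_of_tendsto (hcont.continuousWithinAt (s := Set.Ioi 0))
    (Filter.eventually_of_mem self_mem_nhdsWithin hpos)
  simpa [D] using hlim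

theorem det_generalizedVandermonde_mul_nonneg {k : ℕ} {x : Fin k → ℝ} {d e : Fin k → ℕ}
    (hnonneg : ∀ i, 0 ≤ x i) (hd : StrictMono d) (he : StrictMono e) :
    0 ≤ (generalizedVandermonde x d).det * (generalizedVandermonde x e).det := by
  let π := Tuple.sort x
  have hsort : ∀ e : Fin k → ℕ, (generalizedVandermonde (x ∘ π) e).det =
      Equiv.Perm.sign π * (generalizedVandermonde x e).det := fun e =>
    det_permute π (generalizedVandermonde x e)
  have hsq : (Equiv.Perm.sign π : ℝ) * Equiv.Perm.sign π = 1 := by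
    norm_cast
    simp
  calc 0 ≤ (generalizedVandermonde (x ∘ π) d).det * (generalizedVandermonde (x ∘ π) e).det :=
        mul_nonneg
          (det_generalizedVandermonde_nonneg (Tuple.monotone_sort x) (fun i => hnonneg _) hd)
          (det_generalizedVandermonde_nonneg (Tuple.monotone_sort x) (fun i => hnonneg _) he)
    _ = _ := by rw [hsort, hsort, mul_mul_mul_comm, hsq, one_mul]

end GeneralizedVandermonde

section CauchyBinet

variable {R m ι : Type*} [CommRing R] [Fintype m] [DecidableEq m] [Fintype ι]

theorem det_mul_eq_sum_det_submatrix_mul_prod (M : Matrix m ι R) (N : Matrix ι m R) :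
    (M * N).det = ∑ φ : m → ι, (M.submatrix id φ).det * ∏ i, N (φ i) i := by
  simp only [det_apply', mul_apply, Finset.prod_univ_sum, Finset.mul_sum, Finset.sum_mul,
    Fintype.piFinset_univ, Finset.prod_mul_distrib, submatrix_apply, id]
  rw [Finset.sum_comm]
  exact Finset.sum_congr rfl fun φ _ => Finset.sum_congr rfl fun π _ => (mul_assoc ..).symm

theorem factorial_card_mul_det_mul (M : Matrix m ι R) (N : Matrix ι m R) :
    ((Fintype.card m).factorial : R) * (M * N).det =
      ∑ φ : m → ι, (M.submatrix id φ).det * (N.submatrix φ id).det := by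
  have hperm : ∀ π : Equiv.Perm m, (M * N).det = ∑ φ : m → ι,
      (M.submatrix id φ).det * (Equiv.Perm.sign π * ∏ i, N (φ (π i)) i) := fun π => by
    have hcols : ∀ φ : m → ι, (M.submatrix id (φ ∘ π)).det =
        Equiv.Perm.sign π * (M.submatrix id φ).det := fun φ =>
      det_permute' π (M.submatrix id φ)
    rw [det_mul_eq_sum_det_submatrix_mul_prod, ← (π.arrowCongr (Equiv.refl ι)).symm.sum_comp]
    refine Finset.sum_congr rfl fun φ _ => ?_
    change (M.submatrix id (φ ∘ π)).det * ∏ i, N (φ (π i)) i = _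
    rw [hcols]
    ring
  calc _ = ∑ _π : Equiv.Perm m, (M * N).det := by simp [Fintype.card_perm]
    _ = _ := by
      rw [Finset.sum_congr rfl fun π _ => hperm π, Finset.sum_comm]
      simp only [← Finset.mul_sum, det_apply' (submatrix N _ _), submatrix_apply, id]

end CauchyBinet
section Hankel

theorem HankelTotallyPositive.of_sum_mul_pow {ι : Type*} [Fintype ι] {w x : ι → ℝ}
    (hw : ∀ l, 0 ≤ w l) (hx : ∀ l, 0 ≤ x l) :
    HankelTotallyPositive fun t => ∑ l, w l * x l ^ t := by
  classical
  intro p ρ κ hρ hκ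
  have hfactor : hankelSub (fun t => ∑ l, w l * x l ^ t) ρ κ =
      (generalizedVandermonde x ρ)ᵀ * of fun l j => w l * generalizedVandermonde x κ l j := by
    ext i j
    simp only [hankelSub, generalizedVandermonde, mul_apply, transpose_apply, of_apply, pow_add]
    exact Finset.sum_congr rfl fun l _ => mul_left_comm ..
  have hterm : ∀ φ : Fin p → ι, 0 ≤ ((generalizedVandermonde x ρ)ᵀ.submatrix id φ).det *
      ((of fun l j => w l * generalizedVandermonde x κ l j).submatrix φ id).det := fun φ => by
    have hleft : ((generalizedVandermonde x ρ)ᵀ.submatrix id φ).det =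
        (generalizedVandermonde (x ∘ φ) ρ).det := det_transpose _
    have hright : ((of fun l j => w l * generalizedVandermonde x κ l j).submatrix φ id).det =
        (∏ i, w (φ i)) * (generalizedVandermonde (x ∘ φ) κ).det := det_mul_column _ _
    rw [hleft, hright, mul_left_comm]
    exact mul_nonneg (Finset.prod_nonneg fun i _ => hw (φ i))
      (det_generalizedVandermonde_mul_nonneg (fun i => hx (φ i)) hρ hκ)
  rw [hfactor]
  refine nonneg_of_mul_nonneg_right ?_ (Nat.cast_pos.mpr (Fintype.card (Fin p)).factorial_pos)
  rw [factorial_card_mul_det_mul]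
  exact Finset.sum_nonneg fun φ _ => hterm φ

theorem dotProduct_pow_mulVec_eq_sum_s12 {ι : Type*} [Fintype ι] [DecidableEq ι] {A : Matrix ι ι ℝ}
    (hA : A.IsHermitian) (b : ι → ℝ) (t : ℕ) :
    b ⬝ᵥ (A ^ t *ᵥ b) =
      ∑ l, (star (hA.eigenvectorUnitary : Matrix ι ι ℝ) *ᵥ b) l ^ 2 * hA.eigenvalues l ^ t := by
  let U : Matrix ι ι ℝ := hA.eigenvectorUnitary
  have hpow : A ^ t = U * diagonal (hA.eigenvalues ^ t) * star U := by
    conv_lhs => rw [hA.spectral_theorem, ← map_pow, diagonal_pow]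
    rfl
  have hU : b ᵥ* U = star U *ᵥ b := (mulVec_transpose U b).symm
  rw [hpow, ← mulVec_mulVec, ← mulVec_mulVec, dotProduct_mulVec, hU]
  simp only [dotProduct, mulVec_diagonal, Pi.pow_apply]
  exact Finset.sum_congr rfl fun l _ => by ring

theorem HankelTotallyPositive.of_posSemidef {ι : Type*} [Fintype ι] [DecidableEq ι]
    {A : Matrix ι ι ℝ} (hA : A.PosSemidef) (b : ι → ℝ) :
    HankelTotallyPositive fun t => b ⬝ᵥ (A ^ t *ᵥ b) := by
  simp only [dotProduct_pow_mulVec_eq_sum_s12 hA.isHermitian]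
  exact .of_sum_mul_pow (fun l => sq_nonneg _) hA.eigenvalues_nonneg

theorem one_le_det_one_add_smul {R ι : Type*} [CommRing R] [PartialOrder R] [IsOrderedRing R]
    [Fintype ι] [DecidableEq ι] {M : Matrix ι ι R}
    (hM : ∀ s : Finset ι, 0 ≤ (M.submatrix ((↑) : s → ι) (↑)).det) {t : R} (ht : 0 ≤ t) :
    1 ≤ (1 + t • M).det := by
  let P : Polynomial R := (1 + (Polynomial.X : Polynomial R) • M.map Polynomial.C).det
  have hcoeff : ∀ k, 0 ≤ P.coeff k := fun k => by
    rw [coeff_det_one_add_X_smul_eq_sum_minors]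
    exact Finset.sum_nonneg fun s _ => hM s
  have hzero : P.coeff 0 = 1 := by
    simp [P, coeff_det_one_add_X_smul_eq_sum_minors]
  have heval : (1 + t • M).det = P.eval t := by
    rw [← Polynomial.coe_evalRingHom, RingHom.map_det]
    congr 1
    ext i j
    simpa [one_apply, apply_ite] using mul_comm t (M i j)
  rw [heval, Polynomial.eval_eq_sum_range, Finset.sum_range_succ', hzero, pow_zero, mul_one]
  exact le_add_of_nonneg_left
    (Finset.sum_nonneg fun k _ => mul_nonneg (hcoeff _) (pow_nonneg ht _))

open scoped ComplexOrder in
theorem posSemidef_of_principal_minors_nonneg {𝕜 ι : Type*} [RCLike 𝕜] [Finite ι] [DecidableEq ι]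
    {M : Matrix ι ι 𝕜} (hM : M.IsHermitian)
    (hminor : ∀ s : Finset ι, 0 ≤ (M.submatrix ((↑) : s → ι) (↑)).det) : M.PosSemidef := by
  have := Fintype.ofFinite ι
  rw [hM.posSemidef_iff_eigenvalues_nonneg]
  intro i
  by_contra! hneg
  let t : ℝ := (-hM.eigenvalues i)⁻¹
  let v : ι → 𝕜 := hM.eigenvectorBasis i
  have hv : v ≠ 0 := fun h0 =>
    hM.eigenvectorBasis.orthonormal.ne_zero i (WithLp.ofLp_injective 2 h0)
  have ht : (0 : 𝕜) ≤ t := RCLike.ofReal_nonneg.mpr (inv_pos.mpr (neg_pos.mpr hneg)).le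
  have hker : (1 + (t : 𝕜) • M) *ᵥ v = 0 := by
    have hteig : t * hM.eigenvalues i = -1 := by
      simp only [t, inv_neg, neg_mul, inv_mul_cancel₀ hneg.ne]
    rw [add_mulVec, one_mulVec, smul_mulVec, hM.mulVec_eigenvectorBasis,
      RCLike.real_smul_eq_coe_smul (K := 𝕜), smul_smul, ← RCLike.ofReal_mul, hteig]
    simp [v]
  have hdet := one_le_det_one_add_smul hminor ht
  rw [exists_mulVec_eq_zero_iff.mp ⟨v, hv, hker⟩] at hdet
  exact hdet.not_gt zero_lt_one

theorem HankelTotallyPositive.posSemidef_hankelSub {g : ℕ → ℝ} (hg : HankelTotallyPositive g)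
    (n k : ℕ) : (hankelSub g (fun i : Fin n => (i : ℕ) + k) fun j : Fin n => j).PosSemidef := by
  refine posSemidef_of_principal_minors_nonneg ?_ fun s => ?_
  · ext i j
    simp only [hankelSub, conjTranspose_apply, of_apply, star_trivial]
    congr 1
    omega
  · let f := s.orderIsoOfFin rfl
    have hf : StrictMono fun i => ((f i : Fin n) : ℕ) := f.strictMono
    rw [← det_submatrix_equiv_self f.toEquiv]
    exact hg _ _ _ (hf.add_const k) hf

end Hankel

section Stein

theorem isTopologicallyNilpotent_of_spectralRadius_lt_one {R : Type*} [NormedRing R]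
    [NormedAlgebra ℂ R] [CompleteSpace R] {a : R} (ha : spectralRadius ℂ a < 1) :
    IsTopologicallyNilpotent a := by
  obtain ⟨q, haq, hq⟩ := ENNReal.lt_iff_exists_nnreal_btwn.mp ha
  have hroot := spectrum.pow_nnnorm_pow_one_div_tendsto_nhds_spectralRadius a
  refine squeeze_zero_norm' ?_
    (tendsto_pow_atTop_nhds_zero_of_lt_one q.coe_nonneg (by exact_mod_cast hq))
  filter_upwards [hroot.eventually_lt_const haq, Filter.eventually_gt_atTop 0] with k hk hk0
  rw [one_div, ENNReal.rpow_inv_lt_iff (by exact_mod_cast hk0), ENNReal.rpow_natCast] at hk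
  have hle : ‖a ^ k‖₊ ≤ q ^ k := by exact_mod_cast hk.le
  exact_mod_cast hle

attribute [local instance] Matrix.linftyOpNormedRing Matrix.linftyOpNormedAlgebra in
theorem isTopologicallyNilpotent_of_spectrum_norm_lt_one {ι : Type*} [Fintype ι] [DecidableEq ι]
    {A : Matrix ι ι ℝ} (hA : ∀ μ ∈ spectrum ℂ (A.map (Complex.ofReal ·)), ‖μ‖ < 1) :
    IsTopologicallyNilpotent A := by
  cases isEmpty_or_nonempty ι
  · exact tendsto_const_nhds.congr fun k => Subsingleton.elim 0 _
  let A' := Complex.ofRealHom.mapMatrix A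
  have hA' : IsTopologicallyNilpotent A' := isTopologicallyNilpotent_of_spectralRadius_lt_one <| by
    exact_mod_cast spectrum.spectralRadius_lt_of_forall_lt (r := 1) A' fun μ hμ => hA μ hμ
  have hre : ∀ k, (A' ^ k).map Complex.re = A ^ k := fun k => by
    rw [← map_pow]
    ext
    simp
  have hcont : Continuous fun M : Matrix ι ι ℂ => M.map Complex.re :=
    continuous_id.matrix_map Complex.continuous_re
  simpa [IsTopologicallyNilpotent, Function.comp_def, hre] using (hcont.tendsto 0).comp hA'

theorem stein_solution_unique {R : Type*} [Ring R] [TopologicalSpace R] [ContinuousMul R]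
    [T2Space R] {a b q x y : R} (ha : IsTopologicallyNilpotent a) (hb : IsTopologicallyNilpotent b)
    (hx : b * x * a - x + q = 0) (hy : b * y * a - y + q = 0) : x = y := by
  have hfix : b * (x - y) * a = x - y := by
    rw [mul_sub, sub_mul, ← sub_eq_zero]
    calc _ = (b * x * a - x + q) - (b * y * a - y + q) := by abel
      _ = 0 := by rw [hx, hy, sub_zero]
  have hpow : ∀ k, b ^ k * (x - y) * a ^ k = x - y := fun k => by
    induction k with
    | zero => simp
    | succ k ih =>
      calc _ = b ^ k * (b * (x - y) * a) * a ^ k := by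
            rw [pow_succ, pow_succ']
            simp only [mul_assoc]
        _ = x - y := by rw [hfix, ih]
  have hlim := (hb.mul_const (x - y)).mul ha
  simp only [hpow, mul_zero] at hlim
  exact sub_eq_zero.mp (tendsto_nhds_unique tendsto_const_nhds hlim)

theorem stein_congr {R ι : Type*} [CommRing R] [Fintype ι] {A S T : Matrix ι ι R} {b c : ι → R}
    (hT : T.IsSymm) (hTA : (T * A).IsSymm) (hTb : T *ᵥ b = c)
    (hS : A * S * Aᵀ - S + vecMulVec b b = 0) :
    Aᵀ * (T * S * T) * A - T * S * T + vecMulVec c c = 0 := by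
  have hcomm : T * A = Aᵀ * T := by rw [← hTA.eq, transpose_mul, hT.eq]
  have hbT : b ᵥ* T = c := by rw [← mulVec_transpose, hT.eq, hTb]
  have hstate : Aᵀ * (T * S * T) * A = T * (A * S * Aᵀ) * T := by
    calc _ = (Aᵀ * T) * S * (T * A) := by simp only [Matrix.mul_assoc]
      _ = (T * A) * S * (Aᵀ * T) := by rw [hcomm]
      _ = _ := by simp only [Matrix.mul_assoc]
  have hinput : vecMulVec c c = T * vecMulVec b b * T := by
    rw [mul_vecMulVec, vecMulVec_mul, hTb, hbT]
  rw [hstate, hinput, ← Matrix.sub_mul, ← Matrix.mul_sub, ← Matrix.add_mul, ← Matrix.mul_add, hS,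
    Matrix.mul_zero, Matrix.zero_mul]

end Stein

section Balanced

open scoped ComplexOrder MatrixOrder in
theorem eq_one_of_mul_mul_eq_self {𝕜 ι : Type*} [RCLike 𝕜] [Fintype ι] [DecidableEq ι]
    {S T : Matrix ι ι 𝕜} (hT : T.PosSemidef) (hS : S.PosDef) (h : T * S * T = S) : T = 1 := by
  let B := CFC.sqrt S
  have hB : B * B = S := CFC.sqrt_mul_sqrt_self S hS.posSemidef.nonneg
  have hBunit : IsUnit B :=
    (CFC.isUnit_sqrt_iff S hS.posSemidef.nonneg).mpr hS.isUnit
  have hBpsd : B.PosSemidef := (CFC.sqrt_nonneg S).posSemidef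
  have hpsd : (B * T * B).PosSemidef := by
    simpa [hBpsd.isHermitian.eq] using hT.conjTranspose_mul_mul_same B
  have hsq : (B * T * B) ^ 2 = S ^ 2 := by
    calc (B * T * B) ^ 2 = B * (T * (B * B) * T) * B := by simp only [sq, Matrix.mul_assoc]
      _ = S ^ 2 := by rw [hB, h, ← hB]; simp only [sq, Matrix.mul_assoc]
  have hBTB : B * T * B = B * 1 * B := by
    rw [mul_one, hB]
    exact (CFC.sq_eq_sq_iff _ _ hpsd.nonneg hS.posSemidef.nonneg).mp hsq
  exact hBunit.mul_left_cancel (hBunit.mul_right_cancel hBTB)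

theorem obsvMatrix_mul_pow_mul_ctrbMatrix {n : ℕ} (A : Matrix (Fin n) (Fin n) ℝ)
    (b c : Fin n → ℝ) (k : ℕ) :
    obsvMatrix A c * A ^ k * ctrbMatrix A b =
      hankelSub (fun t => c ⬝ᵥ (A ^ t) *ᵥ b) (fun i : Fin n => (i : ℕ) + k) fun j : Fin n => j := by
  ext i j
  calc _ = ((c ᵥ* A ^ (i : ℕ)) ᵥ* A ^ k) ⬝ᵥ (A ^ (j : ℕ) *ᵥ b) := rfl
    _ = c ⬝ᵥ (A ^ (i + k + j : ℕ) *ᵥ b) := by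
      rw [vecMul_vecMul, ← dotProduct_mulVec, mulVec_mulVec, ← pow_add, ← pow_add]

/- `T = (Cᵀ)⁻¹ O`, with `C` and `O` the controllability and observability matrices: under the
congruence by `C`, the forms `T` and `T A` become the Hankel matrices `O C` and `O A C`. -/
theorem HankelTotallyPositive.exists_posSemidef_symmetrizer {n : ℕ}
    {A : Matrix (Fin n) (Fin n) ℝ} {b c : Fin n → ℝ} (hctrb : (ctrbMatrix A b).det ≠ 0)
    (htp : HankelTotallyPositive fun t => c ⬝ᵥ (A ^ t) *ᵥ b) :
    ∃ T : Matrix (Fin n) (Fin n) ℝ, T.PosSemidef ∧ (T * A).PosSemidef ∧ T *ᵥ b = c := by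
  let C := ctrbMatrix A b
  let T := (Cᵀ)⁻¹ * obsvMatrix A c
  have hC : IsUnit C.det := hctrb.isUnit
  have hCt : IsUnit Cᵀ.det := isUnit_det_transpose C hC
  have hpsd : ∀ k, (T * A ^ k).PosSemidef := fun k => by
    have hhankel := (htp.posSemidef_hankelSub n k).conjTranspose_mul_mul_same C⁻¹
    rwa [← obsvMatrix_mul_pow_mul_ctrbMatrix, conjTranspose_eq_transpose_of_trivial,
      transpose_nonsing_inv, ← Matrix.mul_assoc, mul_nonsing_inv_cancel_right _ _ hC,
      ← Matrix.mul_assoc] at hhankel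
  have hT : T.PosSemidef := by simpa using hpsd 0
  have hbT : b ᵥ* T = c := by
    funext j
    let i : Fin n := ⟨0, j.pos⟩
    calc (b ᵥ* T) j = (Cᵀ * T) i j := by
          simp [C, i, ctrbMatrix, mul_apply, vecMul, dotProduct]
      _ = obsvMatrix A c i j := by rw [mul_nonsing_inv_cancel_left _ _ hCt]
      _ = c j := by simp [i, obsvMatrix]
  refine ⟨T, hT, by simpa using hpsd 1, ?_⟩
  rw [← hbT, ← vecMul_transpose, ← conjTranspose_eq_transpose_of_trivial, hT.isHermitian.eq]

theorem IsBalancedRealization.posSemidef_and_input_eq_output {n : ℕ} {A : Matrix (Fin n) (Fin n) ℝ}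
    {b c σ : Fin n → ℝ} (hbal : IsBalancedRealization A b c σ)
    (htp : HankelTotallyPositive fun t => c ⬝ᵥ (A ^ t) *ᵥ b) : A.PosSemidef ∧ b = c := by
  obtain ⟨hstable, hctrb, -, -, hσ, hctrbGramian, hobsvGramian⟩ := hbal
  obtain ⟨T, hT, hTA, hTb⟩ := htp.exists_posSemidef_symmetrizer hctrb
  have hA : IsTopologicallyNilpotent A := isTopologicallyNilpotent_of_spectrum_norm_lt_one hstable
  have hAt : IsTopologicallyNilpotent Aᵀ := by
    simpa [IsTopologicallyNilpotent, Function.comp_def, transpose_pow] using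
      (continuous_id.matrix_transpose.tendsto 0).comp hA
  have hcongr : T * diagonal σ * T = diagonal σ := stein_solution_unique hA hAt
    (stein_congr (isHermitian_iff_isSymm.mp hT.isHermitian)
    (isHermitian_iff_isSymm.mp hTA.isHermitian) hTb hctrbGramian) hobsvGramian
  obtain rfl : T = 1 := eq_one_of_mul_mul_eq_self hT (.diagonal hσ) hcongr
  exact ⟨by simpa using hTA, by simpa using hTb⟩

end Balanced

theorem balanced_truncation_preserves_total_positivity_general
    {n : ℕ} {ι : Type*} [Fintype ι] [DecidableEq ι] {A : Matrix (Fin n) (Fin n) ℝ}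
    {b c σ : Fin n → ℝ} (hbal : IsBalancedRealization A b c σ)
    (htp : HankelTotallyPositive fun t => c ⬝ᵥ (A ^ t) *ᵥ b) (f : ι → Fin n) :
    HankelTotallyPositive fun t => (c ∘ f) ⬝ᵥ (A.submatrix f f ^ t) *ᵥ (b ∘ f) := by
  obtain ⟨hA, rfl⟩ := hbal.posSemidef_and_input_eq_output htp
  exact .of_posSemidef (hA.submatrix f) (b ∘ f)

/-- If `(A,b,c)` is a balanced realization of `g(t) = cA^{t-1}b` with pairwise
distinct Hankel singular values and `H(g)` is totally positive, then for every
truncation order `1 ≤ r ≤ n` the Hankel matrix of the balanced truncation of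
order `r` is totally positive: balanced truncation preserves total positivity
of the Hankel matrix. -/
theorem balanced_truncation_preserves_total_positivity
    {n : ℕ} (A : Matrix (Fin n) (Fin n) ℝ) (b c : Fin n → ℝ) (σ : Fin n → ℝ)
    (hbal : IsBalancedRealization A b c σ)
    (hdist : ∀ i j : Fin n, i < j → σ j < σ i)
    (htp : HankelTotallyPositive (fun t => c ⬝ᵥ (A ^ t).mulVec b))
    (r : ℕ) (hr1 : 1 ≤ r) (hrn : r ≤ n) :
    HankelTotallyPositive (truncResponse A b c r hrn) := by
  exact balanced_truncation_preserves_total_positivity_general hbal htp (Fin.castLE hrn)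
end
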